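/- Let (R, m) be an analytically unramified Noetherian local ring with conductor ideal 𝔠, and suppose R satisfies Serre's condition (S2), i.e. depth(R_p) ≥ min{2, height(p)} for every prime ideal p. If Ext^i_R(𝔠, 𝔠) = 0 for some i > 0, then 𝔠 is a free R-module and R is normal. -/

import Mathlib

open CategoryTheory IsLocalRing

set_option synthInstance.maxHeartbeats 1000000
set_option maxHeartbeats 1000000

noncomputable section

/-- The integral closure `R̄` of `R` in its total ring of fractions, viewed as a type
(with its canonical `R`-algebra and `R`-module structures). -/
abbrev IntClosure (R : Type) [CommRing R] : Type :=
  ↥(integralClosure R (FractionRing R))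

/-- The quotient `R`-module `R̄/R`. -/
abbrev IntClosureQuot (R : Type) [CommRing R] : Type :=
  IntClosure R ⧸ LinearMap.range (Algebra.linearMap R (IntClosure R))

/-- The conductor ideal `𝔠 = Ann_R(R̄/R) = {r : R | r • R̄ ⊆ R}`. -/
def conductorIdeal (R : Type) [CommRing R] : Ideal R :=
  Module.annihilator R (IntClosureQuot R)

/-- A local ring `R` is analytically unramified if its `m`-adic completion is reduced. -/
def AnalyticallyUnramified (R : Type) [CommRing R] [IsLocalRing R] : Prop :=
  IsReduced (AdicCompletion (maximalIdeal R) R)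

/-- `R` is normal: it is reduced and equal to its integral closure `R̄` in its total
ring of fractions. -/
def IsNormalRing (R : Type) [CommRing R] : Prop :=
  IsReduced R ∧ integralClosure R (FractionRing R) = ⊥

/-- `Ext^i_R(M, N)` as a type. -/
abbrev ExtMod (R : Type) [CommRing R] (M : Type) [AddCommGroup M] [Module R M]
    (N : Type) [AddCommGroup N] [Module R N] (i : ℕ) : Type :=
  ↥(((Ext R (ModuleCat.{0} R) i).obj (Opposite.op (ModuleCat.of R M))).obj (ModuleCat.of R N))

/-- `M` has finite projective dimension over `R`:
`Ext^i_R(M, -)` vanishes for all `i` bigger than some `n`. -/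
def HasFiniteProjDim (R : Type) [CommRing R] (M : Type) [AddCommGroup M] [Module R M] : Prop :=
  ∃ n : ℕ, ∀ (N : ModuleCat.{0} R) (i : ℕ), n < i →
    Subsingleton ↥(((Ext R (ModuleCat.{0} R) i).obj (Opposite.op (ModuleCat.of R M))).obj N)

/-- `M` has finite injective dimension over `R`:
`Ext^i_R(-, M)` vanishes for all `i` bigger than some `n`. -/
def HasFiniteInjDim (R : Type) [CommRing R] (M : Type) [AddCommGroup M] [Module R M] : Prop :=
  ∃ n : ℕ, ∀ (N : ModuleCat.{0} R) (i : ℕ), n < i →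
    Subsingleton ↥(((Ext R (ModuleCat.{0} R) i).obj (Opposite.op N)).obj (ModuleCat.of R M))

/-- The depth of an `R`-module `M` over a local ring `(R, m)`: the least `i` such that
`Ext^i_R(R/m, M) ≠ 0` (`⊤` if there is no such `i`), valued in `WithBot (WithTop ℕ)`
for easy comparison with `ringKrullDim`. -/
def moduleDepth (R : Type) [CommRing R] [IsLocalRing R]
    (M : Type) [AddCommGroup M] [Module R M] : WithBot (WithTop ℕ) :=
  sInf { n : WithBot (WithTop ℕ) |
    ∃ i : ℕ, n = (i : ℕ) ∧ Nontrivial (ExtMod R (ResidueField R) M i) }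

/-- A Noetherian local ring is Gorenstein if it has finite injective dimension
as a module over itself. -/
def IsGorensteinLocal (R : Type) [CommRing R] [IsLocalRing R] : Prop :=
  IsNoetherianRing R ∧ HasFiniteInjDim R R

/-- A Noetherian local ring is Cohen–Macaulay if its depth equals its Krull dimension. -/
def IsCohenMacaulayLocal (R : Type) [CommRing R] [IsLocalRing R] : Prop :=
  IsNoetherianRing R ∧ moduleDepth R R = ringKrullDim R

/-- A ring is Cohen–Macaulay if it is Noetherian and all its localizations at primes
are Cohen–Macaulay local rings. -/
def IsCohenMacaulayRing (A : Type) [CommRing A] : Prop :=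
  IsNoetherianRing A ∧ ∀ (p : Ideal A) [p.IsPrime],
    moduleDepth (Localization.AtPrime p) (Localization.AtPrime p) =
      ringKrullDim (Localization.AtPrime p)

/-- Serre's condition `(S2)`: `depth (R_p) ≥ min {2, height p}` for every prime `p`
(`height p` being the dimension of `R_p`). -/
def SerreS2 (R : Type) [CommRing R] : Prop :=
  ∀ (p : Ideal R) [p.IsPrime],
    min 2 (ringKrullDim (Localization.AtPrime p)) ≤
      moduleDepth (Localization.AtPrime p) (Localization.AtPrime p)

/-- A Noetherian local ring is regular if its maximal ideal can be generated by
`dim R` elements. -/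
def IsRegularLocal (A : Type) [CommRing A] [IsLocalRing A] : Prop :=
  IsNoetherianRing A ∧ ∃ s : Finset A, Ideal.span (s : Set A) = maximalIdeal A ∧
    (s.card : WithBot (WithTop ℕ)) = ringKrullDim A

/-- Serre's condition `(R1)`: `R_p` is regular for every prime `p` of height at most `1`. -/
def SerreR1 (R : Type) [CommRing R] : Prop :=
  ∀ (p : Ideal R) [p.IsPrime], ringKrullDim (Localization.AtPrime p) ≤ 1 →
    IsRegularLocal (Localization.AtPrime p)

/-- The `i`-th local cohomology `H^i_m(M)` of `M` with support in the maximal ideal,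
as a type. -/
abbrev localCohMod (R : Type) [CommRing R] [IsLocalRing R] (i : ℕ)
    (M : Type) [AddCommGroup M] [Module R M] : Type :=
  ↥((localCohomology (maximalIdeal R) i).obj (ModuleCat.of R M))

/-- `x : Fin d → R` is a system of parameters for the local ring `(R, m)`:
`d = dim R`, all `x i` lie in `m`, and the ideal they generate is `m`-primary
(its radical is `m`). -/
def IsSystemOfParameters (R : Type) [CommRing R] [IsLocalRing R] {d : ℕ}
    (x : Fin d → R) : Prop :=
  (d : WithBot (WithTop ℕ)) = ringKrullDim R ∧ (∀ i, x i ∈ maximalIdeal R) ∧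
    (Ideal.span (Set.range x)).radical = maximalIdeal R

/-- `E` is an injective hull of the residue field of the local ring `R`:
`E` is injective and contains a copy of `R/m` as an essential submodule. -/
def IsInjectiveHullOfResidueField (R : Type) [CommRing R] [IsLocalRing R]
    (E : Type) [AddCommGroup E] [Module R E] : Prop :=
  Module.Injective R E ∧ ∃ f : ResidueField R →ₗ[R] E, Function.Injective f ∧
    ∀ N : Submodule R E, N ≠ ⊥ → N ⊓ LinearMap.range f ≠ ⊥

lemma artin_of_pow {O : Type} [CommRing O] [IsLocalRing O] [IsNoetherianRing O]
    (T : Type) [AddCommGroup T] [Module O T] [Module.Finite O T] (k : ℕ)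
    (h : ∀ y ∈ maximalIdeal O ^ k, ∀ t : T, y • t = 0) : IsArtinian O T := by
  rcases Nat.eq_zero_or_pos k with rfl | hk
  · have : Subsingleton T := by
      refine ⟨fun a b => ?_⟩
      have h1 := h 1 (by simp) a
      have h2 := h 1 (by simp) b
      simp at h1 h2
      rw [h1, h2]
    infer_instance
  have ht : Module.IsTorsionBySet O T (maximalIdeal O ^ k : Ideal O) := by
    intro t y
    exact h y y.2 t
  let := ht.module
  have : IsArtinianRing (O ⧸ maximalIdeal O ^ k) := by
    apply IsLocalRing.quotient_artinian_of_mem_minimalPrimes_of_isLocalRing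
    refine ⟨⟨inferInstance, Ideal.pow_le_self hk.ne'⟩, ?_⟩
    rintro q ⟨hq, hle⟩ -
    exact (Ideal.IsPrime.pow_le_iff hk.ne').1 hle
  have : IsScalarTower O (O ⧸ maximalIdeal O ^ k) T := ht.isScalarTower
  have : Module.Finite (O ⧸ maximalIdeal O ^ k) T := Module.Finite.of_restrictScalars_finite O _ _
  have : IsArtinian (O ⧸ maximalIdeal O ^ k) T := isArtinian_of_fg_of_artinian'
  exact isArtinian_of_surjective_algebraMap (S := O) (R := O ⧸ maximalIdeal O ^ k) Ideal.Quotient.mk_surjective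

/-- a decreasing chain of ideals containing `I`, with `m`-power torsion modulo `I`, is stationary -/
lemma chain_stat {O : Type} [CommRing O] [IsLocalRing O] [IsNoetherianRing O]
    (I : Ideal O) (J : ℕ → Ideal O) (hJ : ∀ n, J (n + 1) ≤ J n) (hI : ∀ n, I ≤ J n)
    (ht : ∀ r ∈ J 0, ∃ k, ∀ y ∈ maximalIdeal O ^ k, y * r ∈ I) :
    ∃ n, ∀ m, n ≤ m → J m = J n := by
  let T : Submodule O (O ⧸ I) := Submodule.map I.mkQ (J 0)
  have hfg : T.FG := IsNoetherian.noetherian _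
  have : Module.Finite O T := Module.Finite.iff_fg.2 hfg
  obtain ⟨S, hS⟩ := (IsNoetherian.noetherian (J 0) : (J 0).FG)
  have hk : ∃ k, ∀ y ∈ maximalIdeal O ^ k, ∀ r ∈ J 0, y * r ∈ I := by
    have : ∀ r ∈ S, ∃ k, ∀ y ∈ maximalIdeal O ^ k, y * r ∈ I := fun r hr =>
      ht r (hS ▸ Submodule.subset_span hr)
    choose! f hf using this
    refine ⟨S.sup f, fun y hy r hr => ?_⟩
    rw [← hS] at hr
    induction hr using Submodule.span_induction with
    | mem r hr => exact hf r hr y (Ideal.pow_le_pow_right (Finset.le_sup hr) hy)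
    | zero => simp
    | add a b _ _ ha hb => rw [mul_add]; exact I.add_mem ha hb
    | smul c a _ ha => rw [smul_eq_mul, mul_left_comm]; exact I.mul_mem_left _ ha
  obtain ⟨k, hk⟩ := hk
  have : IsArtinian O T := by
    apply artin_of_pow T k
    rintro y hy ⟨_, r, hr, rfl⟩
    apply Subtype.ext
    change y • (I.mkQ r) = 0
    rw [← map_smul]
    exact (Submodule.Quotient.mk_eq_zero _).2 (hk y hy r hr)
  have anti : Antitone J := antitone_nat_of_succ_le hJ
  let f : ℕ →o (Submodule O T)ᵒᵈ := ⟨fun n => OrderDual.toDual (Submodule.comap T.subtype (Submodule.map I.mkQ (J n))),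
    fun a b hab => by
      change Submodule.comap T.subtype (Submodule.map I.mkQ (J b)) ≤ Submodule.comap T.subtype (Submodule.map I.mkQ (J a))
      exact Submodule.comap_mono (Submodule.map_mono (anti hab))⟩
  obtain ⟨n, hn⟩ := IsArtinian.monotone_stabilizes f
  refine ⟨n, fun m hm => le_antisymm (anti hm) fun r hr => ?_⟩
  have h1 : Submodule.comap T.subtype (Submodule.map I.mkQ (J n)) = Submodule.comap T.subtype (Submodule.map I.mkQ (J m)) := hn m hm
  have h2 : (⟨I.mkQ r, Submodule.mem_map_of_mem (anti (Nat.zero_le n) hr)⟩ : T) ∈ Submodule.comap T.subtype (Submodule.map I.mkQ (J n)) :=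
    Submodule.mem_map_of_mem hr
  rw [h1] at h2
  obtain ⟨r', hr', h3⟩ := h2
  have h4 : r' - r ∈ I := (Submodule.Quotient.eq _).1 h3
  have := (J m).sub_mem hr' (hI m h4)
  simpa using this

lemma f1a {O K : Type} [CommRing O] [IsDomain O] [IsLocalRing O] [IsNoetherianRing O]
    [Field K] [Algebra O K] [IsFractionRing O K] (D : Subalgebra O K)
    (hD : ∀ d ∈ D, ∃ n, ∀ y ∈ maximalIdeal O ^ n, ∃ o : O, algebraMap O K o = y • d)
    (x : O) (hx : x ∈ maximalIdeal O) (hx0 : x ≠ 0) :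
    Module.Finite O (D ⧸ Ideal.span {algebraMap O D x}) := by
  have inj : Function.Injective (algebraMap O K) := IsFractionRing.injective O K
  have hxK : algebraMap O K x ≠ 0 := by simpa using hx0
  let J : ℕ → Ideal O := fun n =>
    { carrier := {r | ∃ d ∈ D, ∃ o : O, algebraMap O K r = algebraMap O K x ^ (n+1) * d + algebraMap O K (x * o)}
      zero_mem' := ⟨0, D.zero_mem, 0, by simp⟩
      add_mem' := by
        rintro a b ⟨d, hd, o, h⟩ ⟨d', hd', o', h'⟩
        refine ⟨d + d', D.add_mem hd hd', o + o', ?_⟩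
        rw [map_add, h, h']; simp only [map_mul, map_add]; ring
      smul_mem' := by
        rintro c a ⟨d, hd, o, h⟩
        refine ⟨algebraMap O K c * d, D.mul_mem (D.algebraMap_mem c) hd, c * o, ?_⟩
        rw [smul_eq_mul, map_mul, h]; simp only [map_mul]; ring }
  have hst : ∃ n, ∀ m, n ≤ m → J m = J n := by
    apply chain_stat (Ideal.span {x}) J
    · rintro n r ⟨d, hd, o, h⟩
      exact ⟨algebraMap O K x * d, D.mul_mem (D.algebraMap_mem x) hd, o, by rw [h]; ring⟩
    · intro n r hr
      obtain ⟨o, rfl⟩ := Ideal.mem_span_singleton'.1 hr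
      exact ⟨0, D.zero_mem, o, by rw [mul_comm]; simp⟩
    · rintro r ⟨d, hd, o, h⟩
      obtain ⟨n, hn⟩ := hD d hd
      refine ⟨n, fun y hy => ?_⟩
      obtain ⟨o', ho'⟩ := hn y hy
      refine Ideal.mem_span_singleton'.2 ⟨o' + y * o, inj ?_⟩
      simp only [map_mul, map_add, h, ho', Algebra.smul_def]; ring
  obtain ⟨n, hn⟩ := hst
  -- the finite part
  let N : Submodule O K := Subalgebra.toSubmodule D ⊓ Submodule.span O {(algebraMap O K x ^ (n+1))⁻¹}
  have hN : N.FG := by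
    have : IsNoetherian O (Submodule.span O {(algebraMap O K x ^ (n+1))⁻¹}) :=
      isNoetherian_of_fg_of_noetherian _ (Submodule.fg_span_singleton _)
    exact Submodule.FG.of_le  (Submodule.fg_span_singleton _) inf_le_right
  have key : ∀ j, ∀ d ∈ D, (∃ o, algebraMap O K o = algebraMap O K x ^ (n + 1 + j) * d) →
      ∃ d' ∈ D, ∃ e ∈ N, d = algebraMap O K x * d' + e := by
    intro j
    induction j with
    | zero =>
      rintro d hd ⟨o, ho⟩
      refine ⟨0, D.zero_mem, d, ⟨hd, ?_⟩, by simp⟩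
      refine Submodule.mem_span_singleton.2 ⟨o, ?_⟩
      rw [Algebra.smul_def, ho, add_zero]; field_simp
    | succ j ih =>
      rintro d hd ⟨o, ho⟩
      have h1 : o ∈ J (n + j + 1) := ⟨d, hd, 0, by rw [ho]; simp; left; ring⟩
      rw [hn (n + j + 1) (by omega), ← hn (n + j + 2) (by omega)] at h1
      obtain ⟨d', hd', o', h'⟩ := h1
      obtain ⟨d'', hd'', e, he, h2⟩ := ih (d - algebraMap O K x * d')
        (D.sub_mem hd (D.mul_mem (D.algebraMap_mem x) hd')) ⟨o', by
          rw [ho] at h'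
          apply mul_left_cancel₀ hxK
          rw [← map_mul, ← sub_eq_iff_eq_add'.2 h']; ring⟩
      exact ⟨d' + d'', D.add_mem hd' hd'', e, he, by rw [sub_eq_iff_eq_add] at h2; rw [h2]; ring⟩
  have key2 : ∀ d ∈ D, ∃ d' ∈ D, ∃ e ∈ N, d = algebraMap O K x * d' + e := by
    intro d hd
    obtain ⟨k, hk⟩ := hD d hd
    obtain ⟨o, ho⟩ := hk _ (Ideal.pow_mem_pow hx k)
    refine key k d hd ⟨x^(n+1) * o, ?_⟩
    rw [map_mul, ho, Algebra.smul_def]; simp only [map_pow]; ring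
  have hNf : Module.Finite O N := Module.Finite.iff_fg.2 hN
  let q : N →ₗ[O] (D ⧸ Ideal.span {algebraMap O D x}) :=
    (Ideal.Quotient.mkₐ O (Ideal.span {algebraMap O D x})).toLinearMap ∘ₗ
      (Submodule.inclusion (inf_le_left : N ≤ Subalgebra.toSubmodule D))
  refine Module.Finite.of_surjective q ?_
  intro z
  obtain ⟨⟨d, hd⟩, rfl⟩ := Ideal.Quotient.mk_surjective z
  obtain ⟨d', hd', e, he, h⟩ := key2 d hd
  refine ⟨⟨e, he⟩, ?_⟩
  refine (Ideal.Quotient.eq).2 (Ideal.mem_span_singleton'.2 ⟨-⟨d', hd'⟩, ?_⟩)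
  apply Subtype.ext
  change -d' * algebraMap O K x = e - d
  rw [h]; ring

lemma f1b {O K : Type} [CommRing O] [IsDomain O] [IsLocalRing O] [IsNoetherianRing O]
    [Field K] [Algebra O K] [IsFractionRing O K] (D : Subalgebra O K)
    (hD : ∀ d ∈ D, ∃ n, ∀ y ∈ maximalIdeal O ^ n, ∃ o : O, algebraMap O K o = y • d) :
    IsNoetherianRing D := by
  refine ⟨fun I => ?_⟩
  by_cases hI : I = ⊥
  · rw [hI]; exact Submodule.fg_bot
  obtain ⟨⟨y, hyD⟩, hy, hy0⟩ := Submodule.exists_mem_ne_zero_of_ne_bot hI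
  obtain ⟨a, b, hb, hab⟩ := IsFractionRing.div_surjective O y
  have hb0 : algebraMap O K b ≠ 0 := by simpa using nonZeroDivisors.ne_zero hb
  have haI : algebraMap O D a ∈ I := by
    have : algebraMap O D a = algebraMap O D b * ⟨y, hyD⟩ := by
      apply Subtype.ext
      change algebraMap O K a = algebraMap O K b * y
      rw [← hab]; field_simp
    rw [this]; exact Submodule.smul_mem I _ hy
  have ha0 : a ≠ 0 := by
    rintro rfl
    apply hy0; apply Subtype.ext; change y = 0; rw [← hab]; simp
  by_cases ha : a ∈ maximalIdeal O
  · have := f1a D hD a ha ha0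
    have : IsNoetherian O (D ⧸ Ideal.span {algebraMap O D a}) := isNoetherian_of_isNoetherianRing_of_finite _ _
    have : IsNoetherianRing (D ⧸ Ideal.span {algebraMap O D a}) := isNoetherian_of_tower O inferInstance
    refine Ideal.fg_of_fg_map_of_fg_inf_ker_of_surjective (f := Ideal.Quotient.mk (Ideal.span {algebraMap O D a}))
       (IsNoetherian.noetherian _) ?_ Ideal.Quotient.mk_surjective
    rw [Ideal.mk_ker, inf_eq_right.2 ((Ideal.span_singleton_le_iff_mem _).2 haI)]
    exact Submodule.fg_span_singleton _
  · have : IsUnit a := by simpa using ha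
    rw [Ideal.eq_top_of_isUnit_mem I haI (this.map _)]
    exact ⟨{1}, by simp⟩

lemma prime_colon {A M : Type} [CommRing A] [IsNoetherianRing A] [AddCommGroup M] [Module A M]
    (N : Submodule A M) (s : M) (hs : s ∉ N) :
    ∃ (a : A) (p : Ideal A), p.IsPrime ∧ ∀ r, r ∈ p ↔ r • (a • s) ∈ N := by
  let M' : Submodule A (M ⧸ N) := Submodule.span A {N.mkQ s}
  let s' : M' := ⟨N.mkQ s, Submodule.mem_span_singleton_self _⟩
  have hs' : s' ≠ 0 := by
    intro h
    have : N.mkQ s = 0 := congrArg Subtype.val h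
    exact hs ((Submodule.Quotient.mk_eq_zero _).1 this)
  obtain ⟨p, hp, -⟩ := exists_le_isAssociatedPrime_of_isNoetherianRing A s' hs'
  obtain ⟨hpp, ⟨y, hy⟩, h⟩ := isAssociatedPrime_iff.1 hp
  obtain ⟨a, rfl⟩ := Submodule.mem_span_singleton.1 hy
  refine ⟨a, p, hpp, fun r => ?_⟩
  rw [h, Submodule.mem_colon_singleton, Submodule.mem_bot, ← Submodule.Quotient.mk_eq_zero]
  rw [Subtype.ext_iff]
  rfl

def Gs (O K : Type) [CommRing O] [IsLocalRing O] [Field K] [Algebra O K] : Subalgebra O K where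
  carrier := {s | ∃ n, ∀ y ∈ maximalIdeal O ^ n, ∃ o : O, algebraMap O K o = y • s}
  mul_mem' := by
    rintro a b ⟨n, hn⟩ ⟨k, hk⟩
    refine ⟨n + k, fun y hy => ?_⟩
    rw [pow_add] at hy
    induction hy using Submodule.mul_induction_on' with
    | mem_mul_mem u hu v hv =>
      obtain ⟨o, ho⟩ := hn u hu
      obtain ⟨o', ho'⟩ := hk v hv
      exact ⟨o * o', by rw [map_mul, ho, ho']; simp only [Algebra.smul_def, map_mul]; ring⟩
    | add u _ v _ hu hv =>
      obtain ⟨o, ho⟩ := hu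
      obtain ⟨o', ho'⟩ := hv
      exact ⟨o + o', by rw [map_add, ho, ho', add_smul]⟩
  add_mem' := by
    rintro a b ⟨n, hn⟩ ⟨k, hk⟩
    refine ⟨n + k, fun y hy => ?_⟩
    obtain ⟨o, ho⟩ := hn y (Ideal.pow_le_pow_right (by omega) hy)
    obtain ⟨o', ho'⟩ := hk y (Ideal.pow_le_pow_right (by omega) hy)
    exact ⟨o + o', by rw [map_add, ho, ho', smul_add]⟩
  algebraMap_mem' := fun r => ⟨0, fun y _ => ⟨y * r, by simp [Algebra.smul_def]⟩⟩

/-- `V` is a discrete valuation ring of `K` with uniformizer `π`. -/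
def IsDV {K : Type} [Field K] (V : Subring K) (π : K) : Prop :=
  π ∈ V ∧ π⁻¹ ∉ V ∧ ∀ s : K, s ≠ 0 → ∃ k : ℤ, s * π ^ k ∈ V ∧ (s * π ^ k)⁻¹ ∈ V

/-- localization of a subalgebra at a prime -/
def Lc {O K : Type} [CommRing O] [Field K] [Algebra O K] (D : Subalgebra O K) (n : Ideal D)
    [n.IsPrime] : Subring K where
  carrier := {s | ∃ t : D, t ∉ n ∧ (t : K) * s ∈ D}
  mul_mem' := by
    rintro a b ⟨t, ht, h⟩ ⟨t', ht', h'⟩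
    refine ⟨t * t', fun h => (Ideal.IsPrime.mem_or_mem ‹_› h).elim ht ht', ?_⟩
    have := D.mul_mem h h'
    convert this using 1
    simp; ring
  one_mem' := ⟨1, fun h => Ideal.IsPrime.ne_top ‹_› ((Ideal.eq_top_iff_one _).2 h), by simp⟩
  add_mem' := by
    rintro a b ⟨t, ht, h⟩ ⟨t', ht', h'⟩
    refine ⟨t * t', fun h => (Ideal.IsPrime.mem_or_mem ‹_› h).elim ht ht', ?_⟩
    have := D.add_mem (D.mul_mem t'.2 h) (D.mul_mem t.2 h')
    convert this using 1
    simp; ring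
  zero_mem' := ⟨1, fun h => Ideal.IsPrime.ne_top ‹_› ((Ideal.eq_top_iff_one _).2 h), by simp⟩
  neg_mem' := by
    rintro a ⟨t, ht, h⟩
    exact ⟨t, ht, by simpa using D.neg_mem h⟩

def Ds (O K : Type) [CommRing O] [IsLocalRing O] [Field K] [Algebra O K] : Subalgebra O K :=
  integralClosure O K ⊓ Gs O K

section
variable {O K : Type} [CommRing O] [IsDomain O] [IsLocalRing O] [IsNoetherianRing O]
    [Field K] [Algebra O K] [IsFractionRing O K]

instance : IsNoetherianRing (Ds O K) := f1b _ fun _ hd => hd.2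

instance : IsNoetherianRing (Gs O K) := f1b _ fun _ hd => hd

instance : Algebra.IsIntegral O (Ds O K) := ⟨fun d => by
  have : IsIntegral O (d : K) := d.2.1
  exact (isIntegral_algHom_iff (Ds O K).val Subtype.val_injective).1 this⟩

lemma ds_comap (n : Ideal (Ds O K)) [n.IsMaximal] : n.comap (algebraMap O (Ds O K)) = maximalIdeal O :=
  IsLocalRing.eq_maximalIdeal (Ideal.isMaximal_comap_of_isIntegral_of_isMaximal n)

lemma ds_max (n : Ideal (Ds O K)) [n.IsPrime] (h : maximalIdeal O ≤ n.comap (algebraMap O (Ds O K))) :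
    n.IsMaximal := by
  have : n.comap (algebraMap O (Ds O K)) = maximalIdeal O :=
    ((maximalIdeal.isMaximal O).eq_of_le (Ideal.IsPrime.comap _).ne_top h).symm
  exact Ideal.isMaximal_of_isIntegral_of_isMaximal_comap n (this ▸ maximalIdeal.isMaximal O)

lemma ds_quot_finite (x : O) (hx : x ∈ maximalIdeal O) (hx0 : x ≠ 0) (n : Ideal (Ds O K)) [n.IsMaximal] :
    Module.Finite O (Ds O K ⧸ n) := by
  have := f1a (Ds O K) (fun _ hd => hd.2) x hx hx0
  have hle : Ideal.span {algebraMap O (Ds O K) x} ≤ n := by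
    rw [Ideal.span_singleton_le_iff_mem]
    have := ds_comap n
    rw [← this] at hx
    exact hx
  refine Module.Finite.of_surjective (Ideal.Quotient.factorₐ O hle).toLinearMap ?_
  exact Ideal.Quotient.factor_surjective hle

lemma ds_fin (x : O) (hx : x ∈ maximalIdeal O) (hx0 : x ≠ 0) :
    {n : Ideal (Ds O K) | n.IsMaximal}.Finite := by
  have hf := f1a (Ds O K) (fun _ hd => hd.2) x hx hx0
  have h := Algebra.QuasiFinite.finite_primesOver (S := Ds O K ⧸ Ideal.span {algebraMap O (Ds O K) x}) (maximalIdeal O)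
  refine (h.image (Ideal.comap (Ideal.Quotient.mk _))).subset ?_
  intro n hn
  have : n.IsMaximal := hn
  have hle : Ideal.span {algebraMap O (Ds O K) x} ≤ n := by
    rw [Ideal.span_singleton_le_iff_mem]
    have := ds_comap n
    rw [← this] at hx
    exact hx
  have hc : (n.map (Ideal.Quotient.mk (Ideal.span {algebraMap O (Ds O K) x}))).comap (Ideal.Quotient.mk _) = n := by
    rw [Ideal.comap_map_of_surjective _ Ideal.Quotient.mk_surjective, ← RingHom.ker_eq_comap_bot, Ideal.mk_ker, sup_eq_left.2 hle]
  refine ⟨n.map (Ideal.Quotient.mk _), ⟨?_, ⟨?_⟩⟩, hc⟩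
  · exact Ideal.map_isPrime_of_surjective Ideal.Quotient.mk_surjective (by rwa [Ideal.mk_ker])
  · have e : algebraMap O (Ds O K ⧸ Ideal.span {algebraMap O (Ds O K) x}) =
      (Ideal.Quotient.mk _).comp (algebraMap O (Ds O K)) := rfl
    rw [Ideal.under, e, ← Ideal.comap_comap, hc, ds_comap]

end

section
variable {O K : Type} [CommRing O] [IsDomain O] [IsLocalRing O] [IsNoetherianRing O]
    [Field K] [Algebra O K] [IsFractionRing O K]

lemma ds_int_mem (s : K) (h : IsIntegral (Ds O K) s) : s ∈ integralClosure O K :=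
  isIntegral_trans (R := O) (A := Ds O K) s h

lemma lc_int (n : Ideal (Ds O K)) [n.IsPrime] (R' : Subring K) (hR : R' ≤ Lc (Ds O K) n)
    (s : K) (h : IsIntegral R' s) :
    ∃ t : Ds O K, t ∉ n ∧ (t : K) * s ∈ integralClosure O K := by
  have hS : n.primeCompl ≤ nonZeroDivisors (Ds O K) := n.primeCompl_le_nonZeroDivisors
  let L : Subalgebra (Ds O K) K := Localization.subalgebra.ofField K n.primeCompl hS
  have hL : ∀ v ∈ Lc (Ds O K) n, v ∈ L := by
    rintro v ⟨t, ht, h⟩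
    have ht0 : (t : K) ≠ 0 := by
      intro h0
      apply ht
      have : t = 0 := Subtype.ext h0
      rw [this]; exact n.zero_mem
    refine ⟨⟨_, h⟩, t, ht, ?_⟩
    change v = (t : K) * v * (t : K)⁻¹
    field_simp
  have h2 : IsIntegral L s := by
    let i : R' →+* L := Subring.inclusion (T := L.toSubring) (fun v hv => hL v (hR hv))
    obtain ⟨f, hf, h3⟩ := h
    refine ⟨f.map i, hf.map i, ?_⟩
    rw [Polynomial.eval₂_map]
    exact h3
  have : IsLocalization n.primeCompl L := Localization.subalgebra.isLocalization_ofField K n.primeCompl hS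
  obtain ⟨t, ht⟩ := IsIntegral.exists_multiple_integral_of_isLocalization (Rₘ := L) n.primeCompl s h2
  exact ⟨t, t.2, ds_int_mem _ ht⟩

lemma f1d (x : O) (hx : x ∈ maximalIdeal O) (hx0 : x ≠ 0) (n : Ideal (Ds O K)) [hn : n.IsMaximal]
    (g : K) (hg : g ∈ Gs O K) (hgn : g ∉ Lc (Ds O K) n) : ∃ π, IsDV (Lc (Ds O K) n) π := by
  have hS : n.primeCompl ≤ nonZeroDivisors (Ds O K) := n.primeCompl_le_nonZeroDivisors
  let L : Subalgebra (Ds O K) K := Localization.subalgebra.ofField K n.primeCompl hS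
  have hloc : IsLocalization n.primeCompl L := Localization.subalgebra.isLocalization_ofField K n.primeCompl hS
  have hL : ∀ v, v ∈ Lc (Ds O K) n ↔ v ∈ L := by
    intro v
    constructor
    · rintro ⟨t, ht, h⟩
      have ht0 : (t : K) ≠ 0 := by
        intro h0
        apply ht
        have : t = 0 := Subtype.ext h0
        rw [this]; exact n.zero_mem
      refine ⟨⟨_, h⟩, t, ht, ?_⟩
      change v = (t : K) * v * (t : K)⁻¹
      field_simp
    · rintro ⟨a, t, ht, rfl⟩
      have ht0 : (t : K) ≠ 0 := by
        intro h0
        apply ht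
        have : t = 0 := Subtype.ext h0
        rw [this]; exact n.zero_mem
      refine ⟨t, ht, ?_⟩
      change (t : K) * (a * (t : K)⁻¹) ∈ _
      have : (t : K) * (a * (t : K)⁻¹) = a := by field_simp
      rw [this]; exact a.2
  have : IsNoetherianRing L := IsLocalization.isNoetherianRing n.primeCompl L inferInstance
  have : IsLocalRing L := IsLocalization.AtPrime.isLocalRing L n
  have hunit : ∀ t : Ds O K, t ∉ n → IsUnit (algebraMap (Ds O K) L t) := fun t ht =>
    IsLocalization.map_units L (⟨t, ht⟩ : n.primeCompl)
  let N : Submodule L K := LinearMap.range (Algebra.linearMap L K)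
  have hN : ∀ v : K, v ∈ N ↔ v ∈ L := fun v => by
    constructor
    · rintro ⟨w, rfl⟩; exact w.2
    · intro hv; exact ⟨⟨v, hv⟩, rfl⟩
  obtain ⟨a, P, hP, hPr⟩ := prime_colon N g (by rw [hN, ← hL]; exact hgn)
  set g' : K := a • g with hg'
  have hg'L : g' ∉ L := by
    rw [← hN]
    intro h
    apply hP.ne_top
    rw [Ideal.eq_top_iff_one, hPr, one_smul]; exact h
  obtain ⟨k, hk⟩ := hg
  have hmP : maximalIdeal O ≤ (P.comap (algebraMap (Ds O K) L)).comap (algebraMap O (Ds O K)) := by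
    have : maximalIdeal O ^ k ≤ (P.comap (algebraMap (Ds O K) L)).comap (algebraMap O (Ds O K)) := by
      intro y hy
      change algebraMap (Ds O K) L (algebraMap O (Ds O K) y) ∈ P
      rw [hPr, hN]
      obtain ⟨o, ho⟩ := hk y hy
      have : algebraMap (Ds O K) L (algebraMap O (Ds O K) y) • g' =
        a * algebraMap (Ds O K) L (algebraMap O (Ds O K) o) := by
        change algebraMap O K y * ((a : K) * g) = (a : K) * algebraMap O K o
        rw [ho, Algebra.smul_def]; ring
      rw [this]
      exact (a * algebraMap (Ds O K) L (algebraMap O (Ds O K) o)).2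
    by_cases hk0 : k = 0
    · subst hk0
      rw [pow_zero, Ideal.one_eq_top] at this
      exact le_top.trans this
    exact (Ideal.IsPrime.pow_le_iff hk0).1 this
  have hmax := ds_max (P.comap (algebraMap (Ds O K) L)) hmP
  have hcomap : P.comap (algebraMap (Ds O K) L) = n := by
    refine hmax.eq_of_le hn.ne_top ?_
    intro t ht
    by_contra htn
    exact hP.ne_top (Ideal.eq_top_of_isUnit_mem _ ht (hunit t htn))
  have hPun : ∀ v : L, v ∉ P → IsUnit v := by
    intro v hv
    obtain ⟨⟨b, t⟩, h⟩ := IsLocalization.surj n.primeCompl v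
    have hb : b ∉ n := by
      intro hb
      rw [← hcomap] at hb
      have hb' : algebraMap (Ds O K) L b ∈ P := hb
      rw [← h] at hb'
      rcases hP.mem_or_mem hb' with h1 | h1
      · exact hv h1
      · exact hP.ne_top (Ideal.eq_top_of_isUnit_mem _ h1 (hunit t t.2))
    have := hunit b hb
    rw [← h] at this
    exact isUnit_of_mul_isUnit_left this
  by_cases hcase : ∃ u ∈ P, ∃ v : L, v ∉ P ∧ (v : K) = u * g'
  · obtain ⟨u, hu, v, hv, huv⟩ := hcase
    obtain ⟨v', hv'⟩ := (hPun v hv).exists_right_inv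
    let π : L := u * v'
    have hπP : π ∈ P := P.mul_mem_right _ hu
    have hπg : (π : K) * g' = 1 := by
      have : ((v * v' : L) : K) = 1 := by rw [hv']; rfl
      rw [← this]
      change (u : K) * v' * g' = v * v'
      rw [huv]; ring
    have hπ0 : (π : K) ≠ 0 := left_ne_zero_of_mul_eq_one hπg
    have hπinv : (π : K)⁻¹ = g' := inv_eq_of_mul_eq_one_right hπg
    have hπnu : ¬ IsUnit π := fun h => hP.ne_top (Ideal.eq_top_of_isUnit_mem _ hπP h)
    have hdvd : ∀ w ∈ P, π ∣ w := by
      intro w hw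
      have := (hPr w).1 hw
      rw [hN] at this
      refine ⟨⟨_, this⟩, Subtype.ext ?_⟩
      change (w : K) = π * (w * g')
      rw [mul_left_comm, hπg, mul_one]
    have hfac : ∀ w : L, w ≠ 0 → ∃ k : ℕ, ∃ e e' : L, e * e' = 1 ∧ w = π ^ k * e := by
      intro w hw
      obtain ⟨e, h1, h2⟩ := (FiniteMultiplicity.of_not_isUnit hπnu hw).exists_eq_pow_mul_and_not_dvd
      obtain ⟨e', he'⟩ := (hPun e fun h => h2 (hdvd e h)).exists_right_inv
      exact ⟨_, e, e', he', h1⟩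
    refine ⟨π, (hL _).2 π.2, ?_, ?_⟩
    · rw [hL, hπinv]; exact hg'L
    · intro s hs
      obtain ⟨b, c, hc, rfl⟩ := IsFractionRing.div_surjective L s
      have hc0 : c ≠ 0 := nonZeroDivisors.ne_zero hc
      have hb0 : b ≠ 0 := by rintro rfl; simp at hs
      obtain ⟨i, e, e', he, rfl⟩ := hfac b hb0
      obtain ⟨j, f, f', hf, rfl⟩ := hfac c hc0
      have he : (e : K) * e' = 1 := congrArg Subtype.val he
      have hf : (f : K) * f' = 1 := congrArg Subtype.val hf
      have he0 := left_ne_zero_of_mul_eq_one he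
      have hf0 := left_ne_zero_of_mul_eq_one hf
      have hee : (e' : K) = (e : K)⁻¹ := (inv_eq_of_mul_eq_one_right he).symm
      have hff : (f' : K) = (f : K)⁻¹ := (inv_eq_of_mul_eq_one_right hf).symm
      have hcalc : algebraMap L K (π ^ i * e) / algebraMap L K (π ^ j * f) * (π : K) ^ ((j : ℤ) - i) = ((e * f' : L) : K) := by
        change ((π : K) ^ i * e) / ((π : K) ^ j * f) * (π : K) ^ ((j : ℤ) - i) = (e : K) * f'
        rw [hff, zpow_sub₀ hπ0, zpow_natCast, zpow_natCast]
        field_simp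
      refine ⟨(j : ℤ) - i, ?_, ?_⟩
      · rw [hcalc, hL]; exact (e * f').2
      · rw [hcalc, hL]
        have : ((e * f' : L) : K)⁻¹ = ((e' * f : L) : K) := by
          change ((e : K) * f')⁻¹ = e' * f
          rw [hff, hee]; field_simp
        rw [this]; exact (e' * f).2
  · exfalso
    push Not at hcase
    have hint : IsIntegral L g' := by
      refine isIntegral_of_smul_mem_submodule (R := L) (A := K) (M := K)
        (Submodule.map (Algebra.linearMap L K) P) ?_ ((IsNoetherian.noetherian P).map _) g' ?_
      · intro h
        have h1 : algebraMap (Ds O K) L (algebraMap O (Ds O K) x) ∈ P := hmP hx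
        have h2 := Submodule.mem_map_of_mem (f := Algebra.linearMap L K) h1
        rw [h] at h2
        apply hx0
        apply IsFractionRing.injective O K
        rw [map_zero]
        exact h2
      · rintro _ ⟨w, hw, rfl⟩
        have hw' := (hPr w).1 hw
        rw [hN] at hw'
        by_contra hcon
        refine hcase w hw ⟨_, hw'⟩ ?_ rfl
        intro h
        apply hcon
        refine ⟨_, h, ?_⟩
        change (w : K) * g' = g' * w
        ring
    obtain ⟨t, ht, hti⟩ := lc_int n (Lc (Ds O K) n) le_rfl g' (by
      obtain ⟨f, hf, h3⟩ := hint
      let i : L →+* Lc (Ds O K) n := Subring.inclusion (S := L.toSubring) (fun v hv => (hL v).2 hv)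
      refine ⟨f.map i, hf.map i, ?_⟩
      rw [Polynomial.eval₂_map]
      exact h3)
    obtain ⟨t', ht', ha⟩ := (hL a).2 a.2
    apply hg'L
    rw [← hL]
    refine ⟨t * t', fun h => (hn.isPrime.mem_or_mem h).elim ht ht', ?_⟩
    have e1 : ((t * t' : Ds O K) : K) * g' = t' * (t * g') := by
      change (t : K) * t' * g' = _
      ring
    refine ⟨?_, ?_⟩
    · change _ ∈ integralClosure O K
      rw [e1]
      exact Subalgebra.mul_mem _ t'.2.1 hti
    · change _ ∈ Gs O K
      have : ((t * t' : Ds O K) : K) * g' = t * (t' * a) * g := by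
        change (t : K) * t' * (a * g) = _
        ring
      rw [this]
      exact Subalgebra.mul_mem _ (Subalgebra.mul_mem _ t.2.2 ha.2) ⟨k, hk⟩

end

section
variable {O K : Type} [CommRing O] [IsDomain O] [IsLocalRing O] [IsNoetherianRing O]
    [Field K] [Algebra O K] [IsFractionRing O K]

lemma gs_int (s : K) (hs : ∀ y ∈ maximalIdeal O, y • s ∈ integralClosure O K) : IsIntegral (Gs O K) s := by
  obtain ⟨S, hS⟩ := (IsNoetherian.noetherian (maximalIdeal O) : (maximalIdeal O).FG)
  let A' : Subalgebra O K := Algebra.adjoin O ((fun y : O => y • s) '' (S : Set O))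
  have hfg : (Subalgebra.toSubmodule A').FG := by
    apply fg_adjoin_of_finite (S.finite_toSet.image _)
    rintro _ ⟨y, hy, rfl⟩
    exact hs y (hS ▸ Submodule.subset_span hy)
  have h1 : ∀ y ∈ maximalIdeal O, y • s ∈ A' := by
    intro y hy
    rw [← hS] at hy
    induction hy using Submodule.span_induction with
    | mem y hy => exact Algebra.subset_adjoin ⟨y, hy, rfl⟩
    | zero => rw [zero_smul]; exact A'.zero_mem
    | add a b _ _ ha hb => rw [add_smul]; exact A'.add_mem ha hb
    | smul c a _ ha => rw [smul_assoc]; exact A'.smul_mem ha c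
  have h2 : ∀ j, ∀ y ∈ maximalIdeal O ^ j, y • s ^ j ∈ A' := by
    intro j
    induction j with
    | zero => intro y _; rw [pow_zero, Algebra.smul_def, mul_one]; exact A'.algebraMap_mem y
    | succ j ih =>
      intro y hy
      rw [pow_succ] at hy
      induction hy using Submodule.mul_induction_on' with
      | mem_mul_mem u hu v hv =>
        have : (u * v) • s ^ (j + 1) = (u • s ^ j) * (v • s) := by
          simp only [Algebra.smul_def, map_mul]; ring
        rw [this]; exact A'.mul_mem (ih u hu) (h1 v hv)
      | add u _ v _ hu hv => rw [add_smul]; exact A'.add_mem hu hv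
  obtain ⟨f, hf, hfA⟩ := FractionalIdeal.isFractional_of_fg (S := nonZeroDivisors O) hfg
  have hf0 : f ≠ 0 := nonZeroDivisors.ne_zero hf
  apply IsAlmostIntegral.isIntegral
  refine ⟨algebraMap O (Gs O K) f, ?_, fun j => ?_⟩
  · rw [mem_nonZeroDivisors_iff_ne_zero]
    intro h
    apply hf0
    apply IsFractionRing.injective O K
    rw [map_zero]
    exact congrArg Subtype.val h
  · refine ⟨⟨f • s ^ j, j, fun y hy => ?_⟩, ?_⟩
    · obtain ⟨o, ho⟩ := hfA _ (h2 j y hy)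
      exact ⟨o, by rw [ho, smul_comm]⟩
    · change f • s ^ j = algebraMap O K f * s ^ j
      rw [Algebra.smul_def]

lemma f1e (s : K) (hsB : s ∉ integralClosure O K)
    (hs : ∀ y ∈ maximalIdeal O, y • s ∈ integralClosure O K) :
    ∃ (n : Ideal (Ds O K)) (_ : n.IsMaximal), s ∉ Lc (Ds O K) n ∧ ∃ g ∈ Gs O K, g ∉ Lc (Ds O K) n := by
  have hi := gs_int s hs
  let Q : Ideal (Ds O K) :=
    { carrier := {d | (d : K) * s ∈ integralClosure O K}
      zero_mem' := by simp [Subalgebra.zero_mem]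
      add_mem' := by
        intro a b ha hb
        change ((a : K) + b) * s ∈ integralClosure O K
        rw [add_mul]; exact Subalgebra.add_mem _ ha hb
      smul_mem' := by
        intro c a ha
        change ((c : K) * a) * s ∈ integralClosure O K
        rw [mul_assoc]; exact Subalgebra.mul_mem _ c.2.1 ha }
  have hQ : Q ≠ ⊤ := by
    intro h
    have : (1 : Ds O K) ∈ Q := h ▸ Submodule.mem_top
    have h2 : (1 : K) * s ∈ integralClosure O K := this
    rw [one_mul] at h2
    exact hsB h2
  obtain ⟨n, hn, hQn⟩ := Ideal.exists_le_maximal Q hQ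
  refine ⟨n, hn, ?_, ?_⟩
  · rintro ⟨t, ht, h⟩
    exact ht (hQn h.1)
  · by_contra! hcon
    obtain ⟨t, ht, h⟩ := lc_int n (Gs O K).toSubring (fun g hg => hcon g hg) s hi
    exact ht (hQn h)

end

structure GoodV {A K : Type} [CommRing A] [Field K] [Algebra A K] (x : A) (V : Subring K) : Prop where
  dv : ∃ π, IsDV V π
  alg : ∀ a, algebraMap A K a ∈ V
  xnon : (algebraMap A K x)⁻¹ ∉ V
  loc : ∀ v ∈ V, ∃ t ∈ integralClosure A K, t ≠ 0 ∧ t⁻¹ ∈ V ∧ t * v ∈ integralClosure A K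
  res : ∃ S : Finset K, (∀ b ∈ S, b ∈ integralClosure A K) ∧ ∀ v ∈ V, ∃ a : A,
    algebraMap A K a ≠ 0 ∧ (algebraMap A K a)⁻¹ ∈ V ∧ ∃ y ∈ Submodule.span A (S : Set K),
      a • v - y ≠ 0 → (a • v - y)⁻¹ ∉ V

section
variable {A K : Type} [CommRing A] [IsDomain A] [IsNoetherianRing A] [Field K] [Algebra A K] [IsFractionRing A K]

variable (K) in
abbrev Op (p : PrimeSpectrum A) : Subalgebra A K :=
  Localization.subalgebra.ofField K p.asIdeal.primeCompl p.asIdeal.primeCompl_le_nonZeroDivisors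

instance (p : PrimeSpectrum A) : IsNoetherianRing (Op K p) :=
  IsLocalization.isNoetherianRing p.asIdeal.primeCompl _ inferInstance

instance (p : PrimeSpectrum A) : IsLocalRing (Op K p) :=
  IsLocalization.AtPrime.isLocalRing (Op K p) p.asIdeal

lemma op_mem (p : PrimeSpectrum A) (v : K) : v ∈ Op K p ↔ ∃ t ∉ p.asIdeal, ∃ a, algebraMap A K t * v = algebraMap A K a := by
  constructor
  · rintro ⟨a, t, ht, rfl⟩
    have ht0 : algebraMap A K t ≠ 0 := by
      intro h; apply ht
      have : t = 0 := by simpa using h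
      rw [this]; exact p.asIdeal.zero_mem
    exact ⟨t, ht, a, by field_simp⟩
  · rintro ⟨t, ht, a, h⟩
    have ht0 : algebraMap A K t ≠ 0 := by
      intro h; apply ht
      have : t = 0 := by simpa using h
      rw [this]; exact p.asIdeal.zero_mem
    exact ⟨a, t, ht, by rw [← h]; field_simp⟩

lemma op_max (p : PrimeSpectrum A) (a : A) : algebraMap A (Op K p) a ∈ maximalIdeal (Op K p) ↔ a ∈ p.asIdeal := by
  exact IsLocalization.AtPrime.to_map_mem_maximal_iff (Op K p) p.asIdeal a

lemma op_int (p : PrimeSpectrum A) (v : K) (h : v ∈ integralClosure (Op K p) K) :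
    ∃ t ∉ p.asIdeal, algebraMap A K t * v ∈ integralClosure A K := by
  obtain ⟨t, ht⟩ := IsIntegral.exists_multiple_integral_of_isLocalization (Rₘ := Op K p) p.asIdeal.primeCompl v h
  refine ⟨t, t.2, ?_⟩
  rw [← Algebra.smul_def]; exact ht

lemma op_int' (p : PrimeSpectrum A) (v : K) (h : v ∈ integralClosure A K) : v ∈ integralClosure (Op K p) K :=
  IsIntegral.tower_top (A := Op K p) (R := A) h

lemma lc_nonunit {O K : Type} [CommRing O] [Field K] [Algebra O K] (D : Subalgebra O K) (n : Ideal D)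
    [hn : n.IsPrime] (w : K) (hw0 : w ≠ 0) (T e : D) (hT : T ∉ n) (he : e ∈ n) (h : T * w = e) : w⁻¹ ∉ Lc D n := by
  rintro ⟨T', hT', h'⟩
  have : T' * T = ⟨_, h'⟩ * e := by
    apply Subtype.ext
    change (T' : K) * T = T' * w⁻¹ * e
    rw [← h]; field_simp
  have h2 : T' * T ∈ n := by rw [this]; exact n.mul_mem_left _ he
  exact (hn.mem_or_mem h2).elim hT' hT

lemma good_lc (x : A) (hx0 : x ≠ 0) (p : PrimeSpectrum A) (hxp : x ∈ p.asIdeal)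
    (n : Ideal (Ds (Op K p) K)) [hn : n.IsMaximal] (hdv : ∃ π, IsDV (Lc (Ds (Op K p) K) n) π) :
    GoodV x (Lc (Ds (Op K p) K) n) := by
  have inj : Function.Injective (algebraMap A K) := IsFractionRing.injective A K
  have hne : ∀ t ∉ p.asIdeal, algebraMap A K t ≠ 0 := by
    intro t ht h
    apply ht
    have : t = 0 := by simpa using h
    rw [this]; exact p.asIdeal.zero_mem
  let j : A →+* Ds (Op K p) K := (algebraMap (Op K p) (Ds (Op K p) K)).comp (algebraMap A (Op K p))
  have hj : ∀ a, (j a : K) = algebraMap A K a := fun a => rfl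
  have hjn : ∀ a, j a ∈ n ↔ a ∈ p.asIdeal := by
    intro a
    rw [← op_max (K := K), ← ds_comap n]
    rfl
  have hD : ∀ d ∈ Ds (Op K p) K, d ∈ Lc (Ds (Op K p) K) n := fun d hd =>
    ⟨1, fun h => hn.ne_top ((Ideal.eq_top_iff_one _).2 h), by
      change (1 : K) * d ∈ _
      rw [one_mul]; exact hd⟩
  have hDinv : ∀ t : Ds (Op K p) K, t ∉ n → (t : K)⁻¹ ∈ Lc (Ds (Op K p) K) n := fun t ht =>
    ⟨t, ht, by
      have ht0 : (t : K) ≠ 0 := by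
        intro h0
        apply ht
        have : t = 0 := Subtype.ext h0
        rw [this]; exact n.zero_mem
      rw [mul_inv_cancel₀ ht0]; exact Subalgebra.one_mem _⟩
  have hne' : ∀ t : Ds (Op K p) K, t ∉ n → (t : K) ≠ 0 := by
    intro t ht h0
    apply ht
    have : t = 0 := Subtype.ext h0
    rw [this]; exact n.zero_mem
  refine ⟨hdv, fun a => hD _ (j a).2, ?_, ?_, ?_⟩
  · have : (algebraMap A K x) ≠ 0 := by simpa using hx0
    exact lc_nonunit _ n _ this 1 (j x) (fun h => hn.ne_top ((Ideal.eq_top_iff_one _).2 h))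
      ((hjn x).2 hxp) (one_mul _)
  · rintro v ⟨t, ht, h⟩
    obtain ⟨t1, ht1, h1⟩ := op_int p (t : K) t.2.1
    obtain ⟨t2, ht2, h2⟩ := op_int p _ h.1
    have hT : j t2 * j t1 * t ∉ n := fun h => (hn.isPrime.mem_or_mem h).elim (fun h => (hn.isPrime.mem_or_mem h).elim
      (fun h => ht2 ((hjn _).1 h)) (fun h => ht1 ((hjn _).1 h))) ht
    refine ⟨((j t2 * j t1 * t : Ds (Op K p) K) : K), ?_, hne' _ hT, hDinv _ hT, ?_⟩
    · change algebraMap A K t2 * algebraMap A K t1 * t ∈ _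
      rw [mul_assoc]
      exact Subalgebra.mul_mem _ (Subalgebra.algebraMap_mem _ _) h1
    · change algebraMap A K t2 * algebraMap A K t1 * t * v ∈ _
      have : algebraMap A K t2 * algebraMap A K t1 * t * v = algebraMap A K t1 * (algebraMap A K t2 * (t * v)) := by ring
      rw [this]
      exact Subalgebra.mul_mem _ (Subalgebra.algebraMap_mem _ _) h2
  · have hfin : Module.Finite (Op K p) (Ds (Op K p) K ⧸ n) := by
      refine ds_quot_finite (algebraMap A (Op K p) x) ((op_max p x).2 hxp) ?_ n
      intro h
      apply hx0
      apply inj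
      rw [map_zero]
      exact congrArg Subtype.val h
    obtain ⟨S0, hS0⟩ := hfin
    classical
    -- lifts
    have hl : ∀ z : Ds (Op K p) K ⧸ n, ∃ b ∈ integralClosure A K, ∃ t ∉ p.asIdeal, ∃ d : Ds (Op K p) K,
        Ideal.Quotient.mk n d = z ∧ b = algebraMap A K t * d := by
      intro z
      obtain ⟨d, rfl⟩ := Ideal.Quotient.mk_surjective z
      obtain ⟨t, ht, h⟩ := op_int p (d : K) d.2.1
      exact ⟨_, h, t, ht, d, rfl, rfl⟩
    choose b hb t ht d hd hbd using hl
    let S : Finset K := S0.image b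
    have hspan : ∀ z : Ds (Op K p) K ⧸ n, ∃ c ∉ p.asIdeal, ∃ y ∈ Submodule.span A (S : Set K),
        ∃ e : Ds (Op K p) K, (e : K) = y ∧ Ideal.Quotient.mk n e = Ideal.Quotient.mk n (j c) * z := by
      intro z
      have hz : z ∈ Submodule.span (Op K p) (S0 : Set (Ds (Op K p) K ⧸ n)) := hS0 ▸ Submodule.mem_top
      induction hz using Submodule.span_induction with
      | mem z hz =>
        refine ⟨t z, ht z, b z, Submodule.subset_span (by simp [S]; exact ⟨z, hz, rfl⟩), j (t z) * d z, ?_, ?_⟩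
        · rw [hbd]; rfl
        · rw [map_mul, hd]
      | zero => exact ⟨1, fun h => p.2.ne_top ((Ideal.eq_top_iff_one _).2 h), 0, Submodule.zero_mem _, 0, rfl, by simp⟩
      | add z w _ _ hz hw =>
        obtain ⟨c, hc, y, hy, e, he, h⟩ := hz
        obtain ⟨c', hc', y', hy', e', he', h'⟩ := hw
        refine ⟨c * c', fun h => (p.2.mem_or_mem h).elim hc hc', c' • y + c • y',
          Submodule.add_mem _ (Submodule.smul_mem _ _ hy) (Submodule.smul_mem _ _ hy'), j c' * e + j c * e', ?_, ?_⟩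
        · rw [← he, ← he', Algebra.smul_def, Algebra.smul_def]; rfl
        · simp only [map_add, map_mul, h, h']; ring
      | smul o z _ hz =>
        obtain ⟨c, hc, y, hy, e, he, h⟩ := hz
        obtain ⟨c', hc', a, ha⟩ := (op_mem p (o : K)).1 o.2
        refine ⟨c' * c, fun h => (p.2.mem_or_mem h).elim hc' hc, a • y, Submodule.smul_mem _ _ hy, j a * e, ?_, ?_⟩
        · rw [← he, Algebra.smul_def]; rfl
        · have hja : j a = j c' * algebraMap (Op K p) (Ds (Op K p) K) o := Subtype.ext ha.symm
          have : o • z = Ideal.Quotient.mk n (algebraMap (Op K p) (Ds (Op K p) K) o) * z := by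
            obtain ⟨z', rfl⟩ := Ideal.Quotient.mk_surjective z
            rw [← map_mul, ← Algebra.smul_def]; rfl
          rw [this]
          simp only [hja, map_mul, h]; ring
    refine ⟨S, ?_, ?_⟩
    · intro b' hb'
      obtain ⟨z, _, rfl⟩ := Finset.mem_image.1 hb'
      exact hb z
    · rintro v ⟨t, ht, h⟩
      obtain ⟨t', ht'⟩ := Ideal.Quotient.exists_inv (I := n) (a := Ideal.Quotient.mk n t)
        (by rwa [Ne, Ideal.Quotient.eq_zero_iff_mem])
      obtain ⟨t', rfl⟩ := Ideal.Quotient.mk_surjective t'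
      obtain ⟨c, hc, y, hy, e, he, h2⟩ := hspan (Ideal.Quotient.mk n (t' * ⟨_, h⟩))
      refine ⟨c, hne c hc, hDinv (j c) (fun h => hc ((hjn c).1 h)), y, hy, fun hw0 => ?_⟩
      refine lc_nonunit _ n _ hw0 t (j c * ⟨_, h⟩ - t * e) ht ?_ ?_
      · rw [← Ideal.Quotient.eq_zero_iff_mem, map_sub, map_mul, map_mul, h2, map_mul]
        linear_combination (- Ideal.Quotient.mk n (j c) * Ideal.Quotient.mk n ⟨_, h⟩) * ht'
      · change (t : K) * (c • v - y) = algebraMap A K c * (t * v) - t * e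
        rw [he, Algebra.smul_def]; ring

variable (K) in
def Fp (p : PrimeSpectrum A) : Set (Subring K) :=
  {V | ∃ (n : Ideal (Ds (Op K p) K)) (_ : n.IsMaximal), V = Lc (Ds (Op K p) K) n ∧ ∃ π, IsDV V π}

lemma fp_fin (x : A) (hx0 : x ≠ 0) (p : PrimeSpectrum A) (hxp : x ∈ p.asIdeal) : (Fp K p).Finite := by
  have h := ds_fin (K := K) (algebraMap A (Op K p) x) ((op_max p x).2 hxp) (by
      intro h
      apply hx0
      apply IsFractionRing.injective A K
      rw [map_zero]
      exact congrArg Subtype.val h)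
  have := h.to_subtype
  refine (Set.finite_range (fun n : {n : Ideal (Ds (Op K p) K) | n.IsMaximal} =>
    have : n.1.IsMaximal := n.2
    Lc (Ds (Op K p) K) n.1)).subset ?_
  rintro _ ⟨n, hn, rfl, -⟩
  exact ⟨⟨n, hn⟩, rfl⟩

lemma ass_of_g (x : A) (hx0 : x ≠ 0) (p : PrimeSpectrum A) (hxp : x ∈ p.asIdeal) (g : K)
    (hg : g ∈ Gs (Op K p) K) (hgO : g ∉ Op K p) :
    p.asIdeal ∈ associatedPrimes A (A ⧸ Ideal.span {x}) := by
  have inj : Function.Injective (algebraMap A K) := IsFractionRing.injective A K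
  have hxK : algebraMap A K x ≠ 0 := by simpa using hx0
  let N : Submodule (Op K p) K := LinearMap.range (Algebra.linearMap (Op K p) K)
  have hN : ∀ v : K, v ∈ N ↔ v ∈ Op K p := fun v => by
    constructor
    · rintro ⟨w, rfl⟩; exact w.2
    · intro hv; exact ⟨⟨v, hv⟩, rfl⟩
  obtain ⟨a, P, hP, hPr⟩ := prime_colon N g (by rwa [hN])
  set g' : K := a • g with hg'
  have hPm : ∀ y ∈ maximalIdeal (Op K p), y • g' ∈ N := by
    obtain ⟨k, hk⟩ := hg
    have h1 : maximalIdeal (Op K p) ^ k ≤ P := by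
      intro y hy
      rw [hPr, hN]
      obtain ⟨o, ho⟩ := hk y hy
      have : y • g' = ((a * o : Op K p) : K) := by
        change (y : K) * (a * g) = a * algebraMap (Op K p) K o
        rw [ho]
        change _ = (a : K) * (y * g)
        ring
      rw [this]; exact (a * o).2
    intro y hy
    rw [← hPr]
    by_cases hk0 : k = 0
    · subst hk0
      rw [pow_zero, Ideal.one_eq_top] at h1
      exact h1 Submodule.mem_top
    exact (Ideal.IsPrime.pow_le_iff hk0).1 h1 hy
  have hg'O : g' ∉ Op K p := by
    rw [← hN]
    intro h
    apply hP.ne_top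
    rw [Ideal.eq_top_iff_one, hPr, one_smul]; exact h
  have hxg : algebraMap A K x * g' ∈ Op K p := by
    have := hPm _ ((op_max p x).2 hxp)
    rw [hN] at this
    exact this
  obtain ⟨t, ht, r, hr⟩ := (op_mem p _).1 hxg
  have htn : algebraMap A K t ≠ 0 := by
    intro h; apply ht
    have : t = 0 := by simpa using h
    rw [this]; exact p.asIdeal.zero_mem
  -- for y in p, exists t' with t' y r in x A
  have h2 : ∀ y ∈ p.asIdeal, ∃ t' ∉ p.asIdeal, t' * (y * r) ∈ Ideal.span {x} := by
    intro y hy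
    have := hPm _ ((op_max p y).2 hy)
    rw [hN] at this
    obtain ⟨t', ht', a', ha'⟩ := (op_mem p _).1 this
    have ha' : algebraMap A K t' * (algebraMap A K y * g') = algebraMap A K a' := ha'
    refine ⟨t', ht', Ideal.mem_span_singleton'.2 ⟨t * a', inj ?_⟩⟩
    simp only [map_mul, ← hr, ← ha']; ring
  obtain ⟨S, hS⟩ := (IsNoetherian.noetherian p.asIdeal : p.asIdeal.FG)
  choose! f hf hf' using h2
  let τ := ∏ y ∈ S, f y
  have hτ : τ ∉ p.asIdeal := by
    intro h
    obtain ⟨y, hy, h⟩ := p.2.prod_mem_iff.1 h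
    exact hf y (hS ▸ Submodule.subset_span hy) h
  have hτS : ∀ y ∈ p.asIdeal, y * (τ * r) ∈ Ideal.span {x} := by
    intro y hy
    rw [← hS] at hy
    induction hy using Submodule.span_induction with
    | mem y hy =>
      obtain ⟨c, hc⟩ := Finset.dvd_prod_of_mem f hy
      have := hf' y (hS ▸ Submodule.subset_span hy)
      have e : y * (τ * r) = c * (f y * (y * r)) := by
        rw [show τ = f y * c from hc]; ring
      rw [e]; exact Ideal.mul_mem_left _ _ this
    | zero => simp
    | add a b _ _ ha hb => rw [add_mul]; exact Ideal.add_mem _ ha hb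
    | smul c a _ ha => rw [smul_eq_mul, mul_assoc]; exact Ideal.mul_mem_left _ _ ha
  rw [AssociatedPrimes.mem_iff, isAssociatedPrime_iff]
  refine ⟨p.2, Ideal.Quotient.mk _ (τ * r), ?_⟩
  ext y
  rw [Submodule.mem_colon_singleton, Submodule.mem_bot]
  have e : y • (Ideal.Quotient.mk (Ideal.span {x}) (τ * r)) = Ideal.Quotient.mk (Ideal.span {x}) (y * (τ * r)) := rfl
  rw [e, Ideal.Quotient.eq_zero_iff_mem]
  refine ⟨hτS y, fun h => ?_⟩
  by_contra hy
  apply hg'O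
  obtain ⟨c, hc⟩ := Ideal.mem_span_singleton'.1 h
  refine (op_mem p _).2 ⟨y * τ * t, fun h => (p.2.mem_or_mem h).elim (fun h => (p.2.mem_or_mem h).elim hy hτ) ht, c, ?_⟩
  apply mul_left_cancel₀ hxK
  have := congrArg (algebraMap A K) hc
  simp only [map_mul, ← hr] at this ⊢
  rw [mul_comm (algebraMap A K x) (algebraMap A K c), this]
  ring

theorem f2 (x : A) (hx0 : x ≠ 0) : ∃ F : Set (Subring K), F.Finite ∧ (∀ V ∈ F, GoodV x V) ∧
    ∀ s : K, x • s ∈ integralClosure A K → (∀ V ∈ F, s ∈ V) → s ∈ integralClosure A K := by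
  let Z : Set (PrimeSpectrum A) := {p | p.asIdeal ∈ associatedPrimes A (A ⧸ Ideal.span {x})}
  have hZ : ∀ p ∈ Z, x ∈ p.asIdeal := by
    intro p hp
    obtain ⟨_, y, hy⟩ := isAssociatedPrime_iff.1 (AssociatedPrimes.mem_iff.1 hp)
    rw [hy, Submodule.mem_colon_singleton, Submodule.mem_bot]
    obtain ⟨y, rfl⟩ := Ideal.Quotient.mk_surjective y
    change Ideal.Quotient.mk (Ideal.span {x}) (x * y) = 0
    rw [Ideal.Quotient.eq_zero_iff_mem]
    exact Ideal.mul_mem_right _ _ (Ideal.mem_span_singleton_self x)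
  have hZf : Z.Finite := by
    have := associatedPrimes.finite A (A ⧸ Ideal.span {x})
    exact this.preimage (fun a _ b _ h => PrimeSpectrum.ext h)
  refine ⟨⋃ p ∈ Z, Fp K p, hZf.biUnion fun p hp => fp_fin x hx0 p (hZ p hp), ?_, ?_⟩
  · intro V hV
    obtain ⟨p, hp, n, hn, rfl, hdv⟩ := Set.mem_iUnion₂.1 hV
    exact good_lc x hx0 p (hZ p hp) n hdv
  · intro s hxs hV
    by_contra hs
    obtain ⟨a, p, hp, hpr⟩ := prime_colon (Subalgebra.toSubmodule (integralClosure A K)) s hs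
    obtain ⟨P, rfl⟩ : ∃ P : PrimeSpectrum A, P.asIdeal = p := ⟨⟨p, hp⟩, rfl⟩
    have hxp : x ∈ P.asIdeal := by
      rw [hpr, smul_comm]
      exact Submodule.smul_mem _ a hxs
    have h1 : a • s ∉ integralClosure (Op K P) K := by
      intro h
      obtain ⟨t, ht, h⟩ := op_int P _ h
      apply ht
      rw [hpr, Algebra.smul_def]; exact h
    have h2 : ∀ y ∈ maximalIdeal (Op K P), y • (a • s) ∈ integralClosure (Op K P) K := by
      intro y hy
      obtain ⟨t, ht, b, hb⟩ := (op_mem P (y : K)).1 y.2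
      have htn : algebraMap A K t ≠ 0 := by
        intro h; apply ht
        have : t = 0 := by simpa using h
        rw [this]; exact P.asIdeal.zero_mem
      have hbp : b ∈ P.asIdeal := by
        rw [← op_max (K := K)]
        have : algebraMap A (Op K P) b = algebraMap A (Op K P) t * y := Subtype.ext hb.symm
        rw [this]; exact Ideal.mul_mem_left _ _ hy
      have h3 : b • (a • s) ∈ integralClosure A K := (hpr b).1 hbp
      have h4 : (⟨(algebraMap A K t)⁻¹, (op_mem P _).2 ⟨t, ht, 1, by rw [mul_inv_cancel₀ htn, map_one]⟩⟩ : Op K P) • (b • (a • s)) ∈ integralClosure (Op K P) K :=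
        Subalgebra.smul_mem _ (op_int' P _ h3) _
      convert h4 using 1
      change (y : K) * _ = (algebraMap A K t)⁻¹ * (b • _)
      rw [Algebra.smul_def b, ← hb]
      field_simp
    obtain ⟨n, hn, hsn, g, hg, hgn⟩ := f1e (a • s) h1 h2
    have hx' : algebraMap A (Op K P) x ≠ 0 := by
      intro h
      apply hx0
      apply IsFractionRing.injective A K
      rw [map_zero]
      exact congrArg Subtype.val h
    have hdv := f1d (algebraMap A (Op K P) x) ((op_max P x).2 hxp) hx' n g hg hgn
    have hgO : g ∉ Op K P := by
      intro h
      apply hgn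
      refine ⟨1, fun h => hn.ne_top ((Ideal.eq_top_iff_one _).2 h), ?_⟩
      change (1 : K) * g ∈ _
      rw [one_mul]
      exact (Ds (Op K P) K).algebraMap_mem ⟨g, h⟩
    have hPZ : P ∈ Z := ass_of_g x hx0 P hxp g hg hgO
    have hVs := hV (Lc (Ds (Op K P) K) n) (Set.mem_iUnion₂.2 ⟨P, hPZ, n, hn, rfl, hdv⟩)
    apply hsn
    rw [Algebra.smul_def]
    refine Subring.mul_mem _ ?_ hVs
    exact (good_lc x hx0 P hxp n hdv).alg a

end

lemma prec_pi {A : Type} [CommRing A] (I : Ideal A) [IsPrecomplete I A] (n : ℕ) :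
    IsPrecomplete I (Fin n → A) := by
  refine ⟨fun f hf => ?_⟩
  have h1 : ∀ i : Fin n, ∃ L : A, ∀ k, f k i ≡ L [SMOD (I ^ k • ⊤ : Submodule A A)] := by
    intro i
    refine IsPrecomplete.prec' (fun k => f k i) ?_
    intro m k hmk
    have h := hf hmk
    rw [SModEq.sub_mem] at h ⊢
    have h2 := Submodule.mem_map_of_mem (f := LinearMap.proj (R := A) (φ := fun _ : Fin n => A) i) h
    rw [Submodule.map_smul''] at h2
    exact Submodule.smul_mono le_rfl le_top h2
  choose L hL using h1
  refine ⟨L, fun k => ?_⟩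
  rw [SModEq.sub_mem]
  have : f k - L = ∑ i, (f k i - L i) • (Pi.single i (1 : A) : Fin n → A) := by
    ext j
    simp [Finset.sum_apply, Pi.single_apply]
  rw [this]
  refine Submodule.sum_mem _ fun i _ => ?_
  refine Submodule.smul_mem_smul ?_ trivial
  have := hL i k
  rw [SModEq.sub_mem] at this
  simpa using this

lemma cofg_step {A M Q : Type} [CommRing A] [IsNoetherianRing A] [AddCommGroup M] [Module A M]
    [AddCommGroup Q] [Module A Q] [Module.Finite A Q] (J J' : Submodule A M)
    (hf : Module.Finite A (M ⧸ J)) (φ : J →ₗ[A] Q)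
    (hφ : ∀ b : J, φ b = 0 → (b : M) ∈ J') : Module.Finite A (M ⧸ J') := by
  let f : J →ₗ[A] M ⧸ J' := J'.mkQ.comp J.subtype
  have hk : LinearMap.ker φ ≤ LinearMap.ker f := by
    intro b hb
    simpa [f] using hφ b hb
  have h1 : Module.Finite A (LinearMap.range f) := by
    have : Module.Finite A (J ⧸ LinearMap.ker φ) :=
      Module.Finite.equiv (LinearMap.quotKerEquivRange φ).symm
    let g : (J ⧸ LinearMap.ker φ) →ₗ[A] LinearMap.range f :=
      Submodule.liftQ _ f.rangeRestrict (by rwa [LinearMap.ker_rangeRestrict])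
    refine Module.Finite.of_surjective g ?_
    rintro ⟨_, b, rfl⟩
    exact ⟨Submodule.Quotient.mk b, rfl⟩
  have h2 : Module.Finite A ((M ⧸ J') ⧸ LinearMap.range f) := by
    let g : (M ⧸ J) →ₗ[A] ((M ⧸ J') ⧸ LinearMap.range f) :=
      Submodule.liftQ _ ((LinearMap.range f).mkQ.comp J'.mkQ) (by
        intro b hb
        have : J'.mkQ b ∈ LinearMap.range f := ⟨⟨b, hb⟩, rfl⟩
        simpa using this)
    refine Module.Finite.of_surjective g ?_
    intro y
    obtain ⟨y, rfl⟩ := Submodule.mkQ_surjective _ y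
    obtain ⟨y, rfl⟩ := Submodule.mkQ_surjective _ y
    exact ⟨Submodule.Quotient.mk y, rfl⟩
  exact Module.Finite.of_submodule_quotient (LinearMap.range f)

lemma cofg_inf {A M : Type} [CommRing A] [IsNoetherianRing A] [AddCommGroup M] [Module A M]
    (J J' : Submodule A M) (hf : Module.Finite A (M ⧸ J)) (hf' : Module.Finite A (M ⧸ J')) :
    Module.Finite A (M ⧸ (J ⊓ J')) := by
  refine cofg_step J (J ⊓ J') hf (J'.mkQ.comp J.subtype) ?_
  intro b hb
  exact ⟨b.2, by simpa using hb⟩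

lemma fin_complete {A M : Type} [CommRing A] [IsLocalRing A] [IsNoetherianRing A]
    [IsPrecomplete (maximalIdeal A) A] [AddCommGroup M] [Module A M] (a : A)
    (ha : a ∈ maximalIdeal A)
    (hf : Module.Finite A (M ⧸ (LinearMap.range (LinearMap.lsmul A M a))))
    (hM : ∀ y : M, (∀ k : ℕ, ∃ z : M, y = a ^ k • z) → y = 0) : Module.Finite A M := by
  have hk : ∀ k : ℕ, Module.Finite A (M ⧸ (LinearMap.range (LinearMap.lsmul A M (a ^ k)))) := by
    intro k
    induction k with
    | zero =>
      have : LinearMap.range (LinearMap.lsmul A M (a ^ 0)) = ⊤ := by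
        rw [LinearMap.range_eq_top]
        intro y; exact ⟨y, by simp⟩
      rw [this]
      infer_instance
    | succ k ih =>
      have h2 : Module.Finite A ((M ⧸ (LinearMap.range (LinearMap.lsmul A M (a ^ (k+1))))) ⧸
          LinearMap.range ((LinearMap.range (LinearMap.lsmul A M (a ^ (k+1)))).mkQ.comp
            (LinearMap.lsmul A M (a ^ k)))) := by
        refine Module.Finite.of_surjective (Submodule.liftQ (LinearMap.range (LinearMap.lsmul A M (a ^ k))) ((LinearMap.range ((LinearMap.range (LinearMap.lsmul A M (a ^ (k+1)))).mkQ.comp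
            (LinearMap.lsmul A M (a ^ k)))).mkQ.comp (Submodule.mkQ _)) ?_) ?_
        · rintro _ ⟨b, rfl⟩
          rw [LinearMap.mem_ker, LinearMap.comp_apply]
          exact (Submodule.Quotient.mk_eq_zero _).2 ⟨b, rfl⟩
        · intro y
          obtain ⟨y, rfl⟩ := Submodule.mkQ_surjective _ y
          obtain ⟨y, rfl⟩ := Submodule.mkQ_surjective _ y
          exact ⟨Submodule.Quotient.mk y, rfl⟩
      have h1 : Module.Finite A (LinearMap.range ((LinearMap.range (LinearMap.lsmul A M (a ^ (k+1)))).mkQ.comp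
            (LinearMap.lsmul A M (a ^ k)))) := by
        refine Module.Finite.of_surjective (Submodule.liftQ (LinearMap.range (LinearMap.lsmul A M a)) (LinearMap.rangeRestrict ((LinearMap.range (LinearMap.lsmul A M (a ^ (k+1)))).mkQ.comp
            (LinearMap.lsmul A M (a ^ k)))) ?_) ?_
        · rintro _ ⟨b, rfl⟩
          rw [LinearMap.ker_rangeRestrict, LinearMap.mem_ker, LinearMap.comp_apply]
          refine (Submodule.Quotient.mk_eq_zero _).2 ⟨b, ?_⟩
          change a ^ (k+1) • b = a ^ k • a • b
          rw [pow_succ, mul_smul]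
        · rintro ⟨_, b, rfl⟩
          exact ⟨Submodule.Quotient.mk b, rfl⟩
      exact Module.Finite.of_submodule_quotient (LinearMap.range ((LinearMap.range (LinearMap.lsmul A M (a ^ (k+1)))).mkQ.comp (LinearMap.lsmul A M (a ^ k))))
  have hH : IsHausdorff (maximalIdeal A) M := by
    refine ⟨fun y hy => hM y fun k => ?_⟩
    have := hk k
    have h3 : (LinearMap.range (LinearMap.lsmul A M (a ^ k))).mkQ y = 0 := by
      refine IsHausdorff.haus (I := maximalIdeal A) inferInstance _ fun n => ?_
      have h4 := hy n
      rw [SModEq.zero] at h4 ⊢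
      have h5 := Submodule.mem_map_of_mem (f := (LinearMap.range (LinearMap.lsmul A M (a ^ k))).mkQ) h4
      rw [Submodule.map_smul''] at h5
      exact Submodule.smul_mono le_rfl le_top h5
    obtain ⟨z, hz⟩ := (Submodule.Quotient.mk_eq_zero _).1 h3
    exact ⟨z, hz.symm⟩
  have h6 : Module.Finite A (M ⧸ (maximalIdeal A • ⊤ : Submodule A M)) := by
    refine Module.Finite.of_surjective (Submodule.liftQ (LinearMap.range (LinearMap.lsmul A M a)) (Submodule.mkQ _) ?_) ?_
    · rintro _ ⟨b, rfl⟩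
      rw [Submodule.ker_mkQ]
      exact Submodule.smul_mem_smul ha trivial
    · intro y
      obtain ⟨y, rfl⟩ := Submodule.mkQ_surjective _ y
      exact ⟨Submodule.Quotient.mk y, rfl⟩
  obtain ⟨n, f, hf⟩ := Module.Finite.exists_fin' A (M ⧸ (maximalIdeal A • ⊤ : Submodule A M))
  obtain ⟨g, hg⟩ := Module.projective_lifting_property (Submodule.mkQ (maximalIdeal A • ⊤ : Submodule A M)) f (Submodule.mkQ_surjective _)
  have := prec_pi (maximalIdeal A) n
  refine Module.Finite.of_surjective g (surjective_of_mkQ_comp_surjective (I := maximalIdeal A) ?_)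
  rw [hg]; exact hf

structure HasVal {K : Type} [Field K] (V : Subring K) (v : K → ℤ) : Prop where
  mul : ∀ s t, s ≠ 0 → t ≠ 0 → v (s * t) = v s + v t
  mem : ∀ s, s ≠ 0 → (s ∈ V ↔ 0 ≤ v s)
  uni : ∃ π, π ≠ 0 ∧ v π = 1

lemma dv_val {K : Type} [Field K] (V : Subring K) (π : K) (h : IsDV V π) : ∃ v, HasVal V v := by
  obtain ⟨hπ, hπi, hk⟩ := h
  have hπ0 : π ≠ 0 := by
    rintro rfl
    apply hπi; rw [inv_zero]; exact V.zero_mem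
  have hpos : ∀ n : ℤ, π ^ n ∈ V → 0 ≤ n := by
    intro n hn
    by_contra hlt
    push Not at hlt
    apply hπi
    obtain ⟨m, hm⟩ := Int.eq_ofNat_of_zero_le (show 0 ≤ -1 - n by omega)
    have : π⁻¹ = π ^ n * π ^ m := by
      rw [← zpow_natCast π m, ← zpow_add₀ hπ0, ← zpow_neg_one]
      congr 1; omega
    rw [this]
    exact V.mul_mem hn (V.pow_mem hπ m)
  have hnn : ∀ n : ℤ, 0 ≤ n → π ^ n ∈ V := by
    intro n hn
    obtain ⟨m, rfl⟩ := Int.eq_ofNat_of_zero_le hn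
    rw [zpow_natCast]
    exact V.pow_mem hπ m
  have key : ∀ s : K, s ≠ 0 → ∃ k : ℤ, s * π ^ (-k) ∈ V ∧ (s * π ^ (-k))⁻¹ ∈ V := by
    intro s hs
    obtain ⟨k, hk⟩ := hk s hs
    exact ⟨-k, by rwa [neg_neg]⟩
  classical
  let v : K → ℤ := fun s => if h : s ≠ 0 then (key s h).choose else 0
  have hv : ∀ s, s ≠ 0 → s * π ^ (-(v s)) ∈ V ∧ (s * π ^ (-(v s)))⁻¹ ∈ V := by
    intro s hs
    have := (key s hs).choose_spec
    simpa only [v, dif_pos hs] using this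
  have hmem : ∀ s, s ≠ 0 → ∀ j : ℤ, (s * π ^ j ∈ V ↔ 0 ≤ v s + j) := by
    intro s hs j
    constructor
    · intro h
      have h2 := V.mul_mem h (hv s hs).2
      have h3 : s * π ^ j * (s * π ^ (-(v s)))⁻¹ = π ^ (v s + j) := by
        rw [mul_inv, ← zpow_neg, neg_neg, zpow_add₀ hπ0]
        field_simp
      rw [h3] at h2
      exact hpos _ h2
    · intro h
      have h2 := V.mul_mem (hv s hs).1 (hnn _ h)
      have h3 : s * π ^ (-(v s)) * π ^ (v s + j) = s * π ^ j := by
        rw [mul_assoc, ← zpow_add₀ hπ0]; congr 2; omega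
      rwa [h3] at h2
  have huniq : ∀ s, s ≠ 0 → ∀ k : ℤ, s * π ^ (-k) ∈ V → (s * π ^ (-k))⁻¹ ∈ V → v s = k := by
    intro s hs k h1 h2
    have h3 := (hmem s hs (-k)).1 h1
    have h4 := V.mul_mem (hv s hs).1 h2
    have h5 : s * π ^ (-(v s)) * (s * π ^ (-k))⁻¹ = π ^ (k - v s) := by
      rw [mul_inv, ← zpow_neg, neg_neg, sub_eq_add_neg, add_comm k, zpow_add₀ hπ0]
      field_simp
    rw [h5] at h4
    have := hpos _ h4
    omega
  refine ⟨v, ?_, ?_, π, hπ0, ?_⟩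
  · intro s t hs ht
    apply huniq _ (mul_ne_zero hs ht)
    · have := V.mul_mem (hv s hs).1 (hv t ht).1
      have e : s * π ^ (-(v s)) * (t * π ^ (-(v t))) = s * t * π ^ (-(v s + v t)) := by
        rw [neg_add, zpow_add₀ hπ0]; ring
      rwa [e] at this
    · have := V.mul_mem (hv s hs).2 (hv t ht).2
      have e : (s * π ^ (-(v s)))⁻¹ * (t * π ^ (-(v t)))⁻¹ = (s * t * π ^ (-(v s + v t)))⁻¹ := by
        rw [neg_add, zpow_add₀ hπ0, ← mul_inv]; congr 1; ring
      rwa [e] at this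
  · intro s hs
    have := hmem s hs 0
    simpa using this
  · apply huniq π hπ0 1
    · rw [zpow_neg_one, mul_inv_cancel₀ hπ0]; exact V.one_mem
    · rw [zpow_neg_one, mul_inv_cancel₀ hπ0, inv_one]; exact V.one_mem

namespace HasVal
variable {K : Type} [Field K] {V V' : Subring K} {v v' : K → ℤ}

lemma one (h : HasVal V v) : v 1 = 0 := by
  have := h.mul 1 1 one_ne_zero one_ne_zero
  rw [one_mul] at this; omega

lemma inv (h : HasVal V v) (s : K) (hs : s ≠ 0) : v s⁻¹ = - v s := by
  have := h.mul s s⁻¹ hs (inv_ne_zero hs)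
  rw [mul_inv_cancel₀ hs, h.one] at this; omega

lemma div (h : HasVal V v) (s t : K) (hs : s ≠ 0) (ht : t ≠ 0) : v (s / t) = v s - v t := by
  rw [div_eq_mul_inv, h.mul _ _ hs (inv_ne_zero ht), h.inv t ht]; ring

lemma pow (h : HasVal V v) (s : K) (hs : s ≠ 0) (n : ℕ) : v (s ^ n) = n * v s := by
  induction n with
  | zero => simp [h.one]
  | succ n ih => rw [pow_succ, h.mul _ _ (pow_ne_zero n hs) hs, ih]; push_cast; ring

lemma zpow (h : HasVal V v) (s : K) (hs : s ≠ 0) (n : ℤ) : v (s ^ n) = n * v s := by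
  obtain ⟨m, rfl | rfl⟩ := n.eq_nat_or_neg
  · rw [zpow_natCast, h.pow s hs]
  · rw [zpow_neg, zpow_natCast, h.inv _ (pow_ne_zero m hs), h.pow s hs]; ring

lemma int (h : HasVal V v) {C : Type} [CommRing C] [Algebra C K] (hC : ∀ c : C, algebraMap C K c ∈ V)
    (s : K) (hs : s ∈ integralClosure C K) : s ∈ V := by
  let W : ValuationSubring K := { V with
    mem_or_inv_mem' := by
      intro s
      by_cases hs : s = 0
      · left; rw [hs]; exact V.zero_mem
      · rcases le_total 0 (v s) with h1 | h1
        · left; exact (h.mem s hs).2 h1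
        · right; refine (h.mem _ (inv_ne_zero hs)).2 ?_
          rw [h.inv s hs]; omega }
  have hW : IsIntegral W s := by
    obtain ⟨f, hf, h3⟩ := hs
    let i : C →+* W := (algebraMap C K).codRestrict W hC
    refine ⟨f.map i, hf.map i, ?_⟩
    rw [Polynomial.eval₂_map]
    exact h3
  obtain ⟨y, hy⟩ := (IsIntegrallyClosed.isIntegral_iff (R := W) (K := K)).1 hW
  rw [← hy]
  exact y.2

lemma eq_of_le (h : HasVal V v) (h' : HasVal V' v') (hle : V ≤ V') : V = V' := by
  apply le_antisymm hle
  obtain ⟨π, hπ0, hπ⟩ := h.uni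
  obtain ⟨ρ, hρ0, hρ⟩ := h'.uni
  have hk : ∀ s, s ≠ 0 → v' s = v s * v' π := by
    intro s hs
    have hu0 : s * π ^ (-(v s)) ≠ 0 := mul_ne_zero hs (zpow_ne_zero _ hπ0)
    have h1 : v (s * π ^ (-(v s))) = 0 := by
      rw [h.mul _ _ hs (zpow_ne_zero _ hπ0), h.zpow _ hπ0, hπ]; ring
    have h2 : 0 ≤ v' (s * π ^ (-(v s))) := (h'.mem _ hu0).1 (hle ((h.mem _ hu0).2 h1.ge))
    have h3 : 0 ≤ v' (s * π ^ (-(v s)))⁻¹ := by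
      refine (h'.mem _ (inv_ne_zero hu0)).1 (hle ((h.mem _ (inv_ne_zero hu0)).2 ?_))
      rw [h.inv _ hu0]; omega
    rw [h'.inv _ hu0] at h3
    have h4 : v' (s * π ^ (-(v s))) = v' s + -(v s) * v' π := by
      rw [h'.mul _ _ hs (zpow_ne_zero _ hπ0), h'.zpow _ hπ0]
    nlinarith
  have hp : 0 ≤ v' π := (h'.mem _ hπ0).1 (hle ((h.mem _ hπ0).2 (by omega)))
  have h1 := hk ρ hρ0
  rw [hρ] at h1
  have h2 : v' π = 1 := Int.eq_one_of_mul_eq_one_left hp h1.symm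
  intro s hs
  by_cases hs0 : s = 0
  · rw [hs0]; exact V.zero_mem
  · rw [h.mem s hs0]
    have := (h'.mem s hs0).1 hs
    rw [hk s hs0, h2, mul_one] at this
    exact this

end HasVal

section
variable {C K : Type} [CommRing C] [IsDomain C] [Field K] [Algebra C K] [IsFractionRing C K]

lemma dv_sep (x : C) (hx0 : x ≠ 0) (V V' : Subring K) (v v' : K → ℤ) (hV : GoodV x V) (hV' : GoodV x V')
    (h : HasVal V v) (h' : HasVal V' v') (hne : V ≠ V') :
    ∃ z ∈ integralClosure C K, z ≠ 0 ∧ v z = 0 ∧ z / algebraMap C K x ∈ V' := by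
  have hxK : algebraMap C K x ≠ 0 := by
    intro h; apply hx0; exact IsFractionRing.injective C K (by rw [h, map_zero])
  have h1 : ∃ z ∈ integralClosure C K, z ≠ 0 ∧ v z = 0 ∧ 1 ≤ v' z := by
    by_contra hcon
    push Not at hcon
    apply hne
    apply h.eq_of_le h'
    intro s hs
    by_cases hs0 : s = 0
    · rw [hs0]; exact V'.zero_mem
    obtain ⟨t, ht, ht0, hti, hts⟩ := hV.loc s hs
    have e1 := (h.mem t ht0).1 (h.int hV.alg t ht)
    have e2 := (h.mem _ (inv_ne_zero ht0)).1 hti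
    rw [h.inv t ht0] at e2
    have e3 := hcon t ht ht0 (by omega)
    have e4 := (h'.mem _ (mul_ne_zero ht0 hs0)).1 (h'.int hV'.alg _ hts)
    rw [h'.mul _ _ ht0 hs0] at e4
    rw [h'.mem s hs0]; omega
  obtain ⟨z, hz, hz0, hvz, hvz'⟩ := h1
  have hx1 : 0 ≤ v' (algebraMap C K x) := (h'.mem _ hxK).1 (hV'.alg x)
  refine ⟨z ^ (v' (algebraMap C K x)).toNat, Subalgebra.pow_mem _ hz _, pow_ne_zero _ hz0, ?_, ?_⟩
  · rw [h.pow _ hz0, hvz, mul_zero]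
  · rw [h'.mem _ (div_ne_zero (pow_ne_zero _ hz0) hxK), h'.div _ _ (pow_ne_zero _ hz0) hxK, h'.pow _ hz0,
      Int.toNat_of_nonneg hx1]
    nlinarith

lemma dv_sep_all (x : C) (hx0 : x ≠ 0) (F : Set (Subring K)) (hF : F.Finite) (V : Subring K) (v : K → ℤ)
    (hV : GoodV x V) (h : HasVal V v) (hG : ∀ V' ∈ F, GoodV x V') :
    ∃ z ∈ integralClosure C K, z ≠ 0 ∧ v z = 0 ∧ ∀ V' ∈ F, V' ≠ V → z / algebraMap C K x ∈ V' := by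
  induction F, hF using Set.Finite.induction_on with
  | empty => exact ⟨1, Subalgebra.one_mem _, one_ne_zero, h.one, by simp⟩
  | @insert W F _ _ ih =>
    obtain ⟨z, hz, hz0, hvz, hz'⟩ := ih (fun V' hV' => hG V' (Set.mem_insert_of_mem _ hV'))
    by_cases hW : W = V
    · refine ⟨z, hz, hz0, hvz, ?_⟩
      rintro V' (rfl | hV') hne
      · exact absurd hW hne
      · exact hz' V' hV' hne
    · have hGW := hG W (Set.mem_insert _ _)
      obtain ⟨π, hπ⟩ := hGW.dv
      obtain ⟨w, hw⟩ := dv_val W π hπ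
      obtain ⟨y, hy, hy0, hvy, hyx⟩ := dv_sep x hx0 V W v w hV hGW h hw (Ne.symm hW)
      refine ⟨z * y, Subalgebra.mul_mem _ hz hy, mul_ne_zero hz0 hy0, ?_, ?_⟩
      · rw [h.mul _ _ hz0 hy0]; omega
      · rintro V' (rfl | hV') hne
        · rw [mul_div_assoc]
          exact V'.mul_mem (hw.int hGW.alg z hz) hyx
        · rw [mul_comm, mul_div_assoc]
          have hG' := hG V' (Set.mem_insert_of_mem _ hV')
          obtain ⟨π', hπ'⟩ := hG'.dv
          obtain ⟨w', hw'⟩ := dv_val V' π' hπ'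
          exact V'.mul_mem (hw'.int hG'.alg y hy) (hz' V' hV' hne)

end

section
variable {A C K : Type} [CommRing A] [IsLocalRing A] [IsNoetherianRing A]
    [IsPrecomplete (maximalIdeal A) A]
    [CommRing C] [IsDomain C] [Field K] [Algebra C K] [IsFractionRing C K] [Algebra A C]
    [Module.Finite A C] [Algebra A K] [IsScalarTower A C K]

/-- The filtration ideals of a valuation. -/
def Jv (C : Type) {K : Type} [CommRing C] [Field K] [Algebra C K] (V : Subring K)
    (hCV : ∀ s ∈ integralClosure C K, s ∈ V) (π : K) (j : ℕ) :
    Ideal (integralClosure C K) where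
  carrier := {b | (b : K) / π ^ j ∈ V}
  add_mem' := by
    intro a b ha hb
    have := V.add_mem ha hb
    rw [← add_div] at this
    exact this
  zero_mem' := by
    simp [V.zero_mem]
  smul_mem' := by
    intro c b hb
    have := V.mul_mem (hCV c c.2) hb
    rw [← mul_div_assoc] at this
    exact this

lemma jv_mem (V : Subring K) (hCV : ∀ s ∈ integralClosure C K, s ∈ V) (π : K) (j : ℕ)
    (b : integralClosure C K) : b ∈ Jv C V hCV π j ↔ (b : K) / π ^ j ∈ V := Iff.rfl

lemma f3_per (a0 : A) (x : C) (hx : algebraMap A C a0 = x) (hx0 : x ≠ 0)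
    (IH : ∀ (B : Type) [CommRing B] [IsDomain B] [Algebra A B], Algebra.IsIntegral A B →
      (∃ S : Finset B, ∀ b : B, ∃ a ∈ Algebra.adjoin A (S : Set B), a ≠ 0 ∧ a * b ∈ Algebra.adjoin A (S : Set B)) →
      RingHom.ker (algebraMap A C) < RingHom.ker (algebraMap A B) → Module.Finite A B)
    (F : Set (Subring K)) (hF : F.Finite) (hG : ∀ V ∈ F, GoodV x V)
    (hint : ∀ s : K, x • s ∈ integralClosure C K → (∀ V ∈ F, s ∈ V) → s ∈ integralClosure C K)
    (V : Subring K) (hV : V ∈ F) :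
    ∃ J : Submodule A (integralClosure C K), Module.Finite A (integralClosure C K ⧸ J) ∧
      ∀ b ∈ J, (b : K) / algebraMap C K x ∈ V := by
  have hxK : algebraMap C K x ≠ 0 := by
    intro h; apply hx0; exact IsFractionRing.injective C K (by rw [h, map_zero])
  have hGV := hG V hV
  obtain ⟨ρ, hρ⟩ := hGV.dv
  obtain ⟨v, hv⟩ := dv_val V ρ hρ
  have hCV : ∀ s ∈ integralClosure C K, s ∈ V := hv.int hGV.alg
  obtain ⟨z, hz, hz0, hvz, hzx⟩ := dv_sep_all x hx0 F hF V v hGV hv hG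
  obtain ⟨π, hπB, hπ0, hπ⟩ : ∃ π ∈ integralClosure C K, π ≠ 0 ∧ v π = 1 := by
    obtain ⟨π, hπ0, hπ⟩ := hv.uni
    obtain ⟨t, ht, ht0, hti, hts⟩ := hGV.loc π ((hv.mem π hπ0).2 (by omega))
    have e1 := (hv.mem t ht0).1 (hCV t ht)
    have e2 := (hv.mem _ (inv_ne_zero ht0)).1 hti
    rw [hv.inv t ht0] at e2
    refine ⟨t * π, hts, mul_ne_zero ht0 hπ0, ?_⟩
    rw [hv.mul _ _ ht0 hπ0]; omega
  have hJ : ∀ (j : ℕ) (b : integralClosure C K), (b : K) ≠ 0 → (b ∈ Jv C V hCV π j ↔ (j : ℤ) ≤ v b) := by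
    intro j b hb
    rw [jv_mem, hv.mem _ (div_ne_zero hb (pow_ne_zero _ hπ0)), hv.div _ _ hb (pow_ne_zero _ hπ0),
      hv.pow _ hπ0, hπ]
    constructor <;> intro h <;> omega
  have hb0 : ∀ b : integralClosure C K, b ≠ 0 → (b : K) ≠ 0 := fun b hb h => hb (Subtype.ext h)
  have hnn : ∀ b : integralClosure C K, b ≠ 0 → 0 ≤ v b := fun b hb =>
    (hv.mem _ (hb0 b hb)).1 (hCV b b.2)
  have hxv : 1 ≤ v (algebraMap C K x) := by
    by_contra hlt
    apply hGV.xnon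
    rw [hv.mem _ (inv_ne_zero hxK), hv.inv _ hxK]
    omega
  -- the residue field
  have hq : (Jv C V hCV π 1).IsPrime := by
    refine ⟨?_, ?_⟩
    · intro h
      have h1 : (1 : integralClosure C K) ∈ Jv C V hCV π 1 := by rw [h]; trivial
      rw [hJ 1 1 one_ne_zero] at h1
      have : v ((1 : integralClosure C K) : K) = 0 := hv.one
      omega
    · intro a b hab
      by_cases ha : a = 0
      · left; rw [ha]; exact Ideal.zero_mem _
      by_cases hb : b = 0
      · right; rw [hb]; exact Ideal.zero_mem _
      rw [hJ 1 _ (hb0 _ (mul_ne_zero ha hb))] at hab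
      rw [hJ 1 a (hb0 _ ha), hJ 1 b (hb0 _ hb)]
      have : v ((a * b : integralClosure C K) : K) = v a + v b := hv.mul _ _ (hb0 _ ha) (hb0 _ hb)
      have := hnn a ha
      have := hnn b hb
      omega
  have hQ : Module.Finite A (integralClosure C K ⧸ Jv C V hCV π 1) := by
    have hAB : Algebra.IsIntegral A (integralClosure C K) := by
      have : Algebra.IsIntegral C (integralClosure C K) := inferInstance
      have : Algebra.IsIntegral A C := inferInstance
      exact Algebra.IsIntegral.trans C
    refine IH _ ?_ ?_ ?_
    · infer_instance
    · classical
      obtain ⟨S, hSB, hS⟩ := hGV.res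
      obtain ⟨T, hT⟩ := (Module.Finite.fg_top : (⊤ : Submodule A C).FG)
      let mk : integralClosure C K →+* (integralClosure C K ⧸ Jv C V hCV π 1) := Ideal.Quotient.mk _
      let S' : Finset (integralClosure C K ⧸ Jv C V hCV π 1) :=
        (S.attach.image fun s => mk ⟨s.1, hSB s.1 s.2⟩) ∪ T.image fun t => mk (algebraMap C _ t)
      have hc : ∀ c : C, mk (algebraMap C _ c) ∈ Algebra.adjoin A (S' : Set (integralClosure C K ⧸ Jv C V hCV π 1)) := by
        intro c
        have hcT : c ∈ Submodule.span A (T : Set C) := by rw [hT]; trivial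
        induction hcT using Submodule.span_induction with
        | mem t ht =>
          apply Algebra.subset_adjoin
          simp only [S', Finset.coe_union, Finset.coe_image]
          right
          exact ⟨t, ht, rfl⟩
        | zero => rw [map_zero, map_zero]; exact Subalgebra.zero_mem _
        | add a b _ _ ha hb => rw [map_add, map_add]; exact Subalgebra.add_mem _ ha hb
        | smul r a _ ha =>
          have : mk (algebraMap C _ (r • a)) = r • mk (algebraMap C _ a) := by
            rw [Algebra.algebraMap_eq_smul_one, smul_assoc, ← Algebra.algebraMap_eq_smul_one]
            rfl
          rw [this]
          exact Subalgebra.smul_mem _ ha r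
      have hy : ∀ y ∈ Submodule.span C (S : Set K), ∃ hy : y ∈ integralClosure C K,
          mk ⟨y, hy⟩ ∈ Algebra.adjoin A (S' : Set (integralClosure C K ⧸ Jv C V hCV π 1)) := by
        intro y hy
        induction hy using Submodule.span_induction with
        | mem s hs =>
          refine ⟨hSB s hs, ?_⟩
          apply Algebra.subset_adjoin
          simp only [S', Finset.coe_union, Finset.coe_image]
          left
          exact ⟨⟨s, hs⟩, Finset.mem_attach _ _, rfl⟩
        | zero => exact ⟨Subalgebra.zero_mem _, by
            have : mk ⟨0, Subalgebra.zero_mem _⟩ = 0 := map_zero mk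
            rw [this]; exact Subalgebra.zero_mem _⟩
        | add a b _ _ ha hb =>
          obtain ⟨ha1, ha⟩ := ha
          obtain ⟨hb1, hb⟩ := hb
          refine ⟨Subalgebra.add_mem _ ha1 hb1, ?_⟩
          exact Subalgebra.add_mem _ ha hb
        | smul r a _ ha =>
          obtain ⟨ha1, ha⟩ := ha
          refine ⟨Subalgebra.smul_mem _ ha1 r, ?_⟩
          have : mk ⟨r • a, Subalgebra.smul_mem _ ha1 r⟩ = mk (algebraMap C _ r) * mk ⟨a, ha1⟩ := by
            rw [← map_mul]
            congr 1
            apply Subtype.ext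
            change r • a = algebraMap C K r * a
            rw [Algebra.smul_def]
          rw [this]
          exact Subalgebra.mul_mem _ (hc r) ha
      refine ⟨S', fun bb => ?_⟩
      obtain ⟨b, rfl⟩ := Ideal.Quotient.mk_surjective bb
      obtain ⟨a, ha0, hai, y, hyS, hyv⟩ := hS b (hCV b b.2)
      obtain ⟨hyB, hyA⟩ := hy y hyS
      refine ⟨mk (algebraMap C _ a), hc a, ?_, ?_⟩
      · intro h0
        have h1 := Ideal.Quotient.eq_zero_iff_mem.1 h0
        rw [hJ 1 _ ha0] at h1
        have h2 := (hv.mem _ (inv_ne_zero ha0)).1 hai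
        rw [hv.inv _ ha0] at h2
        have h3 : ((1 : ℕ) : ℤ) ≤ v (algebraMap C K a) := h1
        omega
      · have : mk (algebraMap C _ a) * Ideal.Quotient.mk _ b = mk ⟨y, hyB⟩ := by
          change mk _ * mk b = _
          rw [← map_mul]
          refine Ideal.Quotient.eq.2 ?_
          by_cases h0 : algebraMap C _ a * b - ⟨y, hyB⟩ = (0 : integralClosure C K)
          · rw [h0]; exact Ideal.zero_mem _
          · rw [hJ 1 _ (hb0 _ h0)]
            have h1 : ((algebraMap C _ a * b - ⟨y, hyB⟩ : integralClosure C K) : K) = a • (b : K) - y := by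
              rw [Algebra.smul_def]; rfl
            have h2 := hb0 _ h0
            rw [h1] at h2
            have h3 := hyv h2
            rw [hv.mem _ (inv_ne_zero h2), hv.inv _ h2] at h3
            rw [h1]
            push_cast
            omega
        rw [this]
        exact hyA
    · rw [SetLike.lt_iff_le_and_exists]
      refine ⟨?_, a0, ?_, ?_⟩
      · intro r hr
        rw [RingHom.mem_ker] at hr ⊢
        rw [IsScalarTower.algebraMap_apply A C, hr, map_zero]
      · rw [RingHom.mem_ker, IsScalarTower.algebraMap_apply A C, hx]
        refine Ideal.Quotient.eq_zero_iff_mem.2 ?_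
        rw [hJ 1 _ hxK]
        exact hxv
      · rw [RingHom.mem_ker, hx]; exact hx0
  have hfin : ∀ j : ℕ, (j : ℤ) ≤ v (algebraMap C K x) →
      Module.Finite A (integralClosure C K ⧸ (Jv C V hCV π j).restrictScalars A) := by
    intro j
    induction j with
    | zero =>
      intro _
      have : (Jv C V hCV π 0).restrictScalars A = ⊤ := by
        rw [eq_top_iff]
        intro b _
        change (b : K) / π ^ 0 ∈ V
        rw [pow_zero, div_one]
        exact hCV b b.2
      rw [this]
      infer_instance
    | succ j ih =>
      intro hj
      have huB : ∀ b ∈ Jv C V hCV π j, z * π ^ ((v (algebraMap C K x)).toNat - j) / algebraMap C K x * (b : K) ∈ integralClosure C K := by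
        intro b hb
        apply hint
        · rw [Algebra.smul_def]
          have : algebraMap C K x * (z * π ^ ((v (algebraMap C K x)).toNat - j) / algebraMap C K x * (b : K)) =
            z * π ^ ((v (algebraMap C K x)).toNat - j) * b := by field_simp
          rw [this]
          exact Subalgebra.mul_mem _ (Subalgebra.mul_mem _ hz (Subalgebra.pow_mem _ hπB _)) b.2
        · intro V' hV'
          by_cases hVV : V' = V
          · rw [hVV]
            by_cases hb1 : b = 0
            · rw [hb1]; simp [V.zero_mem]
            · rw [hv.mem _ (mul_ne_zero (div_ne_zero (mul_ne_zero hz0 (pow_ne_zero _ hπ0)) hxK) (hb0 b hb1)), hv.mul _ _ (div_ne_zero (mul_ne_zero hz0 (pow_ne_zero _ hπ0)) hxK) (hb0 b hb1), hv.div _ _ (mul_ne_zero hz0 (pow_ne_zero _ hπ0)) hxK, hv.mul _ _ hz0 (pow_ne_zero _ hπ0), hv.pow _ hπ0, hπ, hvz]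
              have := (hJ j b (hb0 b hb1)).1 hb
              omega
          · have hG' := hG V' hV'
            obtain ⟨π', hπ'⟩ := hG'.dv
            obtain ⟨w', hw'⟩ := dv_val V' π' hπ'
            have e : z * π ^ ((v (algebraMap C K x)).toNat - j) / algebraMap C K x * (b : K) =
              z / algebraMap C K x * (π ^ ((v (algebraMap C K x)).toNat - j) * (b : K)) := by ring
            rw [e]
            refine V'.mul_mem (hzx V' hV' hVV) (hw'.int hG'.alg _ ?_)
            exact Subalgebra.mul_mem _ (Subalgebra.pow_mem _ hπB _) b.2
      let φ0 : (Jv C V hCV π j).restrictScalars A →ₗ[A] integralClosure C K :=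
        { toFun := fun b => ⟨_, huB b.1 b.2⟩
          map_add' := by
            intro a b
            apply Subtype.ext
            exact mul_add _ _ _
          map_smul' := by
            intro r a
            apply Subtype.ext
            exact mul_smul_comm _ _ _ }
      refine cofg_step _ _ (ih (by push_cast at hj; omega))
        (((Ideal.Quotient.mkₐ A (Jv C V hCV π 1)).toLinearMap).comp φ0) ?_
      intro b hb
      change (b : integralClosure C K) ∈ Jv C V hCV π (j+1)
      by_cases hb1 : (b : integralClosure C K) = 0
      · rw [hb1]; exact Ideal.zero_mem _
      have h1 : φ0 b ∈ Jv C V hCV π 1 := Ideal.Quotient.eq_zero_iff_mem.1 hb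
      have hbK := hb0 _ hb1
      have h2 : ((φ0 b : integralClosure C K) : K) ≠ 0 :=
        mul_ne_zero (div_ne_zero (mul_ne_zero hz0 (pow_ne_zero _ hπ0)) hxK) hbK
      rw [hJ 1 _ h2] at h1
      have h3 : v (φ0 b : integralClosure C K) = v (z * π ^ ((v (algebraMap C K x)).toNat - j) / algebraMap C K x * ((b : integralClosure C K) : K)) := rfl
      rw [hv.mul _ _ (div_ne_zero (mul_ne_zero hz0 (pow_ne_zero _ hπ0)) hxK) hbK, hv.div _ _ (mul_ne_zero hz0 (pow_ne_zero _ hπ0)) hxK, hv.mul _ _ hz0 (pow_ne_zero _ hπ0), hv.pow _ hπ0, hπ, hvz] at h3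
      rw [hJ _ _ hbK]
      push_cast at *
      omega
  refine ⟨(Jv C V hCV π (v (algebraMap C K x)).toNat).restrictScalars A, hfin _ (by omega), ?_⟩
  intro b hb
  by_cases hb1 : b = 0
  · rw [hb1]; simp [V.zero_mem]
  have hb2 := (hJ _ b (hb0 b hb1)).1 hb
  rw [hv.mem _ (div_ne_zero (hb0 b hb1) hxK), hv.div _ _ (hb0 b hb1) hxK]
  omega
end

section
variable {A C K : Type} [CommRing A] [IsLocalRing A] [IsNoetherianRing A]
    [IsPrecomplete (maximalIdeal A) A]
    [CommRing C] [IsDomain C] [Field K] [Algebra C K] [IsFractionRing C K] [Algebra A C]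
    [Module.Finite A C] [Algebra A K] [IsScalarTower A C K]

lemma f3_core (a0 : A) (ha0 : a0 ∈ maximalIdeal A) (x : C) (hx : algebraMap A C a0 = x) (hx0 : x ≠ 0)
    (IH : ∀ (B : Type) [CommRing B] [IsDomain B] [Algebra A B], Algebra.IsIntegral A B →
      (∃ S : Finset B, ∀ b : B, ∃ a ∈ Algebra.adjoin A (S : Set B), a ≠ 0 ∧ a * b ∈ Algebra.adjoin A (S : Set B)) →
      RingHom.ker (algebraMap A C) < RingHom.ker (algebraMap A B) → Module.Finite A B) :
    Module.Finite A (integralClosure C K) := by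
  have hxK : algebraMap C K x ≠ 0 := by
    intro h; apply hx0; exact IsFractionRing.injective C K (by rw [h, map_zero])
  have : IsNoetherianRing C := IsNoetherianRing.of_finite A C
  obtain ⟨F, hF, hG, hint⟩ := f2 (K := K) x hx0
  have h1 := fun V hV => f3_per a0 x hx hx0 IH F hF hG hint V hV
  have h2 : ∀ F' : Set (Subring K), F'.Finite → F' ⊆ F →
      ∃ J : Submodule A (integralClosure C K), Module.Finite A (integralClosure C K ⧸ J) ∧
      ∀ b ∈ J, ∀ V ∈ F', (b : K) / algebraMap C K x ∈ V := by
    intro F' hF'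
    induction F', hF' using Set.Finite.induction_on with
    | empty =>
      intro _
      exact ⟨⊤, inferInstance, fun _ _ V hV => absurd hV (Set.notMem_empty V)⟩
    | @insert W F' _ _ ih =>
      intro hsub
      obtain ⟨J, hJ, hJV⟩ := ih ((Set.subset_insert _ _).trans hsub)
      obtain ⟨J', hJ', hJV'⟩ := h1 W (hsub (Set.mem_insert _ _))
      refine ⟨J ⊓ J', cofg_inf J J' hJ hJ', ?_⟩
      rintro b ⟨hb, hb'⟩ V (rfl | hV)
      · exact hJV' b hb'
      · exact hJV b hb V hV
  obtain ⟨J, hJ, hJV⟩ := h2 F hF le_rfl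
  have hsm : ∀ (k : ℕ) (z : integralClosure C K), ((a0 ^ k • z : integralClosure C K) : K) = (algebraMap C K x) ^ k * (z : K) := by
    intro k z
    change a0 ^ k • (z : K) = _
    rw [Algebra.smul_def, map_pow, IsScalarTower.algebraMap_apply A C K, hx]
  have h3 : J ≤ LinearMap.range (LinearMap.lsmul A (integralClosure C K) a0) := by
    intro b hb
    refine ⟨⟨(b : K) / algebraMap C K x, hint _ ?_ (hJV b hb)⟩, ?_⟩
    · rw [Algebra.smul_def, mul_div_cancel₀ _ hxK]
      exact b.2
    · apply Subtype.ext
      have := hsm 1 ⟨(b : K) / algebraMap C K x, hint _ (by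
        rw [Algebra.smul_def, mul_div_cancel₀ _ hxK]
        exact b.2) (hJV b hb)⟩
      rw [pow_one, pow_one] at this
      rw [LinearMap.lsmul_apply, this, mul_div_cancel₀ _ hxK]
  have hne : F.Nonempty := by
    by_contra hcon
    rw [Set.not_nonempty_iff_eq_empty] at hcon
    have hAB : Algebra.IsIntegral A (integralClosure C K) := Algebra.IsIntegral.trans C
    have h4 : (algebraMap C K x)⁻¹ ∈ integralClosure C K := by
      apply hint
      · rw [Algebra.smul_def, mul_inv_cancel₀ hxK]; exact Subalgebra.one_mem _
      · rw [hcon]; intro V hV; exact absurd hV (Set.notMem_empty V)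
    obtain ⟨Q, hQ, hQm⟩ := Ideal.exists_ideal_over_maximal_of_isIntegral (S := integralClosure C K) (maximalIdeal A)
      (le_maximalIdeal (RingHom.ker_ne_top (algebraMap A (integralClosure C K))))
    have h5 : algebraMap A (integralClosure C K) a0 ∈ Q := by
      rw [← Ideal.mem_comap, hQm]; exact ha0
    apply hQ.ne_top
    rw [Ideal.eq_top_iff_one]
    have h6 : (⟨_, h4⟩ : integralClosure C K) * algebraMap A (integralClosure C K) a0 = 1 := by
      apply Subtype.ext
      change (algebraMap C K x)⁻¹ * (algebraMap A K a0) = 1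
      rw [IsScalarTower.algebraMap_apply A C K, hx, inv_mul_cancel₀ hxK]
    rw [← h6]
    exact Ideal.mul_mem_left _ _ h5
  apply fin_complete a0 ha0
  · refine Module.Finite.of_surjective (Submodule.mapQ J (LinearMap.range (LinearMap.lsmul A (integralClosure C K) a0)) LinearMap.id h3) ?_
    intro y
    obtain ⟨y, rfl⟩ := Submodule.mkQ_surjective _ y
    exact ⟨Submodule.Quotient.mk y, rfl⟩
  · intro y hy
    by_contra hy0
    obtain ⟨V, hV⟩ := hne
    have hGV := hG V hV
    obtain ⟨ρ, hρ⟩ := hGV.dv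
    obtain ⟨v, hv⟩ := dv_val V ρ hρ
    have hxv : 1 ≤ v (algebraMap C K x) := by
      by_contra hlt
      apply hGV.xnon
      rw [hv.mem _ (inv_ne_zero hxK), hv.inv _ hxK]
      omega
    have hyK : (y : K) ≠ 0 := fun h => hy0 (Subtype.ext h)
    obtain ⟨z, hz⟩ := hy ((v y).toNat + 1)
    have hzK := hsm ((v y).toNat + 1) z
    rw [← hz] at hzK
    have hz0 : (z : K) ≠ 0 := by
      intro h; rw [h, mul_zero] at hzK; exact hyK hzK
    have h7 : v y = ((v y).toNat + 1 : ℕ) * v (algebraMap C K x) + v z := by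
      rw [← hv.pow _ hxK, ← hv.mul _ _ (pow_ne_zero _ hxK) hz0, ← hzK]
    have h8 := (hv.mem _ hz0).1 (hv.int hGV.alg z z.2)
    have h9 := (hv.mem _ hyK).1 (hv.int hGV.alg y y.2)
    push_cast at h7
    rw [Int.toNat_of_nonneg h9] at h7
    nlinarith
end

lemma f3 {A : Type} [CommRing A] [IsLocalRing A] [IsNoetherianRing A]
    [IsPrecomplete (maximalIdeal A) A] (I : Ideal A) :
    ∀ (B : Type) [CommRing B] [IsDomain B] [Algebra A B], RingHom.ker (algebraMap A B) = I →
      Algebra.IsIntegral A B →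
      (∃ S : Finset B, ∀ b : B, ∃ a ∈ Algebra.adjoin A (S : Set B), a ≠ 0 ∧ a * b ∈ Algebra.adjoin A (S : Set B)) →
      Module.Finite A B := by
  induction I using WellFoundedGT.induction with
  | ind I IH =>
  intro B _ _ _ hI hint hS
  obtain ⟨S, hS⟩ := hS
  let C := Algebra.adjoin A (S : Set B)
  have hC : Module.Finite A C := by
    have := fg_adjoin_of_finite (R := A) (S.finite_toSet) (fun x _ => hint.isIntegral x)
    exact Module.Finite.iff_fg.2 this
  have hkC : RingHom.ker (algebraMap A C) = I := by
    rw [← hI]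
    ext a
    rw [RingHom.mem_ker, RingHom.mem_ker, IsScalarTower.algebraMap_apply A C B]
    constructor
    · intro h; rw [h, map_zero]
    · intro h; exact Subtype.ext h
  by_cases hm : ∀ a ∈ maximalIdeal A, algebraMap A C a = 0
  · have hf : IsField C := by
      have : (⊥ : Ideal C).IsMaximal := by
        refine Ideal.isMaximal_of_isIntegral_of_isMaximal_comap (R := A) ⊥ ?_
        have : Ideal.comap (algebraMap A C) ⊥ = maximalIdeal A := by
          apply le_antisymm
          · exact le_maximalIdeal (RingHom.ker_ne_top (algebraMap A C))
          · intro a ha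
            exact hm a ha
        rw [this]; infer_instance
      exact Ring.isField_iff_maximal_bot.2 this
    refine Module.Finite.of_surjective C.val.toLinearMap ?_
    intro b
    obtain ⟨a, ha, ha0, hab⟩ := hS b
    obtain ⟨a', ha'⟩ := hf.mul_inv_cancel (a := (⟨a, ha⟩ : C)) (fun h => ha0 (congrArg Subtype.val h))
    refine ⟨a' * ⟨a * b, hab⟩, ?_⟩
    have h1 : a * (a' : B) = 1 := congrArg Subtype.val ha'
    change (a' : B) * (a * b) = b
    rw [← mul_assoc, mul_comm (a' : B), h1, one_mul]
  · push Not at hm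
    obtain ⟨a0, ha0, hx0⟩ := hm
    let K := FractionRing B
    have hinj : Function.Injective (algebraMap C K) := by
      rw [IsScalarTower.algebraMap_eq C B K]
      exact (IsFractionRing.injective B K).comp Subtype.val_injective
    have hfr : IsFractionRing C K := by
      have : FaithfulSMul C K := (faithfulSMul_iff_algebraMap_injective C K).2 hinj
      refine IsFractionRing.of_field C K ?_
      intro z
      obtain ⟨b, d, hd, rfl⟩ := IsFractionRing.div_surjective (A := B) z
      obtain ⟨a, ha, ha0, hab⟩ := hS b
      obtain ⟨a', ha', ha0', hab'⟩ := hS d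
      have hd0 : algebraMap B K d ≠ 0 := by
        simpa using nonZeroDivisors.ne_zero hd
      have h1 : algebraMap B K a ≠ 0 := by simpa using ha0
      have h2 : algebraMap B K a' ≠ 0 := by simpa using ha0'
      refine ⟨⟨a', ha'⟩ * ⟨_, hab⟩, ⟨a, ha⟩ * ⟨_, hab'⟩, ?_⟩
      change algebraMap B K b / algebraMap B K d = algebraMap B K (a' * (a * b)) / algebraMap B K (a * (a' * d))
      have h3 : algebraMap B K (a * (a' * d)) ≠ 0 := by
        rw [map_mul, map_mul]
        exact mul_ne_zero h1 (mul_ne_zero h2 hd0)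
      rw [div_eq_div_iff hd0 h3, ← map_mul, ← map_mul]
      congr 1
      ring
    have hfin : Module.Finite A (integralClosure C K) := by
      refine f3_core a0 ha0 _ rfl hx0 ?_
      intro B' _ _ _ hB' hS' hlt
      rw [hkC] at hlt
      exact IH _ hlt B' rfl hB' hS'
    let f : B →ₗ[A] integralClosure C K :=
      { toFun := fun b => ⟨algebraMap B K b, by
          have h1 : IsIntegral A (algebraMap B K b) := (hint.isIntegral b).map (IsScalarTower.toAlgHom A B K)
          exact h1.tower_top⟩
        map_add' := fun a b => Subtype.ext (map_add _ _ _)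
        map_smul' := fun r b => Subtype.ext (by
          change algebraMap B K (r • b) = r • algebraMap B K b
          rw [Algebra.smul_def, map_mul, ← IsScalarTower.algebraMap_apply, ← Algebra.smul_def]) }
    refine Module.Finite.of_injective f ?_
    intro a b hab
    exact IsFractionRing.injective B K (congrArg Subtype.val hab)

lemma noeth_complete {R S : Type} [CommRing R] [CommRing S] [IsNoetherianRing R] (φ : R →+* S)
    (I : Ideal S) (hfg : I.FG) (hc : IsAdicComplete I S)
    (hs : Function.Surjective ((Ideal.Quotient.mk I).comp φ)) : IsNoetherianRing S := by
  obtain ⟨n, a, ha⟩ := Submodule.fg_iff_exists_fin_generating_family.1 hfg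
  let _ : UniformSpace R := ⊥
  have : DiscreteUniformity R := ⟨rfl⟩
  have : DiscreteTopology R := inferInstance
  have : IsUniformAddGroup R := inferInstance
  let _ : TopologicalSpace S := I.adicTopology
  have hI : IsAdic I := rfl
  have : IsTopologicalRing S := I.ringFilterBasis.isTopologicalRing
  let _ : UniformSpace S := IsTopologicalAddGroup.rightUniformSpace S
  have : IsUniformAddGroup S := isUniformAddGroup_of_addCommGroup
  have hcT := hI.isAdicComplete_iff.1 hc
  have : CompleteSpace S := hcT.1
  have : T2Space S := hcT.2
  have : IsLinearTopology S S := I.isLinearTopology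
  have hev : MvPowerSeries.HasEval a := by
    refine ⟨fun s => ?_, ?_⟩
    · change Filter.Tendsto _ _ _
      rw [hI.hasBasis_nhds_zero.tendsto_right_iff]
      intro k _
      filter_upwards [Filter.eventually_ge_atTop k] with m hm
      have : a s ∈ I := by rw [← ha]; exact Submodule.subset_span ⟨s, rfl⟩
      exact Ideal.pow_le_pow_right hm (Ideal.pow_mem_pow this m)
    · rw [Filter.cofinite_eq_bot]; exact Filter.tendsto_bot
  let f : MvPowerSeries (Fin n) R →+* S := MvPowerSeries.eval₂Hom (φ := φ) continuous_of_discreteTopology hev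
  have hfC : ∀ r, f (MvPowerSeries.C r) = φ r := by
    intro r
    simp only [f, MvPowerSeries.coe_eval₂Hom, MvPowerSeries.eval₂_C]
  have hfX : ∀ i, f (MvPowerSeries.X i) = a i := by
    intro r
    simp only [f, MvPowerSeries.coe_eval₂Hom, MvPowerSeries.eval₂_X]
  have hmap : (Ideal.span (Set.range (MvPowerSeries.X : Fin n → MvPowerSeries (Fin n) R))).map f = I := by
    rw [Ideal.map_span, ← Set.range_comp, ← ha]
    have : (f ∘ (MvPowerSeries.X : Fin n → MvPowerSeries (Fin n) R)) = a := funext hfX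
    rw [this]
  have hsurj : Function.Surjective f := by
    have : IsHausdorff ((Ideal.span (Set.range (MvPowerSeries.X : Fin n → MvPowerSeries (Fin n) R))).map f) S := by
      rw [hmap]; infer_instance
    refine surjective_of_mk_map_comp_surjective (I := (Ideal.span (Set.range (MvPowerSeries.X : Fin n → MvPowerSeries (Fin n) R)))) f ?_
    rw [hmap]
    intro y
    obtain ⟨r, hr⟩ := hs y
    refine ⟨MvPowerSeries.C r, ?_⟩
    rw [← hr, RingHom.comp_apply, hfC]; rfl
  exact isNoetherianRing_of_surjective _ _ f hsurj

lemma noeth_compl (R : Type) [CommRing R] [IsLocalRing R] [IsNoetherianRing R] :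
    IsNoetherianRing (AdicCompletion (maximalIdeal R) R) := by
  refine noeth_complete (algebraMap R (AdicCompletion (maximalIdeal R) R)) (maximalIdeal _) ?_ inferInstance ?_
  · rw [AdicCompletion.maximalIdeal_eq_map]
    exact Ideal.FG.map (IsNoetherian.noetherian _) _
  · intro y
    obtain ⟨y, rfl⟩ := residue_surjective y
    obtain ⟨z, hz⟩ := (AdicCompletion.residueField_map_bijective_of_fg (IsNoetherian.noetherian (maximalIdeal R))).2 (residue _ y)
    obtain ⟨r, rfl⟩ := residue_surjective z
    exact ⟨r, hz⟩

lemma descent {R A Q : Type} [CommRing R] [CommRing A] [IsNoetherianRing A] [Algebra R A]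
    [Module.FaithfullyFlat R A] [CommRing Q] [Algebra R Q] [IsFractionRing R Q]
    {ι : Type} [Finite ι] (K : ι → Type) [∀ i, Field (K i)] [∀ i, Algebra A (K i)]
    (hinj : ∀ a : A, (∀ i, algebraMap A (K i) a = 0) → a = 0)
    (hnz : ∀ a ∈ nonZeroDivisors A, ∀ i, algebraMap A (K i) a ≠ 0)
    (hfin : ∀ i, Module.Finite A (integralClosure A (K i))) :
    Module.Finite R (integralClosure R Q) := by
  classical
  have hW : Module.Finite A (integralClosure A (∀ i, K i)) := by
    let f : integralClosure A (∀ i, K i) →ₗ[A] ∀ i, integralClosure A (K i) :=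
      { toFun := fun e i => ⟨(e : ∀ i, K i) i, IsIntegral.map (Pi.evalAlgHom A K i) e.2⟩
        map_add' := fun _ _ => rfl
        map_smul' := fun _ _ => rfl }
    refine Module.Finite.of_injective f ?_
    intro a b hab
    apply Subtype.ext
    funext i
    exact congrArg Subtype.val (congrFun hab i)
  let g : R →+* (∀ i, K i) := (algebraMap A (∀ i, K i)).comp (algebraMap R A)
  have hg : ∀ r : nonZeroDivisors R, IsUnit (g r) := by
    intro r
    rw [Pi.isUnit_iff]
    intro i
    rw [isUnit_iff_ne_zero]
    refine hnz (algebraMap R A r) ?_ i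
    have := Module.Flat.isSMulRegular_of_nonZeroDivisors (M := A) r.2
    rw [mem_nonZeroDivisors_iff_right]
    intro x hx
    apply this
    change (r : R) • x = (r : R) • 0
    rw [Algebra.smul_def, mul_comm, hx, smul_zero]
  let ψ : Q →+* (∀ i, K i) := IsLocalization.lift (M := nonZeroDivisors R) hg
  have hψ : ∀ r, ψ (algebraMap R Q r) = g r := fun r => IsLocalization.lift_eq hg r
  have hψi : ∀ s ∈ integralClosure R Q, ψ s ∈ integralClosure A (∀ i, K i) := by
    intro s hs
    refine IsIntegral.map_of_comp_eq (algebraMap R A) ψ ?_ hs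
    ext1 r
    exact (hψ r).symm
  have hFG : (Submodule.span A (ψ '' (integralClosure R Q : Set Q))).FG := by
    have h1 : Submodule.span A (ψ '' (integralClosure R Q : Set Q)) ≤ Subalgebra.toSubmodule (integralClosure A (∀ i, K i)) := by
      rw [Submodule.span_le]
      rintro _ ⟨s, hs, rfl⟩
      exact hψi s hs
    have : IsNoetherian A (Subalgebra.toSubmodule (integralClosure A (∀ i, K i))) :=
      isNoetherian_of_isNoetherianRing_of_finite A (integralClosure A (∀ i, K i))
    exact (isNoetherian_submodule.1 this) _ h1
  obtain ⟨S', hS', hspan⟩ := (Submodule.fg_span_iff_fg_span_finset_subset _).1 hFG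
  obtain ⟨S, hS, rfl⟩ := Finset.subset_set_image_iff.1 hS'
  have key : Subalgebra.toSubmodule (integralClosure R Q) = Submodule.span R (S : Set Q) := by
    apply le_antisymm
    · intro s hs
      obtain ⟨d, hd⟩ := IsLocalization.exist_integer_multiples_of_finset (nonZeroDivisors R) (insert s S)
      have hdn : IsUnit (algebraMap R Q d) := IsLocalization.map_units Q d
      obtain ⟨b, hb⟩ := hd s (Finset.mem_insert_self _ _)
      have hc : ∀ t : Q, ∃ c : R, t ∈ S → algebraMap R Q c = (d : R) • t := by
        intro t
        by_cases ht : t ∈ S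
        · obtain ⟨c, hc⟩ := hd t (Finset.mem_insert_of_mem ht)
          exact ⟨c, fun _ => hc⟩
        · exact ⟨0, fun h => absurd h ht⟩
      choose c hc using hc
      let I : Ideal R := Ideal.span (c '' (S : Set Q))
      have hbI : b ∈ I := by
        rw [← Ideal.comap_map_eq_self_of_faithfullyFlat (B := A) I, Ideal.mem_comap]
        have h2 : ∀ y ∈ Submodule.span A ((S.image ψ : Finset _) : Set (∀ i, K i)), ∃ α ∈ I.map (algebraMap R A),
            algebraMap A (∀ i, K i) α = g d * y := by
          intro y hy
          induction hy using Submodule.span_induction with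
          | mem y hy =>
            rw [Finset.coe_image] at hy
            obtain ⟨t, ht, rfl⟩ := hy
            refine ⟨algebraMap R A (c t), Ideal.mem_map_of_mem _ (Ideal.subset_span ⟨t, ht, rfl⟩), ?_⟩
            change g (c t) = _
            rw [← hψ, hc t ht, Algebra.smul_def, map_mul, hψ]
          | zero => exact ⟨0, Ideal.zero_mem _, by rw [map_zero, mul_zero]⟩
          | add a b _ _ ha hb =>
            obtain ⟨α, hα, ha⟩ := ha
            obtain ⟨β, hβ, hb⟩ := hb
            exact ⟨α + β, Ideal.add_mem _ hα hβ, by rw [map_add, ha, hb, mul_add]⟩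
          | smul r a _ ha =>
            obtain ⟨α, hα, ha⟩ := ha
            exact ⟨r * α, Ideal.mul_mem_left _ _ hα, by rw [map_mul, ha, Algebra.smul_def]; ring⟩
        obtain ⟨α, hα, hα2⟩ := h2 (ψ s) (by
          rw [← hspan]; exact Submodule.subset_span ⟨s, hs, rfl⟩)
        have h3 : algebraMap A (∀ i, K i) (algebraMap R A b) = algebraMap A (∀ i, K i) α := by
          rw [hα2]
          change g b = _
          rw [← hψ, hb, Algebra.smul_def, map_mul, hψ]
        have h4 : algebraMap R A b = α := by
          rw [← sub_eq_zero]
          apply hinj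
          intro i
          rw [map_sub, sub_eq_zero]
          exact congrFun h3 i
        rw [h4]; exact hα
      have h5 : ∀ r ∈ I, ∃ y ∈ Submodule.span R (S : Set Q), algebraMap R Q r = algebraMap R Q d * y := by
        intro r hr
        induction hr using Submodule.span_induction with
        | mem y hy =>
          obtain ⟨t, ht, rfl⟩ := hy
          exact ⟨t, Submodule.subset_span ht, by rw [hc t ht, Algebra.smul_def]⟩
        | zero => exact ⟨0, Submodule.zero_mem _, by rw [map_zero, mul_zero]⟩
        | add a b _ _ ha hb =>
          obtain ⟨α, hα, ha⟩ := ha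
          obtain ⟨β, hβ, hb⟩ := hb
          exact ⟨α + β, Submodule.add_mem _ hα hβ, by rw [map_add, ha, hb, mul_add]⟩
        | smul r a _ ha =>
          obtain ⟨α, hα, ha⟩ := ha
          exact ⟨r • α, Submodule.smul_mem _ _ hα, by rw [smul_eq_mul, map_mul, ha, Algebra.smul_def]; ring⟩
      obtain ⟨y, hy, hy2⟩ := h5 b hbI
      rw [hb, Algebra.smul_def] at hy2
      rw [hdn.mul_left_cancel hy2]
      exact hy
    · rw [Submodule.span_le]
      exact hS
  have : (Subalgebra.toSubmodule (integralClosure R Q)).FG := ⟨S, key.symm⟩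
  exact Module.Finite.iff_fg.2 this

lemma compl_inj (R : Type) [CommRing R] [IsLocalRing R] [IsNoetherianRing R] :
    Module.FaithfullyFlat R (AdicCompletion (maximalIdeal R) R) := by
  have := AdicCompletion.flat_of_isNoetherian (maximalIdeal R)
  exact Module.FaithfullyFlat.of_flat_of_isLocalHom

lemma f4_red (R : Type) [CommRing R] [IsLocalRing R] [IsNoetherianRing R]
    (h : IsReduced (AdicCompletion (maximalIdeal R) R)) : IsReduced R := by
  have := compl_inj R
  exact isReduced_of_injective (algebraMap R (AdicCompletion (maximalIdeal R) R))
    (FaithfulSMul.algebraMap_injective _ _)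

lemma f4_int {A : Type} [CommRing A] [IsLocalRing A] [IsNoetherianRing A]
    [IsPrecomplete (maximalIdeal A) A] (P : Ideal A) [P.IsPrime] :
    Module.Finite A (integralClosure A (FractionRing (A ⧸ P))) := by
  have : Module.Finite (A ⧸ P) (integralClosure (A ⧸ P) (FractionRing (A ⧸ P))) ∨ True := Or.inr trivial
  have hker : ∀ b : integralClosure A (FractionRing (A ⧸ P)), b ≠ 0 → (b : FractionRing (A ⧸ P)) ≠ 0 :=
    fun b hb h => hb (Subtype.ext h)
  refine f3 _ _ rfl inferInstance ⟨∅, ?_⟩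
  intro b
  obtain ⟨n, d, hd, hnd⟩ := IsFractionRing.div_surjective (A := A ⧸ P) (b : FractionRing (A ⧸ P))
  obtain ⟨d, rfl⟩ := Ideal.Quotient.mk_surjective d
  obtain ⟨n, rfl⟩ := Ideal.Quotient.mk_surjective n
  have hd0 : algebraMap (A ⧸ P) (FractionRing (A ⧸ P)) (Ideal.Quotient.mk P d) ≠ 0 := by
    simpa using nonZeroDivisors.ne_zero hd
  refine ⟨algebraMap A _ d, Subalgebra.algebraMap_mem _ _, ?_, ?_⟩
  · intro h
    exact hd0 (congrArg Subtype.val h)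
  · have : algebraMap A _ d * b = algebraMap A (integralClosure A (FractionRing (A ⧸ P))) n := by
      apply Subtype.ext
      change algebraMap (A ⧸ P) (FractionRing (A ⧸ P)) (Ideal.Quotient.mk P d) * (b : FractionRing (A ⧸ P)) = algebraMap (A ⧸ P) (FractionRing (A ⧸ P)) (Ideal.Quotient.mk P n)
      rw [← hnd, mul_div_cancel₀ _ hd0]
    rw [this]
    exact Subalgebra.algebraMap_mem _ _

lemma f4 (R : Type) [CommRing R] [IsLocalRing R] [IsNoetherianRing R]
    (h : IsReduced (AdicCompletion (maximalIdeal R) R)) :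
    Module.Finite R (integralClosure R (FractionRing R)) := by
  have := compl_inj R
  have := noeth_compl R
  have hf : Finite (minimalPrimes (AdicCompletion (maximalIdeal R) R)) :=
    (minimalPrimes.finite_of_isNoetherianRing _)
  have hp : ∀ P : minimalPrimes (AdicCompletion (maximalIdeal R) R), P.1.IsPrime := fun P => P.2.1.1
  have hval : ∀ (P : minimalPrimes (AdicCompletion (maximalIdeal R) R)) (a : AdicCompletion (maximalIdeal R) R),
      algebraMap (AdicCompletion (maximalIdeal R) R) (FractionRing (AdicCompletion (maximalIdeal R) R ⧸ P.1)) a = 0 ↔ a ∈ P.1 := by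
    intro P a
    rw [IsScalarTower.algebraMap_apply _ (AdicCompletion (maximalIdeal R) R ⧸ P.1), 
      FaithfulSMul.algebraMap_eq_zero_iff]
    exact Ideal.Quotient.eq_zero_iff_mem
  refine descent (A := AdicCompletion (maximalIdeal R) R)
    (fun P : minimalPrimes (AdicCompletion (maximalIdeal R) R) => FractionRing (AdicCompletion (maximalIdeal R) R ⧸ P.1)) ?_ ?_ ?_
  · intro a ha
    have h1 : a ∈ sInf (minimalPrimes (AdicCompletion (maximalIdeal R) R)) := by
      rw [Ideal.mem_sInf]
      intro P hP
      exact (hval ⟨P, hP⟩ a).1 (ha ⟨P, hP⟩)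
    rw [minimalPrimes, Ideal.sInf_minimalPrimes] at h1
    obtain ⟨n, hn⟩ := h1
    have h2 : IsNilpotent a := ⟨n, by simpa using hn⟩
    exact h2.eq_zero
  · intro a ha P h0
    rw [hval] at h0
    exact (Ideal.disjoint_nonZeroDivisors_of_mem_minimalPrimes P.2).le_bot ⟨h0, ha⟩
  · intro P
    exact f4_int P.1

section ExtPart
open Limits

variable {R : Type} [CommRing R] (M F : ℕ → ModuleCat.{0} R) (π : ∀ j, F j ⟶ M j)
  (ι : ∀ j, M (j+1) ⟶ F j) (hz : ∀ j, ι j ≫ π j = 0)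

def resC : ChainComplex (ModuleCat.{0} R) ℕ :=
  ChainComplex.of F (fun j => π (j+1) ≫ ι j) (fun j => by
    rw [Category.assoc, ← Category.assoc (ι (j+1)), hz (j+1), zero_comp, comp_zero])

theorem resC_d (j : ℕ) : (resC M F π ι hz).d (j+1) j = π (j+1) ≫ ι j := by
  exact ChainComplex.of_d (α := ℕ) F (fun j => π (j+1) ≫ ι j) j

theorem sc_exact (X : ModuleCat.{0} R) (j : ℕ) (f : F j ⟶ X) (g : M j ⟶ X) [Mono g]
    (hf : f = π j ≫ g)
    (hex : ∀ j x, (π j).hom x = 0 → ∃ y, (ι j).hom y = x)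
    (hsurj : ∀ j, Function.Surjective (π j).hom)
    (h0 : (π (j+1) ≫ ι j) ≫ f = 0) :
    (ShortComplex.mk (π (j+1) ≫ ι j) f h0).Exact := by
  rw [ShortComplex.moduleCat_exact_iff]
  intro x hx
  subst hf
  have h1 : g.hom ((π j).hom x) = g.hom 0 := by rw [map_zero]; exact hx
  have h2 := (ModuleCat.mono_iff_injective g).1 inferInstance h1
  obtain ⟨y, hy⟩ := hex j x h2
  obtain ⟨w, hw⟩ := hsurj (j+1) y
  refine ⟨w, ?_⟩
  show (ι j).hom ((π (j+1)).hom w) = x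
  rw [hw, hy]

theorem resC_exactAt
    (hinj : ∀ j, Mono (ι j))
    (hex : ∀ j x, (π j).hom x = 0 → ∃ y, (ι j).hom y = x)
    (hsurj : ∀ j, Function.Surjective (π j).hom) (n : ℕ) :
    (resC M F π ι hz).ExactAt (n+1) := by
  rw [HomologicalComplex.exactAt_iff' _ (n + 1 + 1) (n + 1) n (by simp) (by simp)]
  have h := sc_exact M F π ι (F n) (n+1) (π (n+1) ≫ ι n) (ι n) rfl hex hsurj
    (by rw [Category.assoc, ← Category.assoc (ι (n+1)), hz (n+1), zero_comp, comp_zero])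
  have e : (resC M F π ι hz).sc' (n+1+1) (n+1) n = ShortComplex.mk _ _
     (show (π (n+1+1) ≫ ι (n+1)) ≫ (π (n+1) ≫ ι n) = 0 by rw [Category.assoc, ← Category.assoc (ι (n+1)), hz (n+1), zero_comp, comp_zero]) := by
    have a1 := resC_d M F π ι hz (n+1)
    have a2 := resC_d M F π ι hz (n)
    simp only [HomologicalComplex.sc', HomologicalComplex.shortComplexFunctor']
    congr 1
  rw [e]
  exact h

def resP
    (hinj : ∀ j, Mono (ι j)) (hproj : ∀ j, Projective (F j))
    (hex : ∀ j x, (π j).hom x = 0 → ∃ y, (ι j).hom y = x)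
    (hsurj : ∀ j, Function.Surjective (π j).hom) : ProjectiveResolution (M 0) where
  complex := resC M F π ι hz
  projective n := hproj n
  π := (ChainComplex.toSingle₀Equiv _ _).symm ⟨(π 0 : F 0 ⟶ M 0), by
    rw [resC_d]
    have e : (π (0+1) ≫ ι 0) ≫ π 0 = 0 := by rw [Category.assoc, hz 0, comp_zero]
    exact e⟩
  quasiIso := ⟨fun n => by
    cases n with
    | zero =>
      rw [ChainComplex.quasiIsoAt₀_iff, ShortComplex.quasiIso_iff_of_zeros']
      · refine (ShortComplex.exact_and_epi_g_iff_of_iso ?_).2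
          ⟨sc_exact M F π ι (M 0) 0 (π 0) (𝟙 _) (Category.comp_id _).symm hex hsurj (by rw [Category.assoc, hz 0, comp_zero]), (ModuleCat.epi_iff_surjective _).2 (hsurj 0)⟩
        exact ShortComplex.isoMk (Iso.refl _) (Iso.refl _) (Iso.refl _)
          ((Category.id_comp _).trans ((resC_d M F π ι hz 0).symm.trans (Category.comp_id _).symm))
           ((Category.id_comp _).trans (by
             refine Eq.trans ?_ (Category.comp_id _).symm
             exact (ChainComplex.toSingle₀Equiv_symm_apply_f_zero (C := resC M F π ι hz) _ _).symm))
      all_goals rfl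
    | succ n =>
      rw [quasiIsoAt_iff_exactAt']
      · exact resC_exactAt M F π ι hz hinj hex hsurj n
      · apply ChainComplex.exactAt_succ_single_obj⟩

theorem ext_lift (hz : ∀ j, ι j ≫ π j = 0) (N : ModuleCat.{0} R)
    (hinj : ∀ j, Mono (ι j)) (hproj : ∀ j, Projective (F j))
    (hex : ∀ j x, (π j).hom x = 0 → ∃ y, (ι j).hom y = x)
    (hsurj : ∀ j, Function.Surjective (π j).hom) (n : ℕ)
    (h : Subsingleton (((Ext R (ModuleCat.{0} R) (n+1)).obj (Opposite.op (M 0))).obj N))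
    (f : M (n+1) ⟶ N) : ∃ g : F n ⟶ N, ι n ≫ g = f := by
  let P := resP M F π ι hz hinj hproj hex hsurj
  have h0 : IsZero ((P.complex.linearYonedaObj R N).homology (n+1)) :=
    (ModuleCat.isZero_of_subsingleton _).of_iso (P.isoExt (n+1) N).symm
  rw [← HomologicalComplex.exactAt_iff_isZero_homology,
    HomologicalComplex.exactAt_iff' _ n (n + 1) (n+1+1) (by simp) (by simp),
    ShortComplex.moduleCat_exact_iff] at h0
  have d1 := resC_d M F π ι hz n
  have d2 := resC_d M F π ι hz (n+1)
  obtain ⟨g, hg⟩ := h0 (π (n+1) ≫ f : F (n+1) ⟶ N) (by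
    show ((resC M F π ι hz).d (n+1+1) (n+1)) ≫ (π (n+1) ≫ f : F (n+1) ⟶ N) = 0
    rw [d2]
    have e : (π (n+1+1) ≫ ι (n+1)) ≫ (π (n+1) ≫ f) = 0 := by
      rw [Category.assoc, ← Category.assoc (ι (n+1)), hz (n+1), zero_comp, comp_zero]
    exact e)
  have hg' : ((resC M F π ι hz).d (n+1) n) ≫ (g : F n ⟶ N) = (π (n+1) ≫ f : F (n+1) ⟶ N) := hg
  rw [d1] at hg'
  have e1 : Epi (π (n+1)) := (ModuleCat.epi_iff_surjective _).2 (hsurj (n+1))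
  refine ⟨g, ?_⟩
  rw [← cancel_epi (π (n+1))]
  exact (Category.assoc _ _ _).symm.trans hg'

end ExtPart

section ExtPart2

variable {R : Type} [CommRing R] [IsNoetherianRing R]

abbrev FGM (R : Type) [CommRing R] := {X : ModuleCat.{0} R // Module.Finite R X}

theorem fgm_ex (X : FGM R) : ∃ k : ℕ, ∃ f : (Fin k → R) →ₗ[R] X.1, Function.Surjective f := by
  have := X.2
  exact Module.Finite.exists_fin' R X.1

def fgmK (X : FGM R) : ℕ := (fgm_ex X).choose
def fgmP (X : FGM R) : (Fin (fgmK X) → R) →ₗ[R] X.1 := (fgm_ex X).choose_spec.choose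
theorem fgmP_surj (X : FGM R) : Function.Surjective (fgmP X) := (fgm_ex X).choose_spec.choose_spec
def fgmN (X : FGM R) : FGM R := ⟨ModuleCat.of R (LinearMap.ker (fgmP X)),
  inferInstanceAs (Module.Finite R (LinearMap.ker (fgmP X)))⟩
def fgmS (X : FGM R) : ℕ → FGM R
  | 0 => X
  | n+1 => fgmN (fgmS X n)

theorem fgm_lift (X : FGM R) (N : Type) [AddCommGroup N] [Module R N] (n : ℕ)
    (h : Subsingleton (((Ext R (ModuleCat.{0} R) (n+1)).obj (Opposite.op X.1)).obj (ModuleCat.of R N)))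
    (f : LinearMap.ker (fgmP (fgmS X n)) →ₗ[R] N) :
    ∃ g : (Fin (fgmK (fgmS X n)) → R) →ₗ[R] N, ∀ x, g x.1 = f x := by
  obtain ⟨g, hg⟩ := ext_lift (fun j => (fgmS X j).1)
    (fun j => ModuleCat.of R (Fin (fgmK (fgmS X j)) → R))
    (fun j => ModuleCat.ofHom (fgmP (fgmS X j)))
    (fun j => ModuleCat.ofHom (LinearMap.ker (fgmP (fgmS X j))).subtype)
    (fun j => by
      ext x
      exact x.2) (ModuleCat.of R N)
    (fun j => (ModuleCat.mono_iff_injective _).2 (Submodule.injective_subtype _))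
    (fun j => by
      have := Module.Projective.of_free (R := R) (P := (Fin (fgmK (fgmS X j)) → R))
      exact (IsProjective.iff_projective (R := R) (Fin (fgmK (fgmS X j)) → R)).1 this)
    (fun j x hx => ⟨⟨x, hx⟩, rfl⟩) (fun j => fgmP_surj _) n h (ModuleCat.ofHom f)
  refine ⟨g.hom, fun x => ?_⟩
  have := congrArg (fun q => q.hom x) hg
  exact this

theorem ext_ind (N : Type) [AddCommGroup N] [Module R N]
    (C : ∀ (M : Type) [AddCommGroup M] [Module R M], Prop)
    (base : ∀ (M : Type) [AddCommGroup M] [Module R M] (k : ℕ) (π : (Fin k → R) →ₗ[R] M),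
      Function.Surjective π → (∀ f : LinearMap.ker π →ₗ[R] N, ∃ g : (Fin k → R) →ₗ[R] N,
        ∀ x, g x.1 = f x) → C M)
    (step : ∀ (M : Type) [AddCommGroup M] [Module R M] (k : ℕ) (π : (Fin k → R) →ₗ[R] M),
      Function.Surjective π → (∃ (l : ℕ) (j : M →ₗ[R] (Fin l → R)), Function.Injective j) →
        C (LinearMap.ker π) → C M)
    (M : Type) [AddCommGroup M] [Module R M] [hf : Module.Finite R M]
    (hM : ∃ (l : ℕ) (j : M →ₗ[R] (Fin l → R)), Function.Injective j) (n : ℕ)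
    (h : Subsingleton (((Ext R (ModuleCat.{0} R) (n+1)).obj (Opposite.op (ModuleCat.of R M))).obj
      (ModuleCat.of R N))) : C M := by
  let X : FGM R := ⟨ModuleCat.of R M, hf⟩
  have hb : C (fgmS X n).1 := base _ _ _ (fgmP_surj _) (fgm_lift X N n h)
  have key : ∀ m, C (fgmS X m).1 → C (fgmS X 0).1 := by
    intro m
    induction m with
    | zero => exact id
    | succ m ih =>
      intro hm
      apply ih
      refine step _ _ _ (fgmP_surj (fgmS X m)) ?_ hm
      cases m with
      | zero => exact hM
      | succ m => exact ⟨_, (LinearMap.ker (fgmP (fgmS X m))).subtype, Submodule.injective_subtype _⟩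
  exact key n hb

theorem ext1_field {O : Type} [CommRing O] [IsLocalRing O] [IsNoetherianRing O]
    (h : Subsingleton (((Ext O (ModuleCat.{0} O) 1).obj (Opposite.op
      (ModuleCat.of O (ResidueField O)))).obj (ModuleCat.of O O)))
    (f : maximalIdeal O →ₗ[O] O) : ∃ g : O, ∀ y, f y = y.1 * g := by
  have hfin : Module.Finite O (ResidueField O) :=
    Module.Finite.of_surjective (Algebra.linearMap O (ResidueField O)) residue_surjective
  let X : FGM O := ⟨ModuleCat.of O (ResidueField O), hfin⟩
  let π : (Fin (fgmK X) → O) →ₗ[O] ResidueField O := fgmP X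
  have hπ : Function.Surjective π := fgmP_surj X
  have hl : ∀ f : LinearMap.ker π →ₗ[O] O, ∃ g : (Fin (fgmK X) → O) →ₗ[O] O, ∀ x, g x.1 = f x :=
    fgm_lift X O 0 h
  obtain ⟨e, he⟩ := Module.projective_lifting_property (Algebra.linearMap O (ResidueField O)) π
    residue_surjective
  obtain ⟨w, hw⟩ := hπ 1
  have hker : ∀ x : LinearMap.ker π, e x.1 ∈ maximalIdeal O := by
    intro x
    have h1 := LinearMap.congr_fun he x.1
    rw [LinearMap.mem_ker.1 x.2] at h1
    exact (residue_eq_zero_iff _).1 h1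
  obtain ⟨g, hg⟩ := hl (f ∘ₗ ((e ∘ₗ (LinearMap.ker π).subtype).codRestrict (maximalIdeal O) hker))
  have hu : IsUnit (e w) := by
    rw [← residue_ne_zero_iff_isUnit]
    have h1 := LinearMap.congr_fun he w
    rw [hw] at h1
    have h2 : residue O (e w) = 1 := h1
    rw [h2]; exact one_ne_zero
  obtain ⟨u, hu⟩ := hu
  refine ⟨(u⁻¹ : Oˣ) * g w, fun y => ?_⟩
  have hy : y.1 • w ∈ LinearMap.ker π := by
    rw [LinearMap.mem_ker, map_smul, hw, Algebra.smul_def, mul_one]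
    exact (residue_eq_zero_iff _).2 y.2
  have h1 := hg ⟨y.1 • w, hy⟩
  have h2 : ((e ∘ₗ (LinearMap.ker π).subtype).codRestrict (maximalIdeal O) hker) ⟨y.1 • w, hy⟩
     = (u : O) • y := by
    apply Subtype.ext
    show e (y.1 • w) = u * y.1
    rw [map_smul, hu, smul_eq_mul, mul_comm]
  rw [LinearMap.comp_apply, h2, map_smul, map_smul] at h1
  simp only [smul_eq_mul] at h1
  have h3 : (u⁻¹ : Oˣ) * (u : O) = 1 := u.inv_mul
  linear_combination (-(u⁻¹ : Oˣ) : O) * h1 - f y * h3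

end ExtPart2

section OLevel
open TensorProduct

theorem pir_all {B : Type} [CommRing B] [IsNoetherianRing B] (a : B) (ha : a ∈ nonZeroDivisors B)
    (h : ∀ n : Ideal B, n.IsMaximal → a ∈ n → ∃ t ∈ nonZeroDivisors B, n = Ideal.span {t})
    (I : Ideal B) (hI : a ∈ I) : ∃ t ∈ nonZeroDivisors B, I = Ideal.span {t} := by
  refine WellFoundedGT.induction (motive := fun I : Ideal B => a ∈ I →
    ∃ t ∈ nonZeroDivisors B, I = Ideal.span {t}) I ?_ hI
  clear hI I
  intro I ih hI
  by_cases hT : I = ⊤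
  · exact ⟨1, one_mem _, by rw [hT, Ideal.span_singleton_one]⟩
  obtain ⟨n, hn, hIn⟩ := Ideal.exists_le_maximal I hT
  obtain ⟨t, ht, rfl⟩ := h n hn (hIn hI)
  let I' : Ideal B := Submodule.comap (LinearMap.mulLeft B t) I
  have hI' : ∀ y, y ∈ I' ↔ t * y ∈ I := fun y => Iff.rfl
  have hle : I ≤ I' := fun y hy => (hI' y).2 (I.mul_mem_left _ hy)
  have hall : ∀ y ∈ I, ∃ z ∈ I', y = t * z := by
    intro y hy
    obtain ⟨z, rfl⟩ := Ideal.mem_span_singleton'.1 (hIn hy)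
    exact ⟨z, (hI' z).2 (by rw [mul_comm]; exact hy), mul_comm _ _⟩
  have hlt : I < I' := by
    refine lt_of_le_of_ne hle fun he => ?_
    have h1 : I ≤ Ideal.span {t} • I := by
      intro y hy
      obtain ⟨z, hz, rfl⟩ := hall y hy
      rw [← he] at hz
      exact Submodule.smul_mem_smul (Ideal.mem_span_singleton_self t) hz
    obtain ⟨r, hr, hr'⟩ := Submodule.exists_sub_one_mem_and_smul_eq_zero_of_fg_of_le_smul
      (Ideal.span {t}) I (IsNoetherian.noetherian I) h1
    have h2 : r * a = 0 := hr' a hI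
    have h3 : r = 0 := (mem_nonZeroDivisors_iff_right.1 ha) r h2
    rw [h3] at hr
    exact hn.ne_top ((Ideal.eq_top_iff_one _).2 (by simpa using hr))
  obtain ⟨d, hd, hd'⟩ := ih I' hlt (hle hI)
  refine ⟨t * d, mul_mem ht hd, le_antisymm ?_ ?_⟩
  · intro y hy
    obtain ⟨z, hz, rfl⟩ := hall y hy
    rw [hd'] at hz
    obtain ⟨w, rfl⟩ := Ideal.mem_span_singleton'.1 hz
    exact Ideal.mem_span_singleton'.2 ⟨w, by ring⟩
  · rw [Ideal.span_singleton_le_iff_mem]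
    exact (hI' d).1 (by rw [hd']; exact Ideal.mem_span_singleton_self d)

theorem free_step {O : Type} [CommRing O] [IsLocalRing O] [IsNoetherianRing O] (x s : O)
    (hs : s ∉ Ideal.span {x}) (hms : ∀ y ∈ maximalIdeal O, y * s ∈ Ideal.span {x})
    {F M : Type} [AddCommGroup F] [AddCommGroup M] [Module O F] [Module O M]
    [Module.Free O F] [Module.Finite O F] (π : F →ₗ[O] M) (hπ : Function.Surjective π)
    (hker : Module.Free O (LinearMap.ker π)) (hM : ∀ z : M, x • z = 0 → z = 0) :
    Module.Free O M := by
  have hfk : Module.Finite O (LinearMap.ker π) := inferInstance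
  refine Module.free_of_lTensor_residueField_injective (LinearMap.ker π).subtype π hπ
    (LinearMap.exact_subtype_ker_map π) ?_
  rw [injective_iff_map_eq_zero]
  intro w hw
  obtain ⟨g, rfl⟩ := TensorProduct.mk_surjective O (LinearMap.ker π) (ResidueField O)
    residue_surjective w
  have hw' : (1 : ResidueField O) ⊗ₜ[O] (g : F) = 0 := hw
  let b := Module.Free.chooseBasis O F
  let c := Module.Free.chooseBasis O (LinearMap.ker π)
  have h1 : ∀ i, b.repr g i ∈ maximalIdeal O := by
    intro i
    have h2 := congrArg (TensorProduct.rid O (ResidueField O))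
      (congrArg ((b.coord i).lTensor (ResidueField O)) hw')
    rw [LinearMap.lTensor_tmul, TensorProduct.rid_tmul, map_zero, map_zero, Algebra.smul_def,
      mul_one] at h2
    exact (residue_eq_zero_iff _).1 h2
  have h2 : ∀ i, ∃ f : O, f * x = b.repr g i * s := fun i =>
    Ideal.mem_span_singleton'.1 (hms _ (h1 i))
  choose f hf using h2
  have h3 : s • (g : F) = x • (∑ i, f i • b i) := by
    conv_lhs => rw [← b.sum_repr g]
    rw [Finset.smul_sum, Finset.smul_sum]
    refine Finset.sum_congr rfl fun i _ => ?_
    rw [smul_smul, smul_smul, mul_comm s, mul_comm x, hf]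
  have h4 : (∑ i, f i • b i) ∈ LinearMap.ker π := by
    rw [LinearMap.mem_ker]
    apply hM
    rw [← map_smul, ← h3, map_smul, LinearMap.mem_ker.1 g.2, smul_zero]
  have h5 : s • g = x • (⟨_, h4⟩ : LinearMap.ker π) := Subtype.ext h3
  have h6 : ∀ i, c.repr g i ∈ maximalIdeal O := by
    intro i
    rw [mem_maximalIdeal, mem_nonunits_iff]
    rintro ⟨u, hu⟩
    have h7 := congrArg (fun z => c.repr z i) h5
    simp only [map_smul, Finsupp.smul_apply, smul_eq_mul] at h7
    apply hs
    rw [Ideal.mem_span_singleton']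
    refine ⟨(u⁻¹ : Oˣ) * c.repr ⟨_, h4⟩ i, ?_⟩
    rw [← hu] at h7
    have h8 : (u⁻¹ : Oˣ) * (u : O) = 1 := u.inv_mul
    linear_combination (-(u⁻¹ : Oˣ) : O) * h7 + s * h8
  show (1 : ResidueField O) ⊗ₜ[O] g = 0
  rw [← c.sum_repr g, TensorProduct.tmul_sum]
  refine Finset.sum_eq_zero fun i _ => ?_
  rw [TensorProduct.tmul_smul, TensorProduct.smul_tmul', Algebra.smul_def, mul_one]
  have : algebraMap O (ResidueField O) (c.repr g i) = 0 := (residue_eq_zero_iff _).2 (h6 i)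
  rw [this, TensorProduct.zero_tmul]

theorem min_gen {O : Type} [CommRing O] [IsLocalRing O] (M : Type) [AddCommGroup M] [Module O M]
    [Module.Finite O M] : ∃ (n : ℕ) (x : Fin n → M), Submodule.span O (Set.range x) = ⊤ ∧
      ∀ o : Fin n → O, ∑ i, o i • x i = 0 → ∀ i, o i ∈ maximalIdeal O := by
  classical
  have hex : ∃ n : ℕ, ∃ x : Fin n → M, Submodule.span O (Set.range x) = ⊤ := by
    obtain ⟨n, x, hx⟩ := Submodule.fg_iff_exists_fin_generating_family.1
      (Module.Finite.fg_top (R := O) (M := M))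
    exact ⟨n, x, hx⟩
  obtain ⟨n, ⟨x, hx⟩, hmin⟩ : ∃ n : ℕ, (∃ x : Fin n → M, Submodule.span O (Set.range x) = ⊤) ∧
      ∀ m < n, ¬ ∃ x : Fin m → M, Submodule.span O (Set.range x) = ⊤ :=
    ⟨Nat.find hex, Nat.find_spec hex, fun m h => Nat.find_min hex h⟩
  refine ⟨n, x, hx, fun o ho i => ?_⟩
  by_contra hi
  rw [mem_maximalIdeal, mem_nonunits_iff, not_not] at hi
  obtain ⟨u, hu⟩ := hi
  cases n with
  | zero => exact i.elim0
  | succ m =>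
  apply hmin m (Nat.lt_succ_self m)
  refine ⟨x ∘ i.succAbove, ?_⟩
  rw [eq_top_iff, ← hx, Submodule.span_le]
  have hoth : ∀ j, x (i.succAbove j) ∈ Submodule.span O (Set.range (x ∘ i.succAbove)) :=
    fun j => Submodule.subset_span ⟨j, rfl⟩
  rintro _ ⟨j, rfl⟩
  by_cases hj : j = i
  · subst hj
    rw [Fin.sum_univ_succAbove _ j, ← hu] at ho
    have h1 : x j = - ((u⁻¹ : Oˣ) : O) • ∑ l, o (j.succAbove l) • x (j.succAbove l) := by
      have h2 : (u : O) • x j = - ∑ l, o (j.succAbove l) • x (j.succAbove l) :=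
        eq_neg_of_add_eq_zero_left ho
      have h3 := congrArg (fun z => ((u⁻¹ : Oˣ) : O) • z) h2
      simp only [smul_smul, Units.inv_mul, one_smul] at h3
      rw [h3, smul_neg, neg_smul]
    rw [h1]
    exact Submodule.smul_mem _ _ (Submodule.sum_mem _ fun l _ => Submodule.smul_mem _ _ (hoth l))
  · obtain ⟨l, rfl⟩ := Fin.exists_succAbove_eq hj
    exact hoth l

theorem free_base {O B : Type} [CommRing O] [IsLocalRing O] [CommRing B]
    [Algebra O B] [Algebra.IsIntegral O B] (hinj : Function.Injective (algebraMap O B)) (τ : B)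
    (hτ : τ ∈ nonZeroDivisors B) (hmτ : (maximalIdeal O).map (algebraMap O B) = Ideal.span {τ})
    {F M : Type} [AddCommGroup F] [AddCommGroup M] [Module O F] [Module O M]
    [Module.Free O F] [Module.Finite O M] (π : F →ₗ[O] M) (hπ : Function.Surjective π)
    (hext : ∀ f : LinearMap.ker π →ₗ[O] B, ∃ g : F →ₗ[O] B, ∀ x, g x.1 = f x) :
    Module.Free O M := by
  classical
  obtain ⟨n, x, hx, hrel⟩ := min_gen (O := O) M
  let π' : (Fin n → O) →ₗ[O] M := Fintype.linearCombination O x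
  have hπ' : Function.Surjective π' := by
    rw [← LinearMap.range_eq_top, Fintype.range_linearCombination, hx]
  obtain ⟨u, hu⟩ := Module.projective_lifting_property π' π hπ'
  have hu' : ∀ z, π' (u z) = π z := fun z => LinearMap.congr_fun hu z
  have hk : ∀ o, π' o = 0 → ∀ i, o i ∈ maximalIdeal O := fun o ho i =>
    hrel o (by rw [← Fintype.linearCombination_apply]; exact ho) i
  have hmap : ∀ o ∈ maximalIdeal O, ∃ b : B, algebraMap O B o = τ * b := by
    intro o ho
    have h1 := Ideal.mem_map_of_mem (algebraMap O B) ho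
    rw [hmτ] at h1
    obtain ⟨b, hb⟩ := Ideal.mem_span_singleton'.1 h1
    exact ⟨b, by rw [← hb, mul_comm]⟩
  let T : B →ₗ[O] B := (LinearMap.mulLeft B τ).restrictScalars O
  have hT : ∀ b, T b = τ * b := fun b => rfl
  have hTi : Function.Injective T := by
    intro b b' h
    rw [hT, hT] at h
    exact (mul_cancel_left_mem_nonZeroDivisors hτ).1 h
  have hH : ∀ j, ∃ h' : F →ₗ[O] B, (∀ z ∈ LinearMap.ker π, h' z = 0) ∧
      ∀ z, ∃ b, h' z = algebraMap O B (u z j) + τ * b := by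
    intro j
    let ψ : F →ₗ[O] B := Algebra.linearMap O B ∘ₗ LinearMap.proj j ∘ₗ u
    have hψ : ∀ z, ψ z = algebraMap O B (u z j) := fun z => rfl
    have h1 : ∀ z : LinearMap.ker π, (ψ ∘ₗ (LinearMap.ker π).subtype) z ∈ LinearMap.range T := by
      intro z
      obtain ⟨b, hb⟩ := hmap (u z.1 j) (hk _ (by rw [hu']; exact z.2) j)
      exact ⟨b, by rw [hT, ← hb]; rfl⟩
    let χ : LinearMap.ker π →ₗ[O] B := (LinearEquiv.ofInjective T hTi).symm.toLinearMap ∘ₗ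
      (ψ ∘ₗ (LinearMap.ker π).subtype).codRestrict (LinearMap.range T) h1
    have hχ : ∀ z, T (χ z) = ψ z.1 := by
      intro z
      have h2 := congrArg Subtype.val ((LinearEquiv.ofInjective T hTi).apply_symm_apply
        ((ψ ∘ₗ (LinearMap.ker π).subtype).codRestrict (LinearMap.range T) h1 z))
      exact h2
    obtain ⟨g, hg⟩ := hext χ
    refine ⟨ψ - T ∘ₗ g, fun z hz => ?_, fun z => ⟨- g z, ?_⟩⟩
    · have := hχ ⟨z, hz⟩
      rw [← hg ⟨z, hz⟩] at this
      show ψ z - T (g z) = 0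
      rw [sub_eq_zero]; exact this.symm
    · show ψ z - T (g z) = _
      rw [hT, hψ]; ring
  choose h' hz hb using hH
  have hf : ∀ i, ∃ f, π f = x i := fun i => hπ _
  choose f hf using hf
  let H : Matrix (Fin n) (Fin n) B := Matrix.of fun j i => h' j (f i)
  have hH1 : H.map (Ideal.Quotient.mk (Ideal.span {τ})) = 1 := by
    ext j i
    obtain ⟨b, hb⟩ := hb j (f i)
    have h1 : u (f i) j - (Pi.single i 1 : Fin n → O) j ∈ maximalIdeal O := by
      refine hk (u (f i) - Pi.single i 1) ?_ j
      rw [map_sub, hu', hf, sub_eq_zero]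
      show _ = Fintype.linearCombination O x (Pi.single i 1)
      rw [Fintype.linearCombination_apply_single, one_smul]
    obtain ⟨b', hb'⟩ := hmap _ h1
    rw [map_sub] at hb'
    show Ideal.Quotient.mk (Ideal.span {τ}) (h' j (f i)) = _
    have h2 : h' j (f i) = algebraMap O B ((Pi.single i 1 : Fin n → O) j) + τ * (b + b') := by
      rw [hb]; linear_combination hb'
    rw [h2, map_add, map_mul, Ideal.Quotient.eq_zero_iff_mem.2 (Ideal.mem_span_singleton_self τ),
      zero_mul, add_zero, Matrix.one_apply, Pi.single_apply]
    split_ifs <;> simp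
  have hdet : IsUnit H.det := by
    have h1 : Ideal.Quotient.mk (Ideal.span {τ}) (H.det) = 1 := by
      rw [RingHom.map_det]
      show (H.map (Ideal.Quotient.mk (Ideal.span {τ}))).det = 1
      rw [hH1, Matrix.det_one]
    by_contra hnu
    obtain ⟨q, hq, hdq⟩ := exists_max_ideal_of_mem_nonunits hnu
    have h2 : H.det - 1 ∈ Ideal.span {τ} := by
      rw [← Ideal.Quotient.eq_zero_iff_mem, map_sub, h1, map_one, sub_self]
    have h3 : Ideal.span {τ} ≤ q := by
      rw [← hmτ, Ideal.map_le_iff_le_comap]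
      have h4 : (q.comap (algebraMap O B)).IsMaximal :=
        Ideal.isMaximal_comap_of_isIntegral_of_isMaximal q
      rw [IsLocalRing.eq_maximalIdeal h4]
    have h5 := q.sub_mem hdq (h3 h2)
    rw [sub_sub_cancel] at h5
    exact hq.ne_top ((Ideal.eq_top_iff_one q).2 h5)
  have hli : LinearIndependent O x := by
    rw [Fintype.linearIndependent_iff]
    intro o ho i
    have h1 : ∑ i, o i • f i ∈ LinearMap.ker π := by
      rw [LinearMap.mem_ker, map_sum]
      simp only [map_smul, hf]
      exact ho
    have h2 : H.mulVec (fun i => algebraMap O B (o i)) = 0 := by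
      ext j
      have h3 := hz j _ h1
      rw [map_sum] at h3
      rw [Matrix.mulVec, dotProduct, Pi.zero_apply, ← h3]
      refine Finset.sum_congr rfl fun i _ => ?_
      rw [map_smul, Algebra.smul_def, mul_comm]; rfl
    have h4 := congrArg (H.adjugate.mulVec) h2
    rw [Matrix.mulVec_mulVec, Matrix.adjugate_mul, Matrix.mulVec_zero, Matrix.smul_mulVec,
      Matrix.one_mulVec] at h4
    have h5 := congrFun h4 i
    rw [Pi.smul_apply, smul_eq_mul, Pi.zero_apply] at h5
    have h6 := (hdet.mul_right_eq_zero).1 h5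
    exact hinj (by rw [h6, map_zero])
  exact Module.Free.of_basis (Module.Basis.mk hli hx.ge)

end OLevel

section LocPart

variable {R : Type} [CommRing R] [IsNoetherianRing R] (S : Submonoid R)

theorem loc_sm {M : Type} [AddCommGroup M] [Module R M] (x : M) (t : S) :
    (t : R) • LocalizedModule.mk x t = LocalizedModule.mk x (1 : S) := by
  rw [LocalizedModule.smul'_mk, LocalizedModule.mk_eq]
  exact ⟨1, by simp [Submonoid.smul_def]⟩

theorem loc_zero {M : Type} [AddCommGroup M] [Module R M] (x : M) (t : S) :
    LocalizedModule.mk x t = 0 ↔ ∃ u : S, (u : R) • x = 0 := by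
  rw [← LocalizedModule.zero_mk 1, LocalizedModule.mk_eq]
  simp [Submonoid.smul_def]

theorem base_loc {N : Type} [AddCommGroup N] [Module R N] {M : Type} [AddCommGroup M] [Module R M]
    (k : ℕ) (π : (Fin k → R) →ₗ[R] M)
    (hext : ∀ f : LinearMap.ker π →ₗ[R] N, ∃ g : (Fin k → R) →ₗ[R] N, ∀ x, g x.1 = f x)
    (f : LinearMap.ker (LocalizedModule.map S π) →ₗ[Localization S] LocalizedModule S N) :
    ∃ g : LocalizedModule S (Fin k → R) →ₗ[Localization S] LocalizedModule S N,
      ∀ x, g x.1 = f x := by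
  have hq : ∀ y : LinearMap.ker π, LocalizedModule.mk (S := S) y.1 1 ∈
      LinearMap.ker (LocalizedModule.map S π) := by
    intro y
    rw [LinearMap.mem_ker, LocalizedModule.map_mk, LinearMap.mem_ker.1 y.2,
      LocalizedModule.zero_mk]
  let f0 : LinearMap.ker π →ₗ[R] LocalizedModule S N :=
    { toFun := fun y => f ⟨LocalizedModule.mk y.1 1, hq y⟩
      map_add' := fun y z => by
        rw [← map_add]; congr 1; apply Subtype.ext
        exact (LocalizedModule.mkLinearMap S (Fin k → R)).map_add y.1 z.1
      map_smul' := fun r y => by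
        have h1 := (f.restrictScalars R).map_smul r ⟨LocalizedModule.mk y.1 1, hq y⟩
        refine Eq.trans ?_ h1
        show f _ = f _
        congr 1; apply Subtype.ext
        exact (LocalizedModule.mkLinearMap S (Fin k → R)).map_smul r y.1 }
  have : Module.FinitePresentation R (LinearMap.ker π) :=
    Module.finitePresentation_of_finite R _
  obtain ⟨h, s, hs⟩ := Module.FinitePresentation.exists_lift_of_isLocalizedModule S
    (LocalizedModule.mkLinearMap S N) f0
  obtain ⟨g0, hg0⟩ := hext h
  refine ⟨(Localization.mk 1 s : Localization S) • LocalizedModule.map S g0, fun z => ?_⟩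
  obtain ⟨z, hz⟩ := z
  induction z using LocalizedModule.induction_on with
  | h x t =>
  have hz' := hz
  rw [LinearMap.mem_ker, LocalizedModule.map_mk, loc_zero] at hz'
  obtain ⟨u, hu⟩ := hz'
  have hux : (u : R) • x ∈ LinearMap.ker π := by rw [LinearMap.mem_ker, map_smul, hu]
  have e1 := LinearMap.congr_fun hs ⟨_, hux⟩
  rw [LinearMap.comp_apply, ← hg0] at e1
  have e2 : f0 ⟨_, hux⟩ = ((u : R) * t) • f ⟨LocalizedModule.mk x t, hz⟩ := by
    have h1 := (f.restrictScalars R).map_smul ((u : R) * t) ⟨LocalizedModule.mk x t, hz⟩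
    refine Eq.trans ?_ h1
    show f _ = f _
    congr 1; apply Subtype.ext
    show LocalizedModule.mk ((u : R) • x) 1 = ((u : R) * t) • LocalizedModule.mk x t
    rw [mul_smul, loc_sm, LocalizedModule.smul'_mk]
  have e3 : LocalizedModule.mkLinearMap S N (g0 ((u : R) • x)) =
      ((u : R) * t * s) • (((Localization.mk 1 s : Localization S) • LocalizedModule.map S g0)
        (LocalizedModule.mk x t)) := by
    rw [LinearMap.smul_apply, LocalizedModule.map_mk, LocalizedModule.mk_smul_mk, one_smul,
      map_smul, map_smul, mul_assoc, mul_smul]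
    congr 1
    have := loc_sm S (g0 x) (s * t)
    rw [mul_comm (t : R)]
    exact this.symm
  refine IsLocalizedModule.smul_injective (LocalizedModule.mkLinearMap S N) (u * t * s) ?_
  show ((u : R) * t * s) • (((Localization.mk 1 s : Localization S) • LocalizedModule.map S g0)
        (LocalizedModule.mk x t)) = ((u : R) * t * s) • f ⟨LocalizedModule.mk x t, hz⟩
  rw [← e3]
  refine e1.trans ?_
  rw [LinearMap.smul_apply, e2, mul_comm _ (s : R), mul_smul (s : R)]
  rfl

theorem loc_ker_free {M F : Type} [AddCommGroup M] [Module R M] [AddCommGroup F] [Module R F]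
    (π : F →ₗ[R] M) (h : Module.Free (Localization S) (LocalizedModule S (LinearMap.ker π))) :
    Module.Free (Localization S) (LinearMap.ker (LocalizedModule.map S π)) := by
  let i := LocalizedModule.map S (LinearMap.ker π).subtype
  have hi : Function.Injective i := LocalizedModule.map_injective _ _ (Submodule.injective_subtype _)
  have hr : LinearMap.range i = LinearMap.ker (LocalizedModule.map S π) := by
    apply le_antisymm
    · rintro _ ⟨z, rfl⟩
      induction z using LocalizedModule.induction_on with
      | h x t =>
      rw [LinearMap.mem_ker, LocalizedModule.map_mk, LocalizedModule.map_mk]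
      have : π ((LinearMap.ker π).subtype x) = 0 := x.2
      rw [this, LocalizedModule.zero_mk]
    · intro z hz
      induction z using LocalizedModule.induction_on with
      | h x t =>
      rw [LinearMap.mem_ker, LocalizedModule.map_mk, loc_zero] at hz
      obtain ⟨u, hu⟩ := hz
      refine ⟨LocalizedModule.mk ⟨(u : R) • x, by rw [LinearMap.mem_ker, map_smul, hu]⟩ (u * t), ?_⟩
      rw [LocalizedModule.map_mk]
      exact LocalizedModule.mk_cancel_common_left u t x
  exact Module.Free.of_equiv ((LinearEquiv.ofInjective i hi).trans (LinearEquiv.ofEq _ _ hr))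

theorem loc_tf {M : Type} [AddCommGroup M] [Module R M] (a : R) (ha : a ∈ nonZeroDivisors R)
    (hM : ∃ (l : ℕ) (j : M →ₗ[R] (Fin l → R)), Function.Injective j)
    (z : LocalizedModule S M) (hz : (algebraMap R (Localization S) a) • z = 0) : z = 0 := by
  obtain ⟨l, j, hj⟩ := hM
  rw [algebraMap_smul] at hz
  induction z using LocalizedModule.induction_on with
  | h x t =>
  rw [LocalizedModule.smul'_mk, loc_zero] at hz
  obtain ⟨u, hu⟩ := hz
  rw [loc_zero]
  refine ⟨u, hj ?_⟩
  have h1 := congrArg j hu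
  rw [map_smul, map_smul, map_zero] at h1
  rw [map_smul, map_zero]
  ext i
  have h2 := congrFun h1 i
  simp only [Pi.smul_apply, smul_eq_mul, Pi.zero_apply] at h2 ⊢
  exact (mem_nonZeroDivisors_iff_right.1 ha) _ (by rw [← h2]; ring)

theorem loc_free (k : ℕ) : Module.Free (Localization S) (LocalizedModule S (Fin k → R)) :=
  Module.free_of_isLocalizedModule S (LocalizedModule.mkLinearMap S (Fin k → R))

end LocPart

section BPart

theorem icA (R : Type) [CommRing R] [IsNoetherianRing R]
    [Module.Finite R (integralClosure R (FractionRing R))] (a : R) (ha : a ∈ nonZeroDivisors R)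
    (σ : integralClosure R (FractionRing R)) (n : Ideal (integralClosure R (FractionRing R)))
    (han : algebraMap R (integralClosure R (FractionRing R)) a ∈ n)
    (h : ∀ y ∈ n, ∃ z ∈ n, σ * y = a • z) : ∃ w, σ = a • w := by
  let Q := FractionRing R
  have hu : IsUnit (algebraMap R Q a) := IsLocalization.map_units Q ⟨a, ha⟩
  obtain ⟨b, hb⟩ := hu.exists_right_inv
  let x : Q := σ.1 * b
  have hx : algebraMap R Q a * x = σ.1 := by
    show algebraMap R Q a * (σ.1 * b) = σ.1
    linear_combination σ.1 * hb
  let N : Submodule R Q := (n.restrictScalars R).map (integralClosure R Q).val.toLinearMap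
  have hN : N.FG := (IsNoetherian.noetherian (n.restrictScalars R)).map _
  have hxN : ∀ y ∈ N, x * y ∈ N := by
    rintro _ ⟨y, hy, rfl⟩
    obtain ⟨z, hz, hz'⟩ := h y hy
    refine ⟨z, hz, ?_⟩
    have h1 : σ.1 * y.1 = a • z.1 := congrArg Subtype.val hz'
    rw [← hx, Algebra.smul_def, mul_assoc] at h1
    exact (hu.mul_left_cancel h1).symm
  have haN : algebraMap R Q a ∈ N := ⟨_, han, rfl⟩
  let T : Subalgebra R Q :=
    { carrier := {y | ∀ z ∈ N, y * z ∈ N}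
      mul_mem' := fun {u v} hu hv z hz => by rw [mul_assoc]; exact hu _ (hv _ hz)
      add_mem' := fun {u v} hu hv z hz => by rw [add_mul]; exact N.add_mem (hu _ hz) (hv _ hz)
      algebraMap_mem' := fun r z hz => by
        rw [← Algebra.smul_def]; exact N.smul_mem _ hz }
  have hNn : IsNoetherian R N := isNoetherian_of_fg_of_noetherian N hN
  let φ : Subalgebra.toSubmodule T →ₗ[R] N :=
    { toFun := fun y => ⟨y.1 * algebraMap R Q a, y.2 _ haN⟩
      map_add' := fun y z => Subtype.ext (add_mul _ _ _)
      map_smul' := fun r y => Subtype.ext (smul_mul_assoc _ _ _) }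
  have hφ : Function.Injective φ := fun y z hyz =>
    Subtype.ext (hu.mul_right_cancel (congrArg Subtype.val hyz))
  have hT : (Subalgebra.toSubmodule T).FG := by
    have := isNoetherian_of_injective φ hφ
    exact Module.Finite.iff_fg.1 inferInstance
  have hxi : IsIntegral R x := IsIntegral.of_mem_of_fg T hT x hxN
  refine ⟨⟨x, hxi⟩, Subtype.ext ?_⟩
  show σ.1 = a • x
  rw [Algebra.smul_def, hx]

instance (priority := 50) locAlg {R A : Type} [CommRing R] [CommRing A] [Algebra R A]
    (S : Submonoid R) : Algebra (Localization S) (LocalizedModule S A) :=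
  Algebra.ofModule
    (fun x p q => by
      induction x using Localization.induction_on with | H x =>
      induction p using LocalizedModule.induction_on with | h p t =>
      induction q using LocalizedModule.induction_on with | h q u =>
      rw [LocalizedModule.mk_smul_mk, LocalizedModule.mk_mul_mk, LocalizedModule.mk_mul_mk,
        LocalizedModule.mk_smul_mk, smul_mul_assoc, mul_assoc])
    (fun x p q => by
      induction x using Localization.induction_on with | H x =>
      induction p using LocalizedModule.induction_on with | h p t =>
      induction q using LocalizedModule.induction_on with | h q u =>
      rw [LocalizedModule.mk_smul_mk, LocalizedModule.mk_mul_mk, LocalizedModule.mk_mul_mk,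
        LocalizedModule.mk_smul_mk, mul_smul_comm, mul_left_comm])

section

variable {R A : Type} [CommRing R] [CommRing A] [Algebra R A] [IsNoetherianRing R]
  [Module.Finite R A] (S : Submonoid R)

theorem mk_one_one : (LocalizedModule.mk (1 : A) (1 : S)) = 1 :=
  (LocalizedModule.numeratorRingHom (R := R) (S := S) (A := A)).map_one

theorem loc_algMap (r : R) : algebraMap (Localization S) (LocalizedModule S A)
    (algebraMap R (Localization S) r) = LocalizedModule.mk (algebraMap R A r) 1 := by
  rw [Algebra.algebraMap_eq_smul_one, algebraMap_smul, ← mk_one_one, LocalizedModule.smul'_mk,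
    Algebra.algebraMap_eq_smul_one]

theorem mk_smulA (r : R) (w : A) (t : S) : LocalizedModule.mk (r • w) t =
    LocalizedModule.mk (algebraMap R A r) 1 * LocalizedModule.mk w t := by
  rw [LocalizedModule.mk_mul_mk, one_mul, Algebra.smul_def]

theorem locB_noeth : IsNoetherianRing (LocalizedModule S A) := by
  have : IsNoetherianRing (Localization S) := IsLocalization.isNoetherianRing S _ inferInstance
  have : Module.Finite (Localization S) (LocalizedModule S A) := inferInstance
  exact IsNoetherianRing.of_finite (Localization S) _

theorem locB_int : Algebra.IsIntegral (Localization S) (LocalizedModule S A) := by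
  have : Module.Finite (Localization S) (LocalizedModule S A) := inferInstance
  exact Algebra.IsIntegral.of_finite _ _

theorem locB_nzd (a : R) (ha : ∀ w : A, a • w = 0 → w = 0) :
    (LocalizedModule.mk (algebraMap R A a) (1 : S)) ∈ nonZeroDivisors (LocalizedModule S A) := by
  rw [mem_nonZeroDivisors_iff_right]
  intro z hz
  induction z using LocalizedModule.induction_on with | h w t =>
  rw [mul_comm, ← mk_smulA, loc_zero] at hz
  obtain ⟨u, hu⟩ := hz
  rw [loc_zero]
  exact ⟨u, ha _ (by rw [smul_comm, hu])⟩

theorem icB (a : R)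
    (hIC : ∀ (σ : A) (n : Ideal A), algebraMap R A a ∈ n →
      (∀ y ∈ n, ∃ z ∈ n, σ * y = a • z) → ∃ w, σ = a • w)
    (n : Ideal (LocalizedModule S A)) (han : LocalizedModule.mk (algebraMap R A a) (1 : S) ∈ n)
    (s : LocalizedModule S A)
    (h : ∀ y ∈ n, ∃ z ∈ n, s * y = LocalizedModule.mk (algebraMap R A a) (1 : S) * z) :
    s ∈ Ideal.span {LocalizedModule.mk (algebraMap R A a) (1 : S)} := by
  have : IsNoetherianRing A := IsNoetherianRing.of_finite R A
  induction s using LocalizedModule.induction_on with | h w t =>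
  let n0 : Ideal A := n.comap (LocalizedModule.numeratorRingHom)
  have hn0 : ∀ y, y ∈ n0 ↔ LocalizedModule.mk y (1 : S) ∈ n := fun y => Iff.rfl
  have key : ∀ y ∈ n0, ∃ σ : S, ∃ z ∈ n0, σ.1 • (w * y) = a • z := by
    intro y hy
    obtain ⟨z, hz, hz'⟩ := h _ ((hn0 y).1 hy)
    induction z using LocalizedModule.induction_on with | h z v =>
    rw [LocalizedModule.mk_mul_mk, ← mk_smulA, LocalizedModule.mk_eq] at hz'
    obtain ⟨u, hu⟩ := hz'
    refine ⟨u * v, (u.1 * t.1) • z, ?_, ?_⟩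
    · rw [hn0, mk_smulA, ← loc_sm S z v, Algebra.mul_smul_comm, ← Algebra.smul_mul_assoc]
      exact n.mul_mem_left _ hz
    · have hu' : u.1 • v.1 • (w * y) = u.1 • (t.1 * 1) • a • z := hu
      rw [Submonoid.coe_mul, mul_smul, hu', mul_one, smul_comm t.1, smul_comm u.1, mul_smul]
  obtain ⟨G, hG⟩ := (IsNoetherian.noetherian n0 : n0.FG)
  have unif : ∀ G' : Finset A, (∀ y ∈ G', y ∈ n0) →
      ∃ σ : S, ∀ y ∈ G', ∃ z ∈ n0, σ.1 • (w * y) = a • z := by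
    classical
    intro G'
    induction G' using Finset.induction_on with
    | empty => intro _; exact ⟨1, by simp⟩
    | insert y G' _ ih =>
      intro hG'
      obtain ⟨σ, hσ⟩ := ih (fun y hy => hG' y (Finset.mem_insert_of_mem hy))
      obtain ⟨ρ, z, hz, hz'⟩ := key y (hG' y (Finset.mem_insert_self _ _))
      refine ⟨σ * ρ, fun x hx => ?_⟩
      rcases Finset.mem_insert.1 hx with rfl | hx
      · refine ⟨σ.1 • z, ?_, ?_⟩
        · rw [Algebra.smul_def]; exact n0.mul_mem_left _ hz
        · rw [Submonoid.coe_mul, mul_smul, hz', smul_comm]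
      · obtain ⟨z, hz, hz'⟩ := hσ x hx
        refine ⟨ρ.1 • z, ?_, ?_⟩
        · rw [Algebra.smul_def]; exact n0.mul_mem_left _ hz
        · rw [Submonoid.coe_mul, mul_comm, mul_smul, hz', smul_comm]
  obtain ⟨σ, hσ⟩ := unif G (fun y hy => hG ▸ Submodule.subset_span hy)
  obtain ⟨v, hv⟩ := hIC (σ.1 • w) n0 han (by
    intro y hy
    rw [← hG] at hy
    induction hy using Submodule.span_induction with
    | mem y hy =>
      obtain ⟨z, hz, hz'⟩ := hσ y hy
      exact ⟨z, hz, by rw [smul_mul_assoc, hz']⟩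
    | zero => exact ⟨0, n0.zero_mem, by simp⟩
    | add x y _ _ hx hy =>
      obtain ⟨z, hz, hz'⟩ := hx
      obtain ⟨z', hz1, hz1'⟩ := hy
      exact ⟨z + z', n0.add_mem hz hz1, by rw [mul_add, hz', hz1', smul_add]⟩
    | smul r y _ hy =>
      obtain ⟨z, hz, hz'⟩ := hy
      exact ⟨r * z, n0.mul_mem_left _ hz, by
        rw [smul_eq_mul, mul_left_comm, hz', mul_smul_comm]⟩)
  rw [Ideal.mem_span_singleton]
  refine ⟨LocalizedModule.mk v (σ * t), ?_⟩
  rw [← mk_smulA, ← hv]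
  exact (LocalizedModule.mk_cancel_common_left σ t w).symm

end

end BPart

section PrincPart

theorem max_princ {B : Type} [CommRing B] [IsNoetherianRing B] (α : B)
    (hα : α ∈ nonZeroDivisors B)
    (hmem : ∀ n : Ideal B, n.IsMaximal → α ∈ n)
    (hmax : ∀ q : Ideal B, q.IsPrime → α ∈ q → q.IsMaximal)
    (hIC : ∀ (n : Ideal B), α ∈ n → ∀ s : B, (∀ y ∈ n, ∃ z ∈ n, s * y = α * z) →
      s ∈ Ideal.span {α}) (n : Ideal B) (hn : n.IsMaximal) :
    ∃ t ∈ nonZeroDivisors B, n = Ideal.span {t} := by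
  have hmin : ∀ q : Ideal B, q.IsMaximal → q ∈ (Ideal.span {α}).minimalPrimes := by
    intro q hq
    refine ⟨⟨hq.isPrime, (Ideal.span_singleton_le_iff_mem _).2 (hmem q hq)⟩, ?_⟩
    rintro r ⟨hr, hr'⟩ hrq
    have h1 := hmax r hr ((Ideal.span_singleton_le_iff_mem _).1 hr')
    exact (h1.eq_of_le hq.ne_top hrq).ge
  have hfin : {I : Ideal B | I.IsMaximal}.Finite :=
    (Ideal.finite_minimalPrimes_of_isNoetherianRing B (Ideal.span {α})).subset hmin
  have hass : n ∈ associatedPrimes B (B ⧸ Ideal.span {α}) := by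
    apply Module.associatedPrimes.minimalPrimes_annihilator_subset_associatedPrimes
    rw [Ideal.annihilator_quotient]
    exact hmin n hn
  rw [AssociatedPrimes.mem_iff, isAssociatedPrime_iff] at hass
  obtain ⟨-, x, hx⟩ := hass
  obtain ⟨s, rfl⟩ := Ideal.Quotient.mk_surjective x
  have hs : ∀ y, y ∈ n ↔ y * s ∈ Ideal.span {α} := by
    intro y
    rw [hx, Submodule.mem_colon_singleton, Submodule.mem_bot, ← Ideal.Quotient.eq_zero_iff_mem]
    rfl
  have hs1 : s ∉ Ideal.span {α} := fun h =>
    hn.ne_top ((Ideal.eq_top_iff_one _).2 ((hs 1).2 (by rwa [one_mul])))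
  have hcanc : ∀ u v : B, α * u = α * v → u = v := fun u v h =>
    (mul_cancel_left_mem_nonZeroDivisors hα).1 h
  let K : Ideal B := (Ideal.span {α}).colon (n : Set B)
  have hK : ∀ k, k ∈ K ↔ ∀ y ∈ n, k * y ∈ Ideal.span {α} := fun k => Submodule.mem_colon
  have hsK : s ∈ K := (hK s).2 fun y hy => by rw [mul_comm]; exact (hs y).1 hy
  have hαK : α ∈ K := (hK α).2 fun y hy => Ideal.mul_mem_right _ _ (Ideal.mem_span_singleton_self α)
  let J : Ideal B := Submodule.comap (LinearMap.mulLeft B α) (K * n)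
  have hJ : ∀ z, z ∈ J ↔ α * z ∈ K * n := fun z => Iff.rfl
  have hnJ : n ≤ J := fun y hy => (hJ y).2 (Ideal.mul_mem_mul hαK hy)
  have hJtop : J = ⊤ := by
    by_contra hne
    have hJn : n = J := hn.eq_of_le hne hnJ
    apply hs1
    refine hIC n (hmem n hn) s fun y hy => ?_
    obtain ⟨z, hz⟩ := Ideal.mem_span_singleton.1 ((hK s).1 hsK y hy)
    refine ⟨z, ?_, hz⟩
    rw [hJn, hJ, ← hz]
    exact Ideal.mul_mem_mul hsK hy
  have hKn : K * n = Ideal.span {α} := by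
    apply le_antisymm
    · rw [Ideal.mul_le]
      exact fun k hk y hy => (hK k).1 hk y hy
    · rw [Ideal.span_singleton_le_iff_mem]
      have : (1 : B) ∈ J := hJtop ▸ Submodule.mem_top
      simpa using (hJ 1).1 this
  have hunit : IsUnit (n : FractionalIdeal (nonZeroDivisors B) (FractionRing B)) := by
    apply isUnit_of_mul_isUnit_right (x := (K : FractionalIdeal (nonZeroDivisors B) (FractionRing B)))
    rw [← FractionalIdeal.coeIdeal_mul, hKn, FractionalIdeal.coeIdeal_span_singleton]
    obtain ⟨b, hb⟩ := (IsLocalization.map_units (FractionRing B) ⟨α, hα⟩).exists_right_inv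
    refine IsUnit.of_mul_eq_one (FractionalIdeal.spanSingleton _ b) ?_
    rw [FractionalIdeal.spanSingleton_mul_spanSingleton, hb, FractionalIdeal.spanSingleton_one]
  obtain ⟨t, ht⟩ := (Ideal.IsPrincipal.of_finite_maximals_of_isUnit hfin hunit).principal
  refine ⟨t, ?_, ht⟩
  have h1 : α ∈ Ideal.span {t} := by
    have := hmem n hn
    rw [ht] at this
    exact this
  obtain ⟨c, hc⟩ := Ideal.mem_span_singleton.1 h1
  rw [hc] at hα
  exact (mul_mem_nonZeroDivisors.1 hα).1

end PrincPart

section CorePart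

variable {R A : Type} [CommRing R] [CommRing A] [Algebra R A] [IsNoetherianRing R]
  [Module.Finite R A] (S : Submonoid R)

theorem locB_inj (hinj : Function.Injective (algebraMap R A)) :
    Function.Injective (algebraMap (Localization S) (LocalizedModule S A)) := by
  rw [injective_iff_map_eq_zero]
  intro x hx
  induction x using Localization.induction_on with | H x =>
  obtain ⟨r, t⟩ := x
  have h1 : algebraMap (Localization S) (LocalizedModule S A) (Localization.mk r t) =
      LocalizedModule.mk (algebraMap R A r) t := by
    rw [Algebra.algebraMap_eq_smul_one, ← mk_one_one, LocalizedModule.mk_smul_mk, mul_one,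
      Algebra.algebraMap_eq_smul_one]
  rw [h1, loc_zero] at hx
  obtain ⟨u, hu⟩ := hx
  rw [Algebra.smul_def, ← map_mul, ← map_zero (algebraMap R A)] at hu
  have h2 := hinj hu
  show Localization.mk r t = 0
  rw [Localization.mk_eq_mk', IsLocalization.mk'_eq_zero_iff]
  exact ⟨u, h2⟩

theorem princ_B [IsLocalRing (Localization S)] (a : R) 
    (haA : ∀ w : A, a • w = 0 → w = 0)
    (hIC : ∀ (σ : A) (n : Ideal A), algebraMap R A a ∈ n →
      (∀ y ∈ n, ∃ z ∈ n, σ * y = a • z) → ∃ w, σ = a • w)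
    (haM : algebraMap R (Localization S) a ∈ maximalIdeal (Localization S))
    (hmaxO : ∀ q : Ideal (Localization S), q.IsPrime → algebraMap R (Localization S) a ∈ q →
      q.IsMaximal)
    (I : Ideal (LocalizedModule S A)) (hI : LocalizedModule.mk (algebraMap R A a) (1 : S) ∈ I) :
    ∃ t ∈ nonZeroDivisors (LocalizedModule S A), I = Ideal.span {t} := by
  have := locB_noeth (A := A) S
  have := locB_int (A := A) S
  have hα := locB_nzd S a haA
  refine pir_all _ hα (fun n hn _ => max_princ _ hα ?_ ?_ ?_ n hn) I hI
  · intro n hn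
    have h1 := Ideal.isMaximal_comap_of_isIntegral_of_isMaximal (R := Localization S) n
    have h2 := IsLocalRing.eq_maximalIdeal h1
    rw [← h2, Ideal.mem_comap, loc_algMap] at haM
    exact haM
  · intro q hq hαq
    apply Ideal.isMaximal_of_isIntegral_of_isMaximal_comap (R := Localization S) q
    apply hmaxO _ (Ideal.comap_isPrime _ _)
    rw [Ideal.mem_comap, loc_algMap]
    exact hαq
  · intro n hn s hs
    exact icB S a hIC n hn s hs

theorem cond_equiv [IsLocalRing (Localization S)] (a : R)
    (hinj : Function.Injective (algebraMap R A)) 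
    (haA : ∀ w : A, a • w = 0 → w = 0)
    (hIC : ∀ (σ : A) (n : Ideal A), algebraMap R A a ∈ n →
      (∀ y ∈ n, ∃ z ∈ n, σ * y = a • z) → ∃ w, σ = a • w)
    (haM : algebraMap R (Localization S) a ∈ maximalIdeal (Localization S))
    (hmaxO : ∀ q : Ideal (Localization S), q.IsPrime → algebraMap R (Localization S) a ∈ q →
      q.IsMaximal)
    (c : Ideal R) (hac : a ∈ c) (hc : ∀ r ∈ c, ∀ w : A, ∃ r' ∈ c, algebraMap R A r' = r • w) :
    Nonempty (LocalizedModule S c ≃ₗ[Localization S] LocalizedModule S A) := by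
  let ι : c →ₗ[R] A := Algebra.linearMap R A ∘ₗ c.subtype
  have hι : Function.Injective ι := hinj.comp (Submodule.injective_subtype _)
  let i := LocalizedModule.map S ι
  have hi : Function.Injective i := LocalizedModule.map_injective _ _ hι
  let I : Ideal (LocalizedModule S A) :=
    { carrier := LinearMap.range i
      add_mem' := fun h1 h2 => (LinearMap.range i).add_mem h1 h2
      zero_mem' := (LinearMap.range i).zero_mem
      smul_mem' := by
        rintro b _ ⟨x, rfl⟩
        induction b using LocalizedModule.induction_on with | h w t =>
        induction x using LocalizedModule.induction_on with | h r u =>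
        obtain ⟨r', hr', hr''⟩ := hc r.1 r.2 w
        refine ⟨LocalizedModule.mk ⟨r', hr'⟩ (t * u), ?_⟩
        show LocalizedModule.map S ι _ = _ * LocalizedModule.map S ι _
        rw [LocalizedModule.map_mk, LocalizedModule.map_mk, LocalizedModule.mk_mul_mk]
        congr 1
        show algebraMap R A r' = w * algebraMap R A r.1
        rw [hr'', Algebra.smul_def, mul_comm] }
  obtain ⟨γ, hγ, hIγ⟩ := princ_B S a haA hIC haM hmaxO I
    ⟨LocalizedModule.mk ⟨a, hac⟩ 1, LocalizedModule.map_mk _ _ _ _⟩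
  let μ : LocalizedModule S A →ₗ[Localization S] LocalizedModule S A :=
    LinearMap.mulLeft (Localization S) γ
  have hμ : Function.Injective μ := fun x y hxy => (mul_cancel_left_mem_nonZeroDivisors hγ).1 hxy
  have hr : LinearMap.range i = LinearMap.range μ := by
    ext z
    have h1 : z ∈ I ↔ z ∈ LinearMap.range i := Iff.rfl
    rw [← h1, hIγ, Ideal.mem_span_singleton]
    constructor
    · rintro ⟨y, rfl⟩; exact ⟨y, rfl⟩
    · rintro ⟨y, rfl⟩; exact ⟨y, rfl⟩
  exact ⟨((LinearEquiv.ofInjective i hi).trans (LinearEquiv.ofEq _ _ hr)).trans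
    (LinearEquiv.ofInjective μ hμ).symm⟩

theorem cond_free [IsLocalRing (Localization S)] (a : R) (ha : a ∈ nonZeroDivisors R)
    (hinj : Function.Injective (algebraMap R A)) 
    (haA : ∀ w : A, a • w = 0 → w = 0)
    (hIC : ∀ (σ : A) (n : Ideal A), algebraMap R A a ∈ n →
      (∀ y ∈ n, ∃ z ∈ n, σ * y = a • z) → ∃ w, σ = a • w)
    (haM : algebraMap R (Localization S) a ∈ maximalIdeal (Localization S))
    (hmaxO : ∀ q : Ideal (Localization S), q.IsPrime → algebraMap R (Localization S) a ∈ q →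
      q.IsMaximal)
    (b : Localization S) (hb : b ∉ Ideal.span {algebraMap R (Localization S) a})
    (hmb : ∀ y ∈ maximalIdeal (Localization S),
      y * b ∈ Ideal.span {algebraMap R (Localization S) a})
    (c : Ideal R) (hac : a ∈ c) (hc : ∀ r ∈ c, ∀ w : A, ∃ r' ∈ c, algebraMap R A r' = r • w)
    (n : ℕ) (h : Subsingleton (((Ext R (ModuleCat.{0} R) (n+1)).obj
      (Opposite.op (ModuleCat.of R c))).obj (ModuleCat.of R c))) :
    Module.Free (Localization S) (LocalizedModule S A) := by
  obtain ⟨e⟩ := cond_equiv S a hinj haA hIC haM hmaxO c hac hc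
  have := locB_int (A := A) S
  have : IsNoetherianRing (Localization S) := IsLocalization.isNoetherianRing S _ inferInstance
  obtain ⟨τ, hτ, hmτ⟩ := princ_B (A := A) S a haA hIC haM hmaxO
    ((maximalIdeal (Localization S)).map (algebraMap _ _))
    (by rw [← loc_algMap]; exact Ideal.mem_map_of_mem _ haM)
  have hfree : Module.Free (Localization S) (LocalizedModule S c) := by
    refine ext_ind (R := R) c (fun M _ _ => Module.Free (Localization S) (LocalizedModule S M))
      ?_ ?_ c ?_ n h
    · intro M _ _ k π hπ hext
      have : Module.Finite R M := Module.Finite.of_surjective π hπ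
      have := loc_free S k
      refine free_base (locB_inj S hinj) τ hτ hmτ (LocalizedModule.map S π)
        (LocalizedModule.map_surjective _ _ hπ) (fun f => ?_)
      obtain ⟨g, hg⟩ := base_loc S k π hext (e.symm.toLinearMap ∘ₗ f)
      refine ⟨e.toLinearMap ∘ₗ g, fun x => ?_⟩
      show e (g x.1) = f x
      rw [hg]
      exact e.apply_symm_apply _
    · intro M _ _ k π hπ hM hC
      have := loc_free S k
      exact free_step _ b hb hmb (LocalizedModule.map S π) (LocalizedModule.map_surjective _ _ hπ)
        (loc_ker_free S π hC) (loc_tf S a ha hM)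
    · refine ⟨1, LinearMap.pi (fun _ => c.subtype), fun x y hxy => ?_⟩
      exact Subtype.ext (congrFun hxy 0)
  exact Module.Free.of_equiv e

theorem cond_surj [IsLocalRing (Localization S)] (a : R)
    (hinj : Function.Injective (algebraMap R A)) 
    (haA : ∀ w : A, a • w = 0 → w = 0)
    (hc : ∀ w : A, ∃ r', algebraMap R A r' = a • w)
    (hfree : Module.Free (Localization S) (LocalizedModule S A)) :
    Function.Surjective (algebraMap (Localization S) (LocalizedModule S A)) := by
  have := locB_int (A := A) S
  have hα := locB_nzd S a haA
  have hinjB := locB_inj S hinj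
  have hnt : Nontrivial (LocalizedModule S A) := hinjB.nontrivial
  have hj : ∀ z : LocalizedModule S A, ∃ o : Localization S,
      algebraMap (Localization S) (LocalizedModule S A) o =
        LocalizedModule.mk (algebraMap R A a) (1 : S) * z := by
    intro z
    induction z using LocalizedModule.induction_on with | h w t =>
    obtain ⟨r, hr⟩ := hc w
    refine ⟨Localization.mk r t, ?_⟩
    rw [← mk_smulA, ← hr, Algebra.algebraMap_eq_smul_one, ← mk_one_one, LocalizedModule.mk_smul_mk,
      mul_one, Algebra.algebraMap_eq_smul_one]
  let bas := Module.Free.chooseBasis (Localization S) (LocalizedModule S A)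
  have hsub : ∀ i j : Module.Free.ChooseBasisIndex (Localization S) (LocalizedModule S A), i = j := by
    intro i j
    by_contra hij
    obtain ⟨o1, h1⟩ := hj (bas i)
    obtain ⟨o2, h2⟩ := hj (bas j)
    have h3 : o1 • bas j = o2 • bas i := by
      rw [Algebra.smul_def, Algebra.smul_def, h1, h2]; ring
    have h4 := congrArg (fun z => bas.repr z j) h3
    simp only [map_smul, Module.Basis.repr_self, Finsupp.smul_apply, Finsupp.single_eq_same,
      smul_eq_mul, mul_one, Finsupp.single_eq_of_ne' hij, mul_zero] at h4
    rw [h4, map_zero] at h1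
    have h5 : bas i = 0 := by
      apply (mul_cancel_left_mem_nonZeroDivisors hα).1
      rw [← h1, mul_zero]
    exact bas.ne_zero i h5
  have hne : Nonempty (Module.Free.ChooseBasisIndex (Localization S) (LocalizedModule S A)) :=
    bas.index_nonempty
  obtain ⟨i⟩ := hne
  have hgen : ∀ z, ∃ o : Localization S, z = o • bas i := by
    intro z
    refine ⟨bas.repr z i, ?_⟩
    conv_lhs => rw [← bas.sum_repr z]
    have : Subsingleton (Module.Free.ChooseBasisIndex (Localization S) (LocalizedModule S A)) :=
      ⟨hsub⟩
    rw [Fintype.sum_subsingleton _ i]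
  obtain ⟨o, ho⟩ := hgen 1
  have hou : IsUnit o := by
    by_contra hou
    have hom : o ∈ maximalIdeal (Localization S) := (IsLocalRing.mem_maximalIdeal _).2 hou
    obtain ⟨n, hn⟩ := Ideal.exists_maximal (LocalizedModule S A)
    have h1 := Ideal.isMaximal_comap_of_isIntegral_of_isMaximal (R := Localization S) n
    rw [← IsLocalRing.eq_maximalIdeal h1, Ideal.mem_comap] at hom
    apply hn.ne_top
    rw [Ideal.eq_top_iff_one, ho, Algebra.smul_def]
    exact n.mul_mem_right _ hom
  obtain ⟨v, hv⟩ := hou.exists_left_inv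
  have hβ : bas i = algebraMap _ _ v := by
    rw [Algebra.algebraMap_eq_smul_one, ho, smul_smul, hv, one_smul]
  intro z
  obtain ⟨o', ho'⟩ := hgen z
  exact ⟨o' * v, by rw [map_mul, ← hβ, ho', Algebra.smul_def]⟩

end CorePart

section FinalPart

theorem dim_claim {O : Type} [CommRing O] [IsLocalRing O] [IsNoetherianRing O]
    (hS2 : min 2 (ringKrullDim O) ≤ moduleDepth O O) (a b : O) (ha : a ∈ nonZeroDivisors O)
    (hb : b ∉ Ideal.span {a}) (hmb : ∀ y ∈ maximalIdeal O, y * b ∈ Ideal.span {a})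
    (q : Ideal O) (hq : q.IsPrime) (haq : a ∈ q) : q.IsMaximal := by
  by_contra hqm
  have hqlt : q < maximalIdeal O := by
    refine lt_of_le_of_ne (IsLocalRing.le_maximalIdeal hq.ne_top) ?_
    rintro rfl
    exact hqm inferInstance
  obtain ⟨P, hP, hPq⟩ := Ideal.exists_minimalPrimes_le (bot_le : (⊥ : Ideal O) ≤ q)
  have haP : a ∉ P := fun h => Set.disjoint_left.1
    (Ideal.disjoint_nonZeroDivisors_of_mem_minimalPrimes hP) h ha
  have hPlt : P < q := lt_of_le_of_ne hPq (by rintro rfl; exact haP haq)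
  have hPp : P.IsPrime := hP.1.1
  have hdim : (2 : ℕ) ≤ ringKrullDim O := by
    rw [ringKrullDim, Order.le_krullDim_iff]
    let l1 : LTSeries (PrimeSpectrum O) := RelSeries.singleton _ ⟨P, hPp⟩
    let l2 := l1.snoc ⟨q, hq⟩ hPlt
    let l3 := l2.snoc ⟨maximalIdeal O, inferInstance⟩ (by
      have hl : l2.last = ⟨q, hq⟩ := RelSeries.last_snoc _ _ _
      rw [hl]; exact hqlt)
    exact ⟨l3, rfl⟩
  have hdep : (2 : WithBot (WithTop ℕ)) ≤ moduleDepth O O := by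
    rwa [min_eq_left (by exact_mod_cast hdim)] at hS2
  have hsub : Subsingleton (ExtMod O (ResidueField O) O 1) := by
    rw [← not_nontrivial_iff_subsingleton]
    intro hnt
    have h1 : moduleDepth O O ≤ ((1 : ℕ) : WithBot (WithTop ℕ)) := sInf_le ⟨1, rfl, hnt⟩
    have h2 : ((2 : ℕ) : WithBot (WithTop ℕ)) ≤ ((1 : ℕ) : WithBot (WithTop ℕ)) :=
      le_trans (by exact_mod_cast hdep) h1
    have h3 : 2 ≤ 1 := by exact_mod_cast h2
    omega
  have hcanc : ∀ u v : O, a * u = a * v → u = v := fun u v h =>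
    (mul_cancel_left_mem_nonZeroDivisors ha).1 h
  have hex : ∀ y : maximalIdeal O, ∃ z, y.1 * b = a * z := fun y =>
    Ideal.mem_span_singleton.1 (hmb y.1 y.2)
  choose f hf using hex
  obtain ⟨g, hg⟩ := ext1_field hsub
    { toFun := f
      map_add' := fun y z => hcanc _ _ (by
        rw [mul_add, ← hf, ← hf, ← hf, ← add_mul]; rfl)
      map_smul' := fun r y => hcanc _ _ (by
        rw [← hf, RingHom.id_apply, smul_eq_mul, mul_left_comm, ← hf, ← mul_assoc]; rfl) }
  have ham : a ∈ maximalIdeal O := hqlt.le haq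
  have h1 : f ⟨a, ham⟩ = a * g := hg ⟨a, ham⟩
  have h2 := hf ⟨a, ham⟩
  rw [h1] at h2
  exact hb (Ideal.mem_span_singleton.2 ⟨g, hcanc _ _ h2⟩)

theorem mem_cond {R : Type} [CommRing R] (r : R) : r ∈ conductorIdeal R ↔
    ∀ w : IntClosure R, ∃ r', algebraMap R (IntClosure R) r' = r • w := by
  rw [conductorIdeal, Module.mem_annihilator]
  constructor
  · intro h w
    have h1 := h (Submodule.Quotient.mk w)
    rw [← Submodule.Quotient.mk_smul, Submodule.Quotient.mk_eq_zero] at h1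
    exact h1
  · intro h m
    obtain ⟨w, rfl⟩ := Submodule.Quotient.mk_surjective _ m
    rw [← Submodule.Quotient.mk_smul, Submodule.Quotient.mk_eq_zero]
    exact h w

theorem cond_nzd {R : Type} [CommRing R] [Module.Finite R (IntClosure R)] :
    ∃ a ∈ nonZeroDivisors R, a ∈ conductorIdeal R := by
  classical
  obtain ⟨G, hG⟩ := (Module.Finite.fg_top : (⊤ : Submodule R (IntClosure R)).FG)
  obtain ⟨a, ha⟩ := IsLocalization.exist_integer_multiples_of_finset (nonZeroDivisors R)
    (G.image (Subtype.val : IntClosure R → FractionRing R))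
  refine ⟨a.1, a.2, (mem_cond _).2 fun w => ?_⟩
  have hw : w ∈ Submodule.span R (G : Set (IntClosure R)) := hG ▸ Submodule.mem_top
  induction hw using Submodule.span_induction with
  | mem y hy =>
    obtain ⟨r, hr⟩ := ha y.1 (Finset.mem_image_of_mem _ hy)
    exact ⟨r, Subtype.ext hr⟩
  | zero => exact ⟨0, by simp⟩
  | add x y _ _ hx hy =>
    obtain ⟨r, hr⟩ := hx
    obtain ⟨r', hr'⟩ := hy
    exact ⟨r + r', by rw [map_add, hr, hr', smul_add]⟩
  | smul u y _ hy =>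
    obtain ⟨r, hr⟩ := hy
    exact ⟨u * r, by rw [map_mul, hr, ← Algebra.smul_def, smul_comm]⟩

theorem main_surj (R : Type) [CommRing R] [IsLocalRing R] [IsNoetherianRing R]
    [Module.Finite R (IntClosure R)] (hS2 : SerreS2 R) (n : ℕ)
    (hext : Subsingleton (ExtMod R ↥(conductorIdeal R) ↥(conductorIdeal R) (n + 1)))
    (s : IntClosure R) : s ∈ LinearMap.range (Algebra.linearMap R (IntClosure R)) := by
  by_contra hs
  obtain ⟨a, ha, hac⟩ := cond_nzd (R := R)
  obtain ⟨a0, p, hp, hpr⟩ := prime_colon _ s hs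
  generalize a0 • s = s' at hpr
  have hpr' : ∀ r, r ∈ p ↔ ∃ r', algebraMap R (IntClosure R) r' = r • s' := hpr
  have hap : a ∈ p := (hpr' a).2 ((mem_cond a).1 hac s')
  obtain ⟨b, hb⟩ := (hpr' a).1 hap
  have hinj : Function.Injective (algebraMap R (IntClosure R)) := fun x y hxy =>
    IsFractionRing.injective R (FractionRing R) (congrArg Subtype.val hxy)
  have haA : ∀ w : IntClosure R, a • w = 0 → w = 0 := by
    intro w hw
    have h1 : a • w.1 = 0 := congrArg Subtype.val hw
    rw [Algebra.smul_def] at h1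
    exact Subtype.ext ((IsLocalization.map_units (FractionRing R)
      (⟨a, ha⟩ : nonZeroDivisors R)).mul_right_eq_zero.1 h1)
  let S := p.primeCompl
  let O := Localization S
  have hloc : IsLocalRing O := Localization.AtPrime.isLocalRing p
  have hON : IsNoetherianRing O := IsLocalization.isNoetherianRing S _ inferInstance
  have haO : algebraMap R O a ∈ nonZeroDivisors O :=
    IsLocalization.nonZeroDivisors_le_comap S O ha
  have haM : algebraMap R O a ∈ maximalIdeal O :=
    (IsLocalization.AtPrime.to_map_mem_maximal_iff O p a hloc).2 hap
  have hbO : algebraMap R O b ∉ Ideal.span {algebraMap R O a} := by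
    intro h
    obtain ⟨x, hx⟩ := Ideal.mem_span_singleton.1 h
    obtain ⟨⟨r, t⟩, rt⟩ := IsLocalization.surj S x
    have h1 : algebraMap R O (b * t) = algebraMap R O (a * r) := by
      rw [map_mul, map_mul, hx, ← rt, mul_assoc]
    obtain ⟨u, hu⟩ := (IsLocalization.eq_iff_exists S O).1 h1
    apply (u * t).2
    show (u.1 * t.1) ∈ p
    rw [hpr']
    refine ⟨u.1 * r, ?_⟩
    rw [← sub_eq_zero]
    apply haA
    have h2 := congrArg (algebraMap R (IntClosure R)) hu
    simp only [map_mul, hb, Algebra.smul_def] at h2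
    simp only [map_mul, Algebra.smul_def]
    linear_combination -h2
  have hmb : ∀ y ∈ maximalIdeal O, y * algebraMap R O b ∈ Ideal.span {algebraMap R O a} := by
    intro y hy
    obtain ⟨⟨r, t⟩, rt⟩ := IsLocalization.surj S y
    have hr : r ∈ p := by
      rw [← IsLocalization.AtPrime.to_map_mem_maximal_iff O p r hloc]
      rw [← rt]
      exact Ideal.mul_mem_right _ _ hy
    obtain ⟨r1, hr1⟩ := (hpr' r).1 hr
    have h1 : r * b = a * r1 := hinj (by
      rw [map_mul, map_mul, hb, hr1, Algebra.smul_def, Algebra.smul_def]; ring)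
    obtain ⟨v, hv⟩ := (IsLocalization.map_units O t).exists_right_inv
    refine Ideal.mem_span_singleton.2 ⟨algebraMap R O r1 * v, ?_⟩
    have h2 := congrArg (algebraMap R O) h1
    rw [map_mul, map_mul, ← rt] at h2
    linear_combination v * h2 - y * algebraMap R O b * hv
  have hmaxO : ∀ q : Ideal O, q.IsPrime → algebraMap R O a ∈ q → q.IsMaximal :=
    dim_claim (hS2 p) _ _ haO hbO hmb
  have hcc : ∀ r ∈ conductorIdeal R, ∀ w : IntClosure R, ∃ r' ∈ conductorIdeal R,
      algebraMap R (IntClosure R) r' = r • w := by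
    intro r hr w
    obtain ⟨r', hr'⟩ := (mem_cond r).1 hr w
    refine ⟨r', (mem_cond r').2 fun w' => ?_, hr'⟩
    obtain ⟨r2, hr2⟩ := (mem_cond r).1 hr (w * w')
    exact ⟨r2, by rw [hr2, Algebra.smul_def r', hr', smul_mul_assoc]⟩
  have hIC := icA R a ha
  have hfree := cond_free (A := IntClosure R) S a ha hinj haA hIC haM hmaxO _ hbO hmb
    (conductorIdeal R) hac hcc n hext
  have hsurj := cond_surj (A := IntClosure R) S a hinj haA ((mem_cond a).1 hac) hfree
  obtain ⟨x, hx⟩ := hsurj (LocalizedModule.mk s' 1)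
  induction x using Localization.induction_on with | H x =>
  obtain ⟨r, t⟩ := x
  rw [Algebra.algebraMap_eq_smul_one, ← mk_one_one, LocalizedModule.mk_smul_mk, mul_one,
    LocalizedModule.mk_eq] at hx
  obtain ⟨u, hu⟩ := hx
  apply (u * t).2
  show (u.1 * t.1) ∈ p
  rw [hpr']
  refine ⟨u.1 * r, ?_⟩
  have hu' : u.1 • (1 : R) • r • (1 : IntClosure R) = u.1 • t.1 • s' := hu
  rw [mul_smul, ← hu', one_smul, map_mul, Algebra.smul_def, Algebra.smul_def, mul_one]

end FinalPart

-- STATEMENT 2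
theorem stmt2 (R : Type) [CommRing R] [IsLocalRing R] [IsNoetherianRing R]
    (hau : AnalyticallyUnramified R) (hS2 : SerreS2 R)
    (hext : ∃ i : ℕ, 0 < i ∧
      Subsingleton (ExtMod R ↥(conductorIdeal R) ↥(conductorIdeal R) i)) :
    Module.Free R ↥(conductorIdeal R) ∧ IsNormalRing R := by
  have hred : IsReduced R := f4_red R hau
  have hfin : Module.Finite R (IntClosure R) := f4 R hau
  obtain ⟨i, hi, hsub⟩ := hext
  obtain ⟨n, rfl⟩ : ∃ n, i = n + 1 := ⟨i - 1, by omega⟩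
  have hs := main_surj R hS2 n hsub
  have htop : conductorIdeal R = ⊤ := by
    rw [Ideal.eq_top_iff_one, mem_cond]
    intro w
    obtain ⟨r, hr⟩ := hs w
    exact ⟨r, by rw [one_smul]; exact hr⟩
  refine ⟨?_, hred, ?_⟩
  · rw [htop]
    exact Module.Free.of_equiv (Submodule.topEquiv (R := R) (M := R)).symm
  · rw [eq_bot_iff]
    intro x hx
    obtain ⟨r, hr⟩ := hs ⟨x, hx⟩
    rw [Algebra.mem_bot]
    exact ⟨r, congrArg Subtype.val hr⟩
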